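/- For all positive integers m, n, k and every real number c with 0 < c < 1, the Hausdorff dimension of the set DI^{(k)}_{m,n}(c) of c-Dirichlet improvable k-tuples, viewed as a subset of the space M_{m,n}(ℝ)^k of k-tuples of real m×n matrices (with its natural metric, identified with ℝ^{kmn}), is strictly smaller than kmn. -/

import Mathlib

open scoped BigOperators ENNReal

/-!
The proof covers the set by `L`-adic cubes, where `M = 2 ^ μ` and `L = M ^ (m + n)`, and shows that
the number of cubes of level `j` needed grows like `β ^ j` for some `β < L ^ (k m n)`.

To a cube of level `j` in the space of `m × n` matrices, encoded by the integer matrix `Z` (so that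
`Z / L ^ j` is a corner of the cube), attach the lattice `lat (L ^ j) Z` of the integer vectors
`(Z q - L ^ j p, q)`, whose natural scale is `K = M ^ (m j)` (its covolume is `K ^ (m + n)`). Its
`excess` is the number of its nonzero points in the cube of radius `K`. Three facts are combined.

* The excess plays the role of a height function. Averaged over the `L ^ (m n)` children of a cube,
  it is at most half its old value plus a constant (`contraction`), because a vector with a large
  `q` survives in few children (`sum_children_le`), while the number of points in a shrunken cube
  decreases at least linearly, or is bounded when there are `m + n` independent points
  (`card_boxPts_shrink`, `card_boxPts_of_hyperplane`, `card_boxPts_of_det`).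

* If the excess is bounded, then some descendant, a bounded number of levels down, contains no
  matrix satisfying the Dirichlet inequality at the corresponding scale (`exists_good_child`).
  Indeed the lattice is contained in a dilate of a lattice with bounded basis and covolume at least
  `1` (`exists_reduced_basis`), and moving inside the cube amounts to shearing the lattice by `y`
  with entries in `[0, 1]`; since `c < 1`, it suffices that the rescaled sheared lattice avoids a
  cube of radius `κ < 1`. By compactness, and because small perturbations of the lattice can be
  absorbed in `y` (`absorb_perturbation`), it is enough to find `y` for rational lattices
  (`steer_uniform`, `steer_rational`). A rational lattice is put in block triangular form
  (`exists_block_tri`), and then an explicit rational matrix is built column by column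
  (`tri_step`, `exists_weighted`): both the lattice generated by its columns and `ℤ ^ m`, and the
  lattice of its integer relations, have triangular bases with diagonals prescribed by integer
  weights, so that a short vector has all its coordinates equal to zero, one after the other. The
  weights exist because `κ ^ (m + n) < 1` (`exists_weights`).

* Let `g j` be the number of cubes of level `j` meeting the set, and `φ j` the sum of their
  excesses, both divided by `L ^ (k m n j)`. A tuple satisfying the Dirichlet inequality through one
  of its components `i` lies outside the product of the descendants of the previous item, so Markov's
  inequality (`card_children_le`) gives `g (j + r) ≤ (1 - θ) g j + θ φ j / (16 b)`, while the
  contraction gives `φ (j + 1) ≤ φ j / 2 + b g j`. Together these force `g` to decay geometrically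
  (`geometric_decay`), and the dimension is at most some `α < k m n` (`dimH_le_of_cells`).

The bound `α` does not depend on the unit cube nor on the threshold `N₀` (`exists_uniform_bound`),
and the set of Dirichlet improvable tuples is a countable union over these two parameters.
-/

/-- The set of `c`-Dirichlet improvable `k`-tuples of real `m × n` matrices,
viewed as elements of `Fin k → Fin m → Fin n → ℝ` (with the supremum norm in each factor,
so that the ambient space carries the sup metric of `ℝ^{kmn}`). -/
def DIset (m n k : ℕ) (c : ℝ) : Set (Fin k → Fin m → Fin n → ℝ) :=
  {Y | ∃ N₀ : ℝ, 0 < N₀ ∧ ∀ N : ℝ, N₀ ≤ N →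
    ∃ (p : Fin m → ℤ) (q : Fin n → ℤ) (i : Fin k),
      ‖(fun a : Fin m => (∑ b : Fin n, Y i a b * (q b : ℝ)) - (p a : ℝ))‖
          < c * N ^ (-(n : ℝ) / (m : ℝ)) ∧
      0 < ‖(fun b : Fin n => (q b : ℝ))‖ ∧ ‖(fun b : Fin n => (q b : ℝ))‖ < N}

/-! ### Counting lattice points in cubes -/

lemma boxPts_finite {ι : Type*} [Fintype ι] (Λ : AddSubgroup (ι → ℤ)) (ρ : ℝ) :
    {v : ι → ℤ | v ∈ Λ ∧ ∀ i, |(v i : ℝ)| ≤ ρ}.Finite := by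
  classical
  refine (Set.finite_Icc (fun _ : ι => -⌈ρ⌉) (fun _ => ⌈ρ⌉)).subset ?_
  rintro v ⟨-, hv⟩
  rw [Set.mem_Icc, Pi.le_def, Pi.le_def]
  refine ⟨fun i => ?_, fun i => ?_⟩
  · have h1 := (abs_le.1 (hv i)).1
    have h2 := Int.le_ceil ρ
    have : (-(⌈ρ⌉ : ℝ)) ≤ (v i : ℝ) := by linarith
    exact_mod_cast this
  · have h1 := (abs_le.1 (hv i)).2
    have h2 := Int.le_ceil ρ
    have : (v i : ℝ) ≤ ⌈ρ⌉ := by linarith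
    exact_mod_cast this

/-- The points of the lattice `Λ` in the closed cube of radius `ρ` centred at the origin
(the origin included). -/
noncomputable def boxPts {ι : Type*} [Fintype ι] (Λ : AddSubgroup (ι → ℤ)) (ρ : ℝ) :
    Finset (ι → ℤ) := (boxPts_finite Λ ρ).toFinset

lemma mem_boxPts {ι : Type*} [Fintype ι] {Λ : AddSubgroup (ι → ℤ)} {ρ : ℝ} {v : ι → ℤ} :
    v ∈ boxPts Λ ρ ↔ v ∈ Λ ∧ ∀ i, |(v i : ℝ)| ≤ ρ := by
  simp [boxPts]

lemma zero_mem_boxPts {ι : Type*} [Fintype ι] (Λ : AddSubgroup (ι → ℤ)) {ρ : ℝ} (h : 0 ≤ ρ) :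
    (0 : ι → ℤ) ∈ boxPts Λ ρ := by
  simp [mem_boxPts, h, Λ.zero_mem]

lemma boxPts_mono {ι : Type*} [Fintype ι] (Λ : AddSubgroup (ι → ℤ)) {ρ R : ℝ} (h : ρ ≤ R) :
    boxPts Λ ρ ⊆ boxPts Λ R := fun v hv => by
  rw [mem_boxPts] at hv ⊢
  exact ⟨hv.1, fun i => (hv.2 i).trans h⟩

lemma one_le_card_boxPts {ι : Type*} [Fintype ι] (Λ : AddSubgroup (ι → ℤ)) {ρ : ℝ} (h : 0 ≤ ρ) :
    1 ≤ (boxPts Λ ρ).card := Finset.card_pos.2 ⟨0, zero_mem_boxPts Λ h⟩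

/-- If points with the same label differ by elements of `Λ` in a cube of radius `R`, then
there are at most (number of labels) times (number of lattice points in that cube) of them. -/
lemma card_le_of_label {ι β : Type*} [Fintype ι] {Λ : AddSubgroup (ι → ℤ)}
    {R : ℝ} (s : Finset (ι → ℤ)) (f : (ι → ℤ) → β) (B : Finset β) (hB : ∀ v ∈ s, f v ∈ B)
    (h : ∀ v ∈ s, ∀ v' ∈ s, f v = f v' → v - v' ∈ boxPts Λ R) :
    s.card ≤ (boxPts Λ R).card * B.card := by
  classical
  refine Finset.card_le_mul_card_image_of_maps_to hB _ fun b _ => ?_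
  rcases Finset.eq_empty_or_nonempty {a ∈ s | f a = b} with h0 | ⟨v0, hv0⟩
  · simp [h0]
  · rw [Finset.mem_filter] at hv0
    refine Finset.card_le_card_of_injOn (fun v => v - v0) (fun v hv => ?_)
      (fun v _ v' _ hvv => by simpa using hvv)
    have hv := Finset.mem_filter.1 hv
    exact h v hv.1 v0 hv0.1 (hv.2.trans hv0.2.symm)

/-- Shrinking the cube decreases the number of lattice points at least linearly, as long as a
nonzero one is left: translates of the small cube along multiples of a longest vector in it
are disjoint. -/
lemma card_boxPts_shrink {ι : Type*} [Fintype ι] {Λ : AddSubgroup (ι → ℤ)} {ρ R : ℝ}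
    (hρ : 0 < ρ) (hρR : ρ ≤ R) (h : ∃ v ∈ boxPts Λ ρ, v ≠ 0) :
    ((boxPts Λ ρ).card : ℝ) ≤ 6 * (ρ / R) * (boxPts Λ R).card := by
  classical
  have hR : 0 < R := hρ.trans_le hρR
  obtain ⟨w, hw, hw0⟩ := h
  have : Nonempty ι := by
    by_contra hne
    rw [not_nonempty_iff] at hne
    exact hw0 (Subsingleton.elim _ _)
  obtain ⟨⟨v0, i0⟩, hvi, hmax⟩ := Finset.exists_max_image (boxPts Λ ρ ×ˢ (Finset.univ : Finset ι))
    (fun p => |p.1 p.2|) ⟨(w, Classical.arbitrary ι), by simp [hw]⟩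
  have hv0 : v0 ∈ boxPts Λ ρ := (Finset.mem_product.1 hvi).1
  have hmax' : ∀ v ∈ boxPts Λ ρ, ∀ i, |v i| ≤ |v0 i0| := fun v hv i =>
    hmax (v, i) (by simp [hv])
  set r : ℤ := |v0 i0| with hr
  have hrpos : 0 < r := by
    obtain ⟨i, hi⟩ : ∃ i, w i ≠ 0 := by
      by_contra hcon; push Not at hcon; exact hw0 (funext hcon)
    exact (abs_pos.2 hi).trans_le (hmax' w hw i)
  have hrρ : (r : ℝ) ≤ ρ := by
    have := (mem_boxPts.1 hv0).2 i0
    rw [hr]; push_cast; exact this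
  -- the number of admissible translates on each side
  set T : ℕ := ⌊(R / r - 1) / 3⌋₊ with hT
  have hrR : (0 : ℝ) < r := by exact_mod_cast hrpos
  have h1 : 1 ≤ R / r := by rw [le_div_iff₀ hrR]; linarith
  have hTle : (T : ℝ) ≤ (R / r - 1) / 3 := Nat.floor_le (by linarith)
  have hTlt : (R / r - 1) / 3 < T + 1 := Nat.lt_floor_add_one _
  let F : ((ι → ℤ) × ℤ) → (ι → ℤ) := fun p => p.1 + (3 * p.2) • v0
  have hcard : (boxPts Λ ρ ×ˢ Finset.Icc (-(T : ℤ)) T).card ≤ (boxPts Λ R).card := by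
    refine Finset.card_le_card_of_injOn F ?_ ?_
    · rintro ⟨v, t⟩ hvt
      have hvt := Finset.mem_product.1 hvt
      have ht := Finset.mem_Icc.1 hvt.2
      have hv := hvt.1
      simp only at ht hv
      refine mem_boxPts.2 ⟨Λ.add_mem (mem_boxPts.1 hv).1 (Λ.zsmul_mem (mem_boxPts.1 hv0).1 _),
        fun i => ?_⟩
      have ha : |v i| ≤ r := hmax' v hv i
      have hb : |v0 i| ≤ r := hmax' v0 hv0 i
      have htT : |t| ≤ T := abs_le.2 ht
      have hc : |F (v, t) i| ≤ (3 * T + 1) * r := by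
        simp only [F, Pi.add_apply, Pi.smul_apply, smul_eq_mul]
        calc |v i + 3 * t * v0 i| ≤ |v i| + 3 * |t| * |v0 i| := by
              refine (abs_add_le _ _).trans ?_
              rw [abs_mul, abs_mul]; simp
          _ ≤ r + 3 * T * r := by gcongr
          _ = _ := by ring
      have hc' : |(F (v, t) i : ℝ)| ≤ (3 * T + 1) * r := by exact_mod_cast hc
      refine hc'.trans ?_
      calc (3 * (T : ℝ) + 1) * r ≤ (R / r) * r := by gcongr; linarith
        _ = R := by field_simp
    · rintro ⟨v, t⟩ hvt ⟨v', t'⟩ hvt' heq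
      have hv : v ∈ boxPts Λ ρ := (Finset.mem_product.1 hvt).1
      have hv' : v' ∈ boxPts Λ ρ := (Finset.mem_product.1 hvt').1
      have e0 := congrFun heq i0
      simp only [F, Pi.add_apply, Pi.smul_apply, smul_eq_mul] at e0
      have ha := hmax' v hv i0
      have hb := hmax' v' hv' i0
      have htt : t = t' := by
        by_contra hne
        have h1 : 1 ≤ |t - t'| := Int.one_le_abs (sub_ne_zero.2 hne)
        have h2 : 3 * |t - t'| * r = |v' i0 - v i0| := by
          have : v' i0 - v i0 = 3 * (t - t') * v0 i0 := by linarith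
          rw [this, abs_mul, abs_mul]; simp [hr]
        have h3 : |v' i0 - v i0| ≤ r + r := (abs_sub _ _).trans (add_le_add hb ha)
        nlinarith
      subst htt
      have : v = v' := by
        have := heq
        simp only [F] at this
        exact add_right_cancel this
      rw [this]
  rw [Finset.card_product, Int.card_Icc] at hcard
  have e1 : ((T : ℤ) + 1 - -(T : ℤ)).toNat = 2 * T + 1 := by omega
  rw [e1] at hcard
  have hcard' : ((boxPts Λ ρ).card : ℝ) * (2 * T + 1) ≤ (boxPts Λ R).card := by
    exact_mod_cast hcard
  have hx : R / ρ ≤ R / r := by gcongr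
  have key : R / ρ / 6 ≤ 2 * T + 1 := by
    have hT0 : (0 : ℝ) ≤ T := Nat.cast_nonneg _
    rcases le_or_gt (R / r) 6 with h6 | h6 <;> linarith
  have hP : (0 : ℝ) ≤ (boxPts Λ ρ).card := Nat.cast_nonneg _
  have h2 : ((boxPts Λ ρ).card : ℝ) * (R / ρ / 6) ≤ (boxPts Λ R).card :=
    (mul_le_mul_of_nonneg_left key hP).trans hcard'
  have h3 : ((boxPts Λ ρ).card : ℝ) = 6 * (ρ / R) * ((boxPts Λ ρ).card * (R / ρ / 6)) := by
    field_simp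
  rw [h3]
  gcongr

/-- If the lattice points in a large cube lie on a hyperplane, their number grows at most like
the power `d - 1` of the radius. -/
lemma card_boxPts_of_hyperplane {ι : Type*} [Fintype ι] {Λ : AddSubgroup (ι → ℤ)} {ρ R : ℝ}
    (hR : 0 < R) (hρR : R ≤ ρ) (a : ι → ℝ) (ha : a ≠ 0)
    (h : ∀ v ∈ boxPts Λ ρ, ∑ i, a i * v i = 0) :
    ((boxPts Λ ρ).card : ℝ) ≤
      (4 * Fintype.card ι * (ρ / R)) ^ (Fintype.card ι - 1) * (boxPts Λ R).card := by
  classical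
  have hρ : 0 < ρ := hR.trans_le hρR
  obtain ⟨i1, hi1⟩ : ∃ i, a i ≠ 0 := by
    by_contra hcon; push Not at hcon; exact ha (funext hcon)
  -- a coordinate in which the normal vector is largest is controlled by the others
  obtain ⟨i0, -, hi0⟩ := Finset.exists_max_image (Finset.univ : Finset ι) (fun i => |a i|)
    ⟨i1, Finset.mem_univ _⟩
  have hai0 : 0 < |a i0| := (abs_pos.2 hi1).trans_le (hi0 i1 (Finset.mem_univ _))
  set d : ℕ := Fintype.card ι with hd
  have hd1 : 1 ≤ d := Fintype.card_pos_iff.2 ⟨i0⟩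
  have hdR : (1 : ℝ) ≤ d := by exact_mod_cast hd1
  let f : (ι → ℤ) → ({i // i ≠ i0} → ℤ) := fun v i => ⌊(v i : ℝ) * d / R⌋
  set q : ℤ := ⌊ρ * d / R⌋ with hq
  have hq0 : (1 : ℝ) ≤ ρ * d / R := by
    rw [le_div_iff₀ hR]; nlinarith
  let B : Finset ({i // i ≠ i0} → ℤ) := Fintype.piFinset fun _ => Finset.Icc (-q - 1) q
  have hmain := card_le_of_label (Λ := Λ) (R := R) (boxPts Λ ρ) f B ?_ ?_
  · have hBcard : B.card = ((2 * q + 2).toNat) ^ (d - 1) := by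
      simp only [B, Fintype.card_piFinset, Finset.prod_const, Finset.card_univ, Int.card_Icc]
      congr 1
      · congr 1; ring
      · rw [Fintype.card_subtype_compl]; simp [hd]
    rw [hBcard] at hmain
    have hqn : 0 ≤ q := Int.floor_nonneg.2 (by positivity)
    have h1 : (((2 * q + 2).toNat : ℕ) : ℝ) ≤ 4 * d * (ρ / R) := by
      have : (((2 * q + 2).toNat : ℕ) : ℝ) = 2 * q + 2 := by
        have : (((2 * q + 2).toNat : ℕ) : ℤ) = 2 * q + 2 := Int.toNat_of_nonneg (by omega)
        exact_mod_cast this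
      rw [this]
      have h2 : (q : ℝ) ≤ ρ * d / R := Int.floor_le _
      have h3 : ρ * d / R = d * (ρ / R) := by ring
      rw [h3] at h2 hq0
      nlinarith
    calc ((boxPts Λ ρ).card : ℝ) ≤ (boxPts Λ R).card * (((2 * q + 2).toNat : ℕ) : ℝ) ^ (d - 1) := by
          exact_mod_cast hmain
      _ ≤ (boxPts Λ R).card * (4 * d * (ρ / R)) ^ (d - 1) := by gcongr
      _ = _ := mul_comm _ _
  · intro v hv
    rw [Fintype.mem_piFinset]
    intro i
    have hvi := abs_le.1 ((mem_boxPts.1 hv).2 i)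
    rw [Finset.mem_Icc]
    constructor
    · apply Int.le_floor.2
      push_cast
      have h1 : ρ * d / R < q + 1 := Int.lt_floor_add_one _
      have h2 : -(ρ * d / R) ≤ (v i : ℝ) * d / R := by
        rw [← neg_div, ← neg_mul]; gcongr; exact hvi.1
      linarith
    · apply Int.floor_le_floor
      gcongr; exact hvi.2
  · intro v hv v' hv' hf
    refine mem_boxPts.2 ⟨Λ.sub_mem (mem_boxPts.1 hv).1 (mem_boxPts.1 hv').1, ?_⟩
    have hoff : ∀ i, i ≠ i0 → |(v i : ℝ) - v' i| ≤ R / d := by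
      intro i hi
      have := Int.abs_sub_lt_one_of_floor_eq_floor (congrFun hf ⟨i, hi⟩)
      have e : (v i : ℝ) * d / R - v' i * d / R = ((v i : ℝ) - v' i) * (d / R) := by ring
      simp only [e, abs_mul] at this
      have hp : (0 : ℝ) < d / R := by positivity
      rw [abs_of_pos hp] at this
      rw [le_div_iff₀ (by positivity)]
      have : |(v i : ℝ) - v' i| * (d / R) * R ≤ 1 * R := by gcongr
      calc |(v i : ℝ) - v' i| * d = |(v i : ℝ) - v' i| * (d / R) * R := by field_simp
        _ ≤ R := by linarith
    have hRd : R / d ≤ R := div_le_self hR.le hdR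
    intro i
    rw [Pi.sub_apply]; push_cast
    rcases eq_or_ne i i0 with rfl | hi
    swap
    · exact (hoff i hi).trans hRd
    have hs : ∑ j, a j * ((v j : ℝ) - v' j) = 0 := by
      have h1 := h v hv
      have h2 := h v' hv'
      simp only [mul_sub, Finset.sum_sub_distrib, h1, h2, sub_zero]
    rw [← Finset.add_sum_erase _ _ (Finset.mem_univ i)] at hs
    have h3 : |a i| * |(v i : ℝ) - v' i| ≤ |a i| * R := by
      rw [← abs_mul, eq_neg_of_add_eq_zero_left hs, abs_neg]
      refine (Finset.abs_sum_le_sum_abs _ _).trans ?_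
      calc ∑ j ∈ Finset.univ.erase i, |a j * ((v j : ℝ) - v' j)|
          ≤ ∑ j ∈ Finset.univ.erase i, |a i| * (R / d) := by
            refine Finset.sum_le_sum fun j hj => ?_
            rw [abs_mul]
            have hj' := Finset.ne_of_mem_erase hj
            have := hi0 j (Finset.mem_univ _)
            have := hoff j hj'
            gcongr
        _ ≤ ∑ j, |a i| * (R / d) :=
            Finset.sum_le_sum_of_subset_of_nonneg (Finset.erase_subset _ _)
              (fun _ _ _ => by positivity)
        _ = |a i| * R := by
            rw [Finset.sum_const, Finset.card_univ, ← hd, nsmul_eq_mul]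
            field_simp
    exact le_of_mul_le_mul_left h3 hai0

/-- If a lattice all of whose determinants are multiples of `D` contains `d` independent vectors
in a cube, then Cramer's rule bounds the number of its points there. -/
lemma card_boxPts_of_det {ι : Type*} [Fintype ι] [DecidableEq ι] {Λ : AddSubgroup (ι → ℤ)}
    {ρ D : ℝ} (hρ : 0 ≤ ρ) (hD : 0 < D)
    (hdet : ∀ w : Matrix ι ι ℤ, (∀ i, w i ∈ Λ) → ∃ t : ℤ, (w.det : ℝ) = t * D)
    (w : Matrix ι ι ℤ) (hw : ∀ i, w i ∈ boxPts Λ ρ) (hw0 : w.det ≠ 0) :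
    ((boxPts Λ ρ).card : ℝ) ≤
      (2 * ((Fintype.card ι).factorial * ρ ^ Fintype.card ι / D) + 1) ^ Fintype.card ι := by
  classical
  set X : ℝ := (Fintype.card ι).factorial * ρ ^ Fintype.card ι / D with hX
  have hX0 : 0 ≤ X := by positivity
  let f : (ι → ℤ) → (ι → ℤ) := fun v i => ⌊(((w.updateRow i v).det : ℤ) : ℝ) / D⌋
  have hmem : ∀ v ∈ boxPts Λ ρ, ∀ i j, (w.updateRow i v) j ∈ boxPts Λ ρ := by
    intro v hv i j
    rcases eq_or_ne j i with rfl | hj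
    · simpa using hv
    · rw [Matrix.updateRow_ne hj]; exact hw j
  have hf : ∀ v ∈ boxPts Λ ρ, ∀ i, (((w.updateRow i v).det : ℤ) : ℝ) = f v i * D := by
    intro v hv i
    obtain ⟨t, ht⟩ := hdet (w.updateRow i v) (fun j => (mem_boxPts.1 (hmem v hv i j)).1)
    have : f v i = t := by
      simp only [f, ht]
      rw [mul_div_assoc, div_self hD.ne', mul_one, Int.floor_intCast]
    rw [this, ht]
  let B : Finset (ι → ℤ) := Fintype.piFinset fun _ => Finset.Icc (-⌊X⌋) ⌊X⌋
  have hle : (boxPts Λ ρ).card ≤ B.card := by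
    refine Finset.card_le_card_of_injOn f ?_ ?_
    · intro v hv
      have hv : v ∈ boxPts Λ ρ := hv
      have : f v ∈ B := by
        rw [Fintype.mem_piFinset]
        intro i
        have h1 : |(((w.updateRow i v).det : ℤ) : ℝ)| ≤
            (Fintype.card ι).factorial * ρ ^ Fintype.card ι := by
          have h2 := Matrix.det_le (A := (w.updateRow i v).map (Int.cast : ℤ → ℝ))
            (abv := AbsoluteValue.abs) (x := ρ) (fun a b => by
              have := (mem_boxPts.1 (hmem v hv i a)).2 b
              simpa using this)
          rw [nsmul_eq_mul] at h2
          have e : ((w.updateRow i v).map (Int.cast : ℤ → ℝ)).det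
              = (((w.updateRow i v).det : ℤ) : ℝ) := by
            have := (Int.castRingHom ℝ).map_det (w.updateRow i v)
            simpa using this.symm
          rw [e] at h2
          exact h2
        rw [hf v hv i, abs_mul, abs_of_pos hD, ← le_div_iff₀ hD, ← hX] at h1
        have h3 := abs_le.1 h1
        have h4 : f v i ≤ ⌊X⌋ := Int.le_floor.2 h3.2
        have h5 : -f v i ≤ ⌊X⌋ := Int.le_floor.2 (by push_cast; linarith)
        rw [Finset.mem_Icc]; omega
      exact this
    · intro v hv v' hv' heq
      have hv : v ∈ boxPts Λ ρ := hv
      have hv' : v' ∈ boxPts Λ ρ := hv'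
      have hcr : Matrix.cramer w.transpose v = Matrix.cramer w.transpose v' := by
        funext i
        rw [Matrix.cramer_transpose_apply, Matrix.cramer_transpose_apply]
        have h1 := hf v hv i
        have h2 := hf v' hv' i
        rw [heq, ← h2] at h1
        exact_mod_cast h1
      have h1 := Matrix.mulVec_cramer w.transpose v
      have h2 := Matrix.mulVec_cramer w.transpose v'
      rw [hcr, h2, Matrix.det_transpose] at h1
      exact (smul_right_injective _ hw0 h1).symm
  have hBcard : (B.card : ℝ) ≤ (2 * X + 1) ^ Fintype.card ι := by
    simp only [B, Fintype.card_piFinset, Finset.prod_const, Finset.card_univ, Int.card_Icc]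
    push_cast
    have h0 : 0 ≤ ⌊X⌋ := Int.floor_nonneg.2 hX0
    have h1 : (((⌊X⌋ + 1 - -⌊X⌋).toNat : ℕ) : ℝ) = 2 * ⌊X⌋ + 1 := by
      have : (((⌊X⌋ + 1 - -⌊X⌋).toNat : ℕ) : ℤ) = 2 * ⌊X⌋ + 1 := by
        rw [Int.toNat_of_nonneg (by omega)]; ring
      exact_mod_cast this
    rw [h1]
    have := Int.floor_le X
    have h2 : (0 : ℝ) ≤ ⌊X⌋ := by exact_mod_cast h0
    gcongr
  exact (Nat.cast_le.2 hle).trans hBcard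

/-- A set of integer vectors spans the space or lies on a hyperplane. -/
lemma exists_independent_or_hyperplane {ι : Type*} [Fintype ι] [DecidableEq ι]
    (S : Set (ι → ℤ)) :
    (∃ w : Matrix ι ι ℤ, (∀ i, w i ∈ S) ∧ w.det ≠ 0) ∨
      ∃ a : ι → ℝ, a ≠ 0 ∧ ∀ v ∈ S, ∑ i, a i * v i = 0 := by
  classical
  let c : (ι → ℤ) → (ι → ℝ) := fun v i => v i
  by_cases htop : Submodule.span ℝ (c '' S) = ⊤
  · left
    obtain ⟨f, hf, -, hli⟩ := Submodule.exists_fun_fin_finrank_span_eq ℝ (c '' S)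
    have hfr : Module.finrank ℝ (Submodule.span ℝ (c '' S)) = Fintype.card ι := by
      rw [htop, finrank_top, Module.finrank_fintype_fun_eq_card]
    let e : ι ≃ Fin (Module.finrank ℝ (Submodule.span ℝ (c '' S))) :=
      (Fintype.equivFin ι).trans (finCongr hfr.symm)
    choose g hgS hg using hf
    refine ⟨Matrix.of fun i => g (e i), fun i => hgS _, ?_⟩
    have hli' : LinearIndependent ℝ (Matrix.of fun i => c (g (e i))).row := by
      have := hli.comp e e.injective
      have heq : (Matrix.of fun i => c (g (e i))).row = f ∘ e := funext fun i => hg (e i)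
      rw [heq]; exact this
    have hu := Matrix.linearIndependent_rows_iff_isUnit.1 hli'
    rw [Matrix.isUnit_iff_isUnit_det, isUnit_iff_ne_zero] at hu
    intro h0
    apply hu
    have h1 := (Int.castRingHom ℝ).map_det (Matrix.of fun i => g (e i))
    rw [h0, map_zero] at h1
    rw [h1]
    rfl
  · right
    obtain ⟨f, hf0, hf⟩ := Submodule.exists_le_ker_of_lt_top _ (lt_top_iff_ne_top.2 htop)
    refine ⟨fun i => f (Pi.single i 1), ?_, ?_⟩
    · intro h0
      apply hf0
      refine LinearMap.pi_ext' fun i => ?_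
      ext
      simpa using congrFun h0 i
    · intro v hv
      have h1 : f (c v) = 0 := hf (Submodule.subset_span ⟨v, hv, rfl⟩)
      rw [LinearMap.pi_apply_eq_sum_univ f (c v)] at h1
      rw [← h1]
      refine Finset.sum_congr rfl fun i _ => ?_
      rw [smul_eq_mul, mul_comm]
      show (v i : ℝ) * f (Pi.single i 1) = (v i : ℝ) * f _
      congr 2
      funext j
      simp [Pi.single_apply, eq_comm]

/-! ### The contraction inequality for the number of short vectors -/

/-- The lattice of integer vectors `(Z q - D p, q)`; rescaling by `D⁻¹` in the first coordinates,
its elements are the pairs `(Y q - p, q)` for the rational matrix `Y = Z / D`. -/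
def lat {m n : ℕ} (D : ℤ) (Z : Fin m → Fin n → ℤ) : AddSubgroup (Fin m ⊕ Fin n → ℤ) where
  carrier := {v | ∀ a, D ∣ v (Sum.inl a) - ∑ b, Z a b * v (Sum.inr b)}
  zero_mem' := by intro a; simp
  add_mem' := by
    intro v w hv hw a
    have := dvd_add (hv a) (hw a)
    simp only [Pi.add_apply, mul_add, Finset.sum_add_distrib]
    rwa [add_sub_add_comm]
  neg_mem' := by
    intro v hv a
    have := (dvd_neg (a := D)).2 (hv a)
    simp only [Pi.neg_apply, mul_neg, Finset.sum_neg_distrib]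
    rwa [neg_sub_neg, ← neg_sub]

lemma mem_lat {m n : ℕ} {D : ℤ} {Z : Fin m → Fin n → ℤ} {v : Fin m ⊕ Fin n → ℤ} :
    v ∈ lat D Z ↔ ∀ a, D ∣ v (Sum.inl a) - ∑ b, Z a b * v (Sum.inr b) := Iff.rfl

/-- The covolume of `lat D Z` is a multiple of `D ^ m`, expressed through determinants. -/
lemma lat_det {m n : ℕ} (D : ℤ) (Z : Fin m → Fin n → ℤ)
    (w : Matrix (Fin m ⊕ Fin n) (Fin m ⊕ Fin n) ℤ) (hw : ∀ i, w i ∈ lat D Z) :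
    ∃ t : ℤ, w.det = t * D ^ m := by
  choose u hu using hw
  have hw' : w = Matrix.of (fun i => Sum.elim (u i) (fun b => w i (Sum.inr b))) *
      Matrix.fromBlocks (D • (1 : Matrix (Fin m) (Fin m) ℤ)) 0
        (Matrix.of fun b a => Z a b) (1 : Matrix (Fin n) (Fin n) ℤ) := by
    ext i j
    rw [Matrix.mul_apply, Fintype.sum_sum_type]
    rcases j with a | b
    · have := hu i a
      simp only [Matrix.of_apply, Sum.elim_inl, Sum.elim_inr, Matrix.fromBlocks_apply₁₁,
        Matrix.fromBlocks_apply₂₁, Matrix.smul_apply, Matrix.one_apply, smul_eq_mul]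
      simp only [mul_ite, mul_one, mul_zero, Finset.sum_ite_eq', Finset.mem_univ, if_true]
      rw [sub_eq_iff_eq_add] at this
      rw [this]
      congr 1
      · ring
      · exact Finset.sum_congr rfl fun _ _ => mul_comm _ _
    · simp [Matrix.one_apply]
  rw [hw', Matrix.det_mul, Matrix.det_fromBlocks_zero₁₂]
  rw [Matrix.det_smul, Matrix.det_one, Matrix.det_one, Fintype.card_fin, mul_one, mul_one]
  exact ⟨_, rfl⟩

lemma lat_det_real {m n : ℕ} (D : ℤ) (Z : Fin m → Fin n → ℤ)
    (w : Matrix (Fin m ⊕ Fin n) (Fin m ⊕ Fin n) ℤ) (hw : ∀ i, w i ∈ lat D Z) :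
    ∃ t : ℤ, (w.det : ℝ) = t * (D : ℝ) ^ m := by
  obtain ⟨t, ht⟩ := lat_det D Z w hw
  exact ⟨t, by rw [ht]; push_cast; ring⟩

/-- The number of digit rows `e` for which `X + e · q` is at most `K` in absolute value: the other
digits being fixed, the digit `e j0` lies in an interval of length `2 K / |q j0|`. -/
lemma card_row {n L : ℕ} (X : ℤ) (q : Fin n → ℤ) (j0 : Fin n) (hq : q j0 ≠ 0) {K : ℝ} (hK : 0 ≤ K) :
    (((Finset.univ : Finset (Fin n → Fin L)).filter
      (fun e => |((X + ∑ b, (e b : ℤ) * q b : ℤ) : ℝ)| ≤ K)).card : ℝ) ≤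
      (2 * K / |(q j0 : ℝ)| + 1) * (L : ℝ) ^ (n - 1) := by
  classical
  have hq' : (0 : ℝ) < |(q j0 : ℝ)| := abs_pos.2 (by exact_mod_cast hq)
  set T : ℕ := ⌊2 * K / |(q j0 : ℝ)|⌋₊ + 1 with hT
  set s := (Finset.univ : Finset (Fin n → Fin L)).filter
      (fun e => |((X + ∑ b, (e b : ℤ) * q b : ℤ) : ℝ)| ≤ K) with hs
  have hmain : s.card ≤ T * (Finset.univ : Finset ({b // b ≠ j0} → Fin L)).card := by
    refine Finset.card_le_mul_card_image_of_maps_to (f := fun e b => e b.1)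
      (fun _ _ => Finset.mem_univ _) _ fun g _ => ?_
    rcases Finset.eq_empty_or_nonempty {a ∈ s | (fun b : {b // b ≠ j0} => a b.1) = g} with h0 | hne
    · simp [h0]
    obtain ⟨e1, he1, hmin⟩ := Finset.exists_min_image _ (fun e : Fin n → Fin L => (e j0 : ℕ)) hne
    rw [Finset.mem_filter] at he1
    rw [← Finset.card_range T]
    refine Finset.card_le_card_of_injOn (fun e => (e j0 : ℕ) - (e1 j0 : ℕ)) ?_ ?_
    · intro e he
      have hm1 := hmin e he
      have he := Finset.mem_filter.1 he
      have h1 := (Finset.mem_filter.1 he.1).2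
      have h2 := (Finset.mem_filter.1 he1.1).2
      have hdiff : (((e j0 : ℕ) - (e1 j0 : ℕ) : ℕ) : ℝ) * |(q j0 : ℝ)| ≤ 2 * K := by
        rw [Nat.cast_sub hm1]
        have h3 : (X + ∑ b, (e b : ℤ) * q b : ℤ) - (X + ∑ b, (e1 b : ℤ) * q b)
            = ((e j0 : ℤ) - (e1 j0 : ℤ)) * q j0 := by
          rw [add_sub_add_left_eq_sub, ← Finset.sum_sub_distrib,
            Finset.sum_eq_single j0]
          · ring
          · intro b _ hb
            have : e b = e1 b := (congrFun he.2 ⟨b, hb⟩).trans (congrFun he1.2 ⟨b, hb⟩).symm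
            rw [this, sub_self]
          · simp
        have h4 : |((e j0 : ℝ) - (e1 j0 : ℝ)) * q j0| ≤ 2 * K := by
          have h5 : ((e j0 : ℝ) - (e1 j0 : ℝ)) * q j0 =
            ((X + ∑ b, (e b : ℤ) * q b : ℤ) : ℝ) - ((X + ∑ b, (e1 b : ℤ) * q b : ℤ) : ℝ) := by
            rw [← Int.cast_sub, h3]; push_cast; ring
          rw [h5]
          exact (abs_sub _ _).trans (by linarith)
        rw [abs_mul] at h4
        have h6 : (0 : ℝ) ≤ (e j0 : ℝ) - (e1 j0 : ℝ) := sub_nonneg.2 (by exact_mod_cast hm1)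
        rwa [abs_of_nonneg h6] at h4
      have : ((e j0 : ℕ) - (e1 j0 : ℕ)) ≤ ⌊2 * K / |(q j0 : ℝ)|⌋₊ :=
        Nat.le_floor ((le_div_iff₀ hq').2 hdiff)
      have : ((e j0 : ℕ) - (e1 j0 : ℕ)) < T := by omega
      simpa using this
    · intro e he e' he' heq
      have hm1 := hmin e he
      have hm2 := hmin e' he'
      have he := (Finset.mem_filter.1 he)
      have he' := (Finset.mem_filter.1 he')
      funext b
      by_cases hb : b = j0
      · subst hb
        simp only at heq
        exact Fin.ext (by omega)
      · exact (congrFun he.2 ⟨b, hb⟩).trans (congrFun he'.2 ⟨b, hb⟩).symm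
  have hc : (Finset.univ : Finset ({b // b ≠ j0} → Fin L)).card = L ^ (n - 1) := by
    rw [Finset.card_univ, Fintype.card_fun, Fintype.card_fin, Fintype.card_subtype_compl]
    simp
  rw [hc] at hmain
  have hT' : (T : ℝ) ≤ 2 * K / |(q j0 : ℝ)| + 1 := by
    rw [hT]; push_cast
    have := Nat.floor_le (a := 2 * K / |(q j0 : ℝ)|) (by positivity)
    linarith
  calc (s.card : ℝ) ≤ T * (L : ℝ) ^ (n - 1) := by exact_mod_cast hmain
    _ ≤ _ := by gcongr


lemma card_matrices {m n L : ℕ} (P : Fin m → (Fin n → Fin L) → Prop)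
    [∀ a, DecidablePred (P a)] :
    ((Finset.univ : Finset (Fin m → Fin n → Fin L)).filter (fun e => ∀ a, P a (e a))).card =
      ∏ a, ((Finset.univ : Finset (Fin n → Fin L)).filter (P a)).card := by
  rw [← Fintype.card_piFinset]
  congr 1
  ext e
  simp [Fintype.mem_piFinset]

/-- The numbers of short vectors of the `L ^ (m n)` descendants of a lattice are controlled by the
numbers of vectors of the lattice itself in cubes of dyadic radii: a vector whose last
coordinates have size `q` survives in a proportion `≪ (K' / q) ^ m` of the descendants. -/
lemma sum_children_le {m n : ℕ} {L D I : ℕ} (hI : 2 ^ I = L) {K' : ℝ} (hK' : 0 < K')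
    (hKD : K' < L * D) (Z : Fin m → Fin n → ℤ) :
    ∑ e : Fin m → Fin n → Fin L,
      (((boxPts (lat ((L : ℤ) * D) (fun a b => (L : ℤ) * Z a b + (e a b : ℤ))) K').card : ℝ) - 1) ≤
    (L : ℝ) ^ (m * n) * 6 ^ m * ∑ i ∈ Finset.range (I + 1), ((1 / 2 : ℝ) ^ i) ^ m *
      (((boxPts (lat (D : ℤ) Z) ((n + 1) * (2 ^ i * (K' / L)))).card : ℝ) - 1) := by
  classical
  have hL1 : 1 ≤ L := by rw [← hI]; exact Nat.one_le_two_pow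
  have hLR : (1 : ℝ) ≤ L := by exact_mod_cast hL1
  set κ := K' / L with hκ
  have hκ0 : 0 < κ := by positivity
  have hKκ : K' = 2 ^ I * κ := by
    have : (L : ℝ) = 2 ^ I := by rw [← hI]; push_cast; rfl
    rw [hκ, ← this]; field_simp
  set Λ := lat (D : ℤ) Z with hΛ
  -- the condition that `v` yields a short vector of the descendant `e`
  let C : (Fin m → Fin n → Fin L) → (Fin m ⊕ Fin n → ℤ) → Prop := fun e v =>
    (∀ a, |((L * v (Sum.inl a) + ∑ b, (e a b : ℤ) * v (Sum.inr b) : ℤ) : ℝ)| ≤ K') ∧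
      (∀ b, |(v (Sum.inr b) : ℝ)| ≤ K') ∧ ∃ b, v (Sum.inr b) ≠ 0
  have hCx : ∀ e v, C e v → ∀ ρ, (∀ b, |(v (Sum.inr b) : ℝ)| ≤ ρ) → κ ≤ ρ →
      ∀ i, |(v i : ℝ)| ≤ (n + 1) * ρ := by
    intro e v hC ρ hq hρ i
    have hρ0 : 0 < ρ := hκ0.trans_le hρ
    rcases i with a | b
    · have h1 := hC.1 a
      push_cast at h1
      have h2 : |∑ b, (e a b : ℝ) * (v (Sum.inr b) : ℝ)| ≤ n * (L * ρ) := by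
        refine (Finset.abs_sum_le_sum_abs _ _).trans ?_
        refine (Finset.sum_le_sum (g := fun _ => L * ρ) fun b _ => ?_).trans (by simp)
        rw [abs_mul, Nat.abs_cast]
        have := (e a b).2.le
        have : ((e a b : ℕ) : ℝ) ≤ L := by exact_mod_cast this
        have := hq b
        gcongr
      have h3 : |(L : ℝ) * v (Sum.inl a)| ≤ K' + n * (L * ρ) := by
        have := abs_sub ((L : ℝ) * v (Sum.inl a) + ∑ b, (e a b : ℝ) * (v (Sum.inr b) : ℝ))
          (∑ b, (e a b : ℝ) * (v (Sum.inr b) : ℝ))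
        rw [add_sub_cancel_right] at this
        linarith
      rw [abs_mul, Nat.abs_cast] at h3
      have h4 : K' = L * κ := by rw [hκ]; field_simp
      have h5 : (L : ℝ) * |(v (Sum.inl a) : ℝ)| ≤ L * ((n + 1) * ρ) := by
        calc _ ≤ _ := h3
          _ ≤ L * ρ + n * (L * ρ) := by rw [h4]; gcongr
          _ = _ := by ring
      exact le_of_mul_le_mul_left h5 (by linarith)
    · refine (hq b).trans ?_
      have : (0 : ℝ) ≤ n := Nat.cast_nonneg _
      nlinarith
  have hκK : κ ≤ K' := div_le_self hK'.le hLR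
  set V := (boxPts Λ ((n + 1) * K')) with hV
  have h1 : ∀ e : Fin m → Fin n → Fin L,
      (((boxPts (lat ((L : ℤ) * D) (fun a b => (L : ℤ) * Z a b + (e a b : ℤ))) K').card : ℝ) - 1) ≤
        ∑ v ∈ V, if C e v then (1 : ℝ) else 0 := by
    intro e
    set Λ' := lat ((L : ℤ) * D) (fun a b => (L : ℤ) * Z a b + (e a b : ℤ)) with hΛ'
    rw [Finset.sum_boole, ← Nat.cast_pred (Finset.card_pos.2 ⟨0, zero_mem_boxPts Λ' hK'.le⟩),
      ← Finset.card_erase_of_mem (zero_mem_boxPts Λ' hK'.le), Nat.cast_le]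
    -- `g` recovers the vector of the parent lattice
    let g : (Fin m ⊕ Fin n → ℤ) → (Fin m ⊕ Fin n → ℤ) := fun v =>
      Sum.elim (fun a => (v (Sum.inl a) - ∑ b, (e a b : ℤ) * v (Sum.inr b)) / L)
        (fun b => v (Sum.inr b))
    have hg : ∀ v ∈ Λ', ∀ a, (L : ℤ) * g v (Sum.inl a) =
        v (Sum.inl a) - ∑ b, (e a b : ℤ) * v (Sum.inr b) := by
      intro v hv a
      refine Int.mul_ediv_cancel' ?_
      have h2 := dvd_trans (Dvd.intro _ rfl) (hv a)
      have h3 : (L : ℤ) ∣ ∑ b, (L : ℤ) * Z a b * v (Sum.inr b) :=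
        Finset.dvd_sum fun b _ => ⟨Z a b * v (Sum.inr b), by ring⟩
      have h4 := dvd_add h2 h3
      have h5 : v (Sum.inl a) - ∑ b, (e a b : ℤ) * v (Sum.inr b) =
          v (Sum.inl a) - ∑ b, ((L : ℤ) * Z a b + (e a b : ℤ)) * v (Sum.inr b) +
            ∑ b, (L : ℤ) * Z a b * v (Sum.inr b) := by
        simp only [add_mul, Finset.sum_add_distrib]
        ring
      rw [h5]; exact h4
    refine Finset.card_le_card_of_injOn g ?_ ?_
    · intro v hv
      have hv := Finset.mem_erase.1 hv
      obtain ⟨hvΛ, hvK⟩ := mem_boxPts.1 hv.2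
      have hgΛ : g v ∈ Λ := by
        intro a
        have hL0 : (L : ℤ) ≠ 0 := by exact_mod_cast (by omega : L ≠ 0)
        rw [← mul_dvd_mul_iff_left hL0, mul_sub, hg v hvΛ a]
        have h5 : v (Sum.inl a) - ∑ b, (e a b : ℤ) * v (Sum.inr b) -
            L * ∑ b, Z a b * g v (Sum.inr b) =
          v (Sum.inl a) - ∑ b, ((L : ℤ) * Z a b + (e a b : ℤ)) * v (Sum.inr b) := by
          simp only [add_mul, Finset.sum_add_distrib, Finset.mul_sum, g, Sum.elim_inr, mul_assoc]
          ring
        rw [h5]; exact hvΛ a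
      have hC : C e (g v) := by
        refine ⟨fun a => ?_, fun b => hvK _, ?_⟩
        · rw [hg v hvΛ a]
          simp only [g, Sum.elim_inr]
          rw [sub_add_cancel]; exact hvK _
        · by_contra hcon
          push Not at hcon
          apply hv.1
          have hq : ∀ b, v (Sum.inr b) = 0 := hcon
          funext i
          rcases i with a | b
          · have h2 := hvΛ a
            simp only [hq, mul_zero, Finset.sum_const_zero, sub_zero] at h2
            refine Int.eq_zero_of_abs_lt_dvd h2 ?_
            have h3 : |(v (Sum.inl a) : ℝ)| < L * D := (hvK _).trans_lt hKD
            exact_mod_cast h3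
          · exact hq b
      have : g v ∈ V.filter (C e) :=
        Finset.mem_filter.2 ⟨mem_boxPts.2 ⟨hgΛ, hCx e (g v) hC K' hC.2.1 hκK⟩, hC⟩
      exact this
    · intro v hv v' hv' heq
      have hv := (mem_boxPts.1 (Finset.mem_erase.1 hv).2).1
      have hv' := (mem_boxPts.1 (Finset.mem_erase.1 hv').2).1
      have hq : ∀ b, v (Sum.inr b) = v' (Sum.inr b) := fun b => congrFun heq (Sum.inr b)
      funext i
      rcases i with a | b
      · have h2 := hg v hv a
        have h3 := hg v' hv' a
        rw [heq, h3] at h2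
        simp only [hq] at h2
        linarith
      · exact hq b
  -- the proportion of descendants in which a given vector survives
  have h2 : ∀ v ∈ V, ∑ e, (if C e v then (1 : ℝ) else 0) ≤
      ∑ i ∈ Finset.range (I + 1), if v ∈ (boxPts Λ ((n + 1) * (2 ^ i * κ))).erase 0 then
        (L : ℝ) ^ (m * n) * 6 ^ m * ((1 / 2 : ℝ) ^ i) ^ m else 0 := by
    intro v hv
    by_cases hex : ∃ e, C e v
    swap
    · push Not at hex
      simp only [hex, if_false, Finset.sum_const_zero]
      exact Finset.sum_nonneg fun i _ => by split_ifs <;> positivity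
    obtain ⟨e0, he0⟩ := hex
    obtain ⟨b1, hb1⟩ := he0.2.2
    obtain ⟨b0, -, hb0⟩ := Finset.exists_max_image (Finset.univ : Finset (Fin n))
      (fun b => |v (Sum.inr b)|) ⟨b1, Finset.mem_univ _⟩
    have hq0 : v (Sum.inr b0) ≠ 0 := by
      have := (abs_pos.2 hb1).trans_le (hb0 b1 (Finset.mem_univ _))
      exact abs_pos.1 this
    have hex : ∃ i, |(v (Sum.inr b0) : ℝ)| ≤ 2 ^ i * κ := ⟨I, by rw [← hKκ]; exact he0.2.1 b0⟩
    set i := Nat.find hex with hi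
    have hi1 : |(v (Sum.inr b0) : ℝ)| ≤ 2 ^ i * κ := Nat.find_spec hex
    have hiI : i ≤ I := Nat.find_min' hex (by rw [← hKκ]; exact he0.2.1 b0)
    have hvi : v ∈ (boxPts Λ ((n + 1) * (2 ^ i * κ))).erase 0 := by
      refine Finset.mem_erase.2 ⟨fun h => hq0 (by rw [h]; rfl), mem_boxPts.2
        ⟨(mem_boxPts.1 hv).1, hCx e0 v he0 _ (fun b => ?_) ?_⟩⟩
      · refine le_trans ?_ hi1
        have := hb0 b (Finset.mem_univ _)
        exact_mod_cast this
      · have : (1 : ℝ) ≤ 2 ^ i := one_le_pow₀ (by norm_num)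
        nlinarith
    refine le_trans ?_ (Finset.single_le_sum
      (f := fun i => if v ∈ (boxPts Λ ((n + 1) * (2 ^ i * κ))).erase 0 then
        (L : ℝ) ^ (m * n) * 6 ^ m * ((1 / 2 : ℝ) ^ i) ^ m else 0)
      (fun i _ => by split_ifs <;> positivity) (Finset.mem_range.2 (Nat.lt_succ_of_le hiI)))
    simp only [hvi, if_true]
    rw [Finset.sum_boole]
    have hrow : ∀ a : Fin m, (((Finset.univ : Finset (Fin n → Fin L)).filter (fun e =>
        |((L * v (Sum.inl a) + ∑ b, (e b : ℤ) * v (Sum.inr b) : ℤ) : ℝ)| ≤ K')).card : ℝ) ≤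
        (L : ℝ) ^ n * 6 * (1 / 2) ^ i := by
      intro a
      rcases Nat.eq_zero_or_pos i with h0 | hpos
      · rw [h0, pow_zero, mul_one]
        have : (((Finset.univ : Finset (Fin n → Fin L)).filter (fun e =>
          |((L * v (Sum.inl a) + ∑ b, (e b : ℤ) * v (Sum.inr b) : ℤ) : ℝ)| ≤ K')).card : ℝ)
            ≤ (L : ℝ) ^ n := by
          have := Finset.card_filter_le (Finset.univ : Finset (Fin n → Fin L)) (fun e =>
            |((L * v (Sum.inl a) + ∑ b, (e b : ℤ) * v (Sum.inr b) : ℤ) : ℝ)| ≤ K')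
          rw [Finset.card_univ, Fintype.card_fun, Fintype.card_fin, Fintype.card_fin] at this
          exact_mod_cast this
        have h7 : (0 : ℝ) ≤ (L : ℝ) ^ n := by positivity
        linarith
      · have hlt : 2 ^ (i - 1) * κ < |(v (Sum.inr b0) : ℝ)| := by
          have := Nat.find_min hex (m := i - 1) (by omega)
          exact not_le.1 this
        refine (card_row (L * v (Sum.inl a)) (fun b => v (Sum.inr b)) b0 hq0 hK'.le).trans ?_
        have hqK := he0.2.1 b0
        have hqp : (0 : ℝ) < |(v (Sum.inr b0) : ℝ)| := lt_of_le_of_lt (by positivity) hlt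
        have h3 : 2 * K' / |(v (Sum.inr b0) : ℝ)| + 1 ≤ 3 * K' / |(v (Sum.inr b0) : ℝ)| := by
          rw [div_add_one hqp.ne']; gcongr; linarith
        have h4 : 3 * K' / |(v (Sum.inr b0) : ℝ)| ≤ 3 * K' / (2 ^ (i - 1) * κ) := by
          gcongr
        have h5 : 3 * K' / (2 ^ (i - 1) * κ) = L * 6 * (1 / 2) ^ i := by
          have e : (2 : ℝ) ^ i = 2 * 2 ^ (i - 1) := by
            rw [← pow_succ', Nat.sub_add_cancel hpos]
          rw [one_div, inv_pow, e, hκ]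
          have h2p : (0 : ℝ) < 2 ^ (i - 1) := by positivity
          generalize (2 : ℝ) ^ (i - 1) = t at h2p
          field_simp; norm_num
        have h6 : (L : ℝ) ^ n = L * L ^ (n - 1) := by
          rw [← pow_succ', Nat.sub_add_cancel (Fin.pos b0)]
        calc _ ≤ (L * 6 * (1 / 2) ^ i) * (L : ℝ) ^ (n - 1) := by
              gcongr; linarith
          _ = _ := by rw [h6]; ring
    have hsub : ((Finset.univ.filter fun e => C e v).card : ℝ) ≤
        (((Finset.univ : Finset (Fin m → Fin n → Fin L)).filter (fun e => ∀ a,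
        |((L * v (Sum.inl a) + ∑ b, (e a b : ℤ) * v (Sum.inr b) : ℤ) : ℝ)| ≤ K')).card : ℝ) := by
      refine Nat.cast_le.2 (Finset.card_le_card fun e he => ?_)
      rw [Finset.mem_filter] at he ⊢
      exact ⟨he.1, he.2.1⟩
    refine hsub.trans ?_
    rw [card_matrices (fun a (e : Fin n → Fin L) =>
        |((L * v (Sum.inl a) + ∑ b, (e b : ℤ) * v (Sum.inr b) : ℤ) : ℝ)| ≤ K')]
    rw [Nat.cast_prod]
    refine (Finset.prod_le_prod (fun a _ => Nat.cast_nonneg _) (fun a _ => hrow a)).trans ?_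
    rw [Finset.prod_const, Finset.card_univ, Fintype.card_fin, mul_pow, mul_pow, ← pow_mul,
      mul_comm n m]
  calc _ ≤ ∑ e, ∑ v ∈ V, (if C e v then (1 : ℝ) else 0) := Finset.sum_le_sum fun e _ => h1 e
    _ = ∑ v ∈ V, ∑ e, (if C e v then (1 : ℝ) else 0) := Finset.sum_comm
    _ ≤ ∑ v ∈ V, ∑ i ∈ Finset.range (I + 1),
        if v ∈ (boxPts Λ ((n + 1) * (2 ^ i * κ))).erase 0 then
        (L : ℝ) ^ (m * n) * 6 ^ m * ((1 / 2 : ℝ) ^ i) ^ m else 0 := Finset.sum_le_sum h2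
    _ = ∑ i ∈ Finset.range (I + 1), ∑ v ∈ V,
        if v ∈ (boxPts Λ ((n + 1) * (2 ^ i * κ))).erase 0 then
        (L : ℝ) ^ (m * n) * 6 ^ m * ((1 / 2 : ℝ) ^ i) ^ m else 0 := Finset.sum_comm
    _ ≤ ∑ i ∈ Finset.range (I + 1), (L : ℝ) ^ (m * n) * 6 ^ m * (((1 / 2 : ℝ) ^ i) ^ m *
      (((boxPts Λ ((n + 1) * (2 ^ i * κ))).card : ℝ) - 1)) := by
        refine Finset.sum_le_sum fun i _ => ?_
        have hp : (0 : ℝ) ≤ (n + 1) * (2 ^ i * κ) := by positivity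
        rw [← Finset.sum_filter, Finset.sum_const, nsmul_eq_mul,
          ← Nat.cast_pred (Finset.card_pos.2 ⟨0, zero_mem_boxPts Λ hp⟩),
          ← Finset.card_erase_of_mem (zero_mem_boxPts Λ hp)]
        have : (V.filter fun v => v ∈ (boxPts Λ ((n + 1) * (2 ^ i * κ))).erase 0).card ≤
            ((boxPts Λ ((n + 1) * (2 ^ i * κ))).erase 0).card :=
          Finset.card_le_card fun v hv => (Finset.mem_filter.1 hv).2
        calc _ ≤ (((boxPts Λ ((n + 1) * (2 ^ i * κ))).erase 0).card : ℝ) *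
              ((L : ℝ) ^ (m * n) * 6 ^ m * ((1 / 2 : ℝ) ^ i) ^ m) := by gcongr
          _ = _ := by ring
    _ = _ := by rw [Finset.mul_sum]

lemma exists_large_pow_two (A B : ℝ) : ∃ μ : ℕ, 1 ≤ μ ∧ (A * μ + B) * (1 / 2 : ℝ) ^ μ ≤ 1 / 2 := by
  have h1 : Filter.Tendsto (fun μ : ℕ => (A * μ + B) * (1 / 2 : ℝ) ^ μ) Filter.atTop (nhds 0) := by
    have h2 := tendsto_self_mul_const_pow_of_lt_one (r := (1 / 2 : ℝ)) (by norm_num) (by norm_num)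
    have h3 := tendsto_pow_atTop_nhds_zero_of_lt_one (r := (1 / 2 : ℝ)) (by norm_num) (by norm_num)
    have h4 := (h2.const_mul A).add (h3.const_mul B)
    simp only [mul_zero, add_zero] at h4
    refine h4.congr fun μ => by ring
  have h5 := (h1.eventually (gt_mem_nhds (show (0 : ℝ) < 1 / 2 by norm_num))).and
    (Filter.eventually_ge_atTop 1)
  obtain ⟨μ, h6, h7⟩ := h5.exists
  exact ⟨μ, h7, h6.le⟩

set_option maxHeartbeats 1000000 in
/-- The contraction inequality: on average over the children, the number of nonzero short vectors
is halved, up to an additive constant. -/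
lemma contraction {m n : ℕ} (hm : 0 < m) (hn : 0 < n) :
    ∃ μ : ℕ, 1 ≤ μ ∧ ∃ b : ℝ, 0 ≤ b ∧ ∀ M L : ℕ, M = 2 ^ μ → L = M ^ (m + n) →
      ∀ (j : ℕ) (Z : Fin m → Fin n → ℤ),
      ∑ e : Fin m → Fin n → Fin L,
        (((boxPts (lat ((L : ℤ) ^ (j + 1)) (fun a b => (L : ℤ) * Z a b + (e a b : ℤ)))
          ((M : ℝ) ^ (m * (j + 1)))).card : ℝ) - 1) ≤
      (L : ℝ) ^ (m * n) *
        (1 / 2 * (((boxPts (lat ((L : ℤ) ^ j) Z) ((M : ℝ) ^ (m * j))).card : ℝ) - 1) + b) := by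
  set d := m + n with hd
  set C1 : ℝ := 6 * (n + 1) + (4 * d * (n + 1)) ^ (d - 1) with hC1
  have hC10 : 0 ≤ C1 := by positivity
  obtain ⟨μ, hμ1, hμ⟩ := exists_large_pow_two (6 ^ m * C1 * d) (6 ^ m * C1)
  set Bd : ℝ := (2 * (d.factorial * ((n + 1) * ((2 : ℝ) ^ μ) ^ m) ^ d) + 1) ^ d with hBd
  have hBd0 : 0 ≤ Bd := by positivity
  refine ⟨μ, hμ1, 1 / 2 + 6 ^ m * (μ * d + 1) * Bd, by positivity, ?_⟩
  rintro M L hM hL j Z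
  have hMR : (M : ℝ) = 2 ^ μ := by rw [hM]; push_cast; rfl
  have hM1 : (1 : ℝ) ≤ M := by rw [hMR]; exact one_le_pow₀ (by norm_num)
  have hM2 : (1 : ℝ) < M := by rw [hMR]; exact one_lt_pow₀ (by norm_num) (by omega)
  have hM0 : (0 : ℝ) < M := by linarith
  have hLR : (L : ℝ) = (M : ℝ) ^ d := by rw [hL]; push_cast; rfl
  have hI : 2 ^ (μ * d) = L := by rw [hL, hM, pow_mul]
  set K : ℝ := (M : ℝ) ^ (m * j) with hK
  have hK0 : 0 < K := by positivity
  set K' : ℝ := (M : ℝ) ^ (m * (j + 1)) with hK'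
  have hK'K : K' = (M : ℝ) ^ m * K := by rw [hK', hK, ← pow_add]; congr 1; ring
  have hK'0 : 0 < K' := by positivity
  have hKD : K' < (L : ℝ) * ((L ^ j : ℕ) : ℝ) := by
    push_cast
    rw [← pow_succ', hLR, ← pow_mul, hK']
    apply pow_lt_pow_right₀ hM2
    rw [hd]; nlinarith
  have key := sum_children_le hI hK'0 hKD Z
  have e1 : (L : ℤ) * ((L ^ j : ℕ) : ℤ) = (L : ℤ) ^ (j + 1) := by push_cast; ring
  have e2 : ((L ^ j : ℕ) : ℤ) = (L : ℤ) ^ j := by push_cast; rfl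
  rw [e1, e2] at key
  refine key.trans ?_
  rw [mul_assoc]
  refine mul_le_mul_of_nonneg_left ?_ (by positivity)
  set Λ := lat ((L : ℤ) ^ j) Z with hΛ
  set P : ℝ := ((boxPts Λ K).card : ℝ) with hP
  have hP1 : 1 ≤ P := by rw [hP]; exact_mod_cast one_le_card_boxPts Λ hK0.le
  have hcard : Fintype.card (Fin m ⊕ Fin n) = d := by simp [hd]
  have hρ : ∀ i : ℕ, ((n : ℝ) + 1) * (2 ^ i * (K' / L)) = ((n + 1) * 2 ^ i / (M : ℝ) ^ n) * K := by
    intro i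
    rw [hK'K, hLR, hd, pow_add]; field_simp
  have h2I : (2 : ℝ) ^ (μ * d) = (M : ℝ) ^ d := by rw [pow_mul, hMR]
  have hρI : ((n : ℝ) + 1) * (2 ^ (μ * d) * (K' / L)) = (n + 1) * (M : ℝ) ^ m * K := by
    rw [hρ, h2I, hd, pow_add]; field_simp
  have hmono : ∀ i ∈ Finset.range (μ * d + 1), ((n : ℝ) + 1) * (2 ^ i * (K' / L)) ≤
      ((n : ℝ) + 1) * (2 ^ (μ * d) * (K' / L)) := by
    intro i hi
    have := Finset.mem_range_succ_iff.1 hi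
    gcongr; norm_num
  rcases exists_independent_or_hyperplane
    ((boxPts Λ (((n : ℝ) + 1) * (2 ^ (μ * d) * (K' / L))) : Finset _) : Set (Fin m ⊕ Fin n → ℤ))
    with ⟨w, hw, hw0⟩ | ⟨a, ha0, ha⟩
  · have hdet := card_boxPts_of_det (Λ := Λ)
      (ρ := ((n : ℝ) + 1) * (2 ^ (μ * d) * (K' / L))) (D := (((L : ℤ) ^ j : ℤ) : ℝ) ^ m)
      (by positivity) (by push_cast; rw [hLR]; positivity)
      (fun w hw => lat_det_real _ Z w hw) w hw hw0
    have e3 : (K : ℝ) ^ d = ((L : ℝ) ^ j) ^ m := by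
      rw [hK, hLR]; simp only [← pow_mul]; congr 1; ring
    have hb : (Fintype.card (Fin m ⊕ Fin n)).factorial *
        (((n : ℝ) + 1) * (2 ^ (μ * d) * (K' / L))) ^ Fintype.card (Fin m ⊕ Fin n) /
          (((L : ℤ) ^ j : ℤ) : ℝ) ^ m = d.factorial * ((n + 1) * ((2 : ℝ) ^ μ) ^ m) ^ d := by
      rw [hcard, hρI, mul_pow _ K, e3, ← hMR]
      push_cast
      have : (L : ℝ) ≠ 0 := by rw [hLR]; positivity
      field_simp
    rw [hb, hcard, ← hBd] at hdet
    have hterm : ∀ i ∈ Finset.range (μ * d + 1), ((1 / 2 : ℝ) ^ i) ^ m *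
        (((boxPts Λ (((n : ℝ) + 1) * (2 ^ i * (K' / L)))).card : ℝ) - 1) ≤ Bd := by
      intro i hi
      have h1 : (((boxPts Λ (((n : ℝ) + 1) * (2 ^ i * (K' / L)))).card : ℝ)) ≤ Bd :=
        le_trans (Nat.cast_le.2 (Finset.card_le_card (boxPts_mono Λ (hmono i hi)))) hdet
      have h2 : ((1 / 2 : ℝ) ^ i) ^ m ≤ 1 :=
        pow_le_one₀ (by positivity) (pow_le_one₀ (by norm_num) (by norm_num))
      have h3 : (0 : ℝ) ≤ ((1 / 2 : ℝ) ^ i) ^ m := by positivity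
      nlinarith
    have hsum := Finset.sum_le_card_nsmul _ _ _ hterm
    rw [Finset.card_range, nsmul_eq_mul] at hsum
    push_cast at hsum
    have h6 := mul_le_mul_of_nonneg_left hsum (show (0 : ℝ) ≤ 6 ^ m by positivity)
    rw [mul_assoc (6 ^ m : ℝ)]
    refine h6.trans ?_
    linarith
  · have hterm : ∀ i ∈ Finset.range (μ * d + 1), ((1 / 2 : ℝ) ^ i) ^ m *
        (((boxPts Λ (((n : ℝ) + 1) * (2 ^ i * (K' / L)))).card : ℝ) - 1) ≤ C1 / M * P := by
      intro i hi
      have hle := hmono i hi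
      rw [hρ i] at hle ⊢
      set r : ℝ := (n + 1) * 2 ^ i / (M : ℝ) ^ n with hr
      have hr0 : 0 < r := by positivity
      have hrK : 0 < r * K := by positivity
      rcases le_or_gt r 1 with hr1 | hr1
      · by_cases hex : ∃ v ∈ boxPts Λ (r * K), v ≠ 0
        · have h1 := card_boxPts_shrink (R := K) hrK (by nlinarith) hex
          rw [mul_div_assoc, div_self hK0.ne', mul_one, ← hP] at h1
          have h2 : ((1 / 2 : ℝ) ^ i) ^ m ≤ (1 / 2 : ℝ) ^ i :=
            pow_le_of_le_one (by positivity) (pow_le_one₀ (by norm_num) (by norm_num)) hm.ne'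
          have h3 : (1 / 2 : ℝ) ^ i * (6 * r * P) = 6 * (n + 1) / (M : ℝ) ^ n * P := by
            rw [hr, one_div, inv_pow]; field_simp
          have h4 : (M : ℝ) ≤ (M : ℝ) ^ n := le_self_pow₀ hM1 hn.ne'
          have h5 : ((boxPts Λ (r * K)).card : ℝ) - 1 ≤ 6 * r * P := by linarith
          have h6 : (1 : ℝ) ≤ (boxPts Λ (r * K)).card := by
            exact_mod_cast one_le_card_boxPts Λ hrK.le
          calc _ ≤ (1 / 2 : ℝ) ^ i * (6 * r * P) :=
                mul_le_mul h2 h5 (by linarith) (by positivity)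
            _ = 6 * (n + 1) / (M : ℝ) ^ n * P := h3
            _ ≤ 6 * (n + 1) / M * P := by gcongr
            _ ≤ C1 / M * P := by
              gcongr
              rw [hC1]
              have : (0 : ℝ) ≤ (4 * d * (n + 1)) ^ (d - 1) := by positivity
              linarith
        · push Not at hex
          have h1 : (boxPts Λ (r * K)).card ≤ 1 :=
            Finset.card_le_one.2 fun a ha b hb => (hex a ha).trans (hex b hb).symm
          have h2 : ((boxPts Λ (r * K)).card : ℝ) ≤ 1 := by exact_mod_cast h1
          have h3 : (0 : ℝ) ≤ ((1 / 2 : ℝ) ^ i) ^ m := by positivity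
          have h4 : 0 ≤ C1 / M * P := by positivity
          nlinarith
      · have h1 := card_boxPts_of_hyperplane (Λ := Λ) hK0 (ρ := r * K) (by nlinarith) a ha0
          (fun v hv => ha v (boxPts_mono Λ hle hv))
        rw [hcard, mul_div_assoc, div_self hK0.ne', mul_one, ← hP] at h1
        have hiI := Finset.mem_range_succ_iff.1 hi
        have h2 : ((1 / 2 : ℝ) ^ i) ^ m * ((4 * d * r) ^ (d - 1)) ≤
            (4 * d * (n + 1)) ^ (d - 1) / M := by
          have e4 : 4 * (d : ℝ) * r = (4 * d * (n + 1)) * (2 ^ i / (M : ℝ) ^ n) := by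
            rw [hr]; ring
          rw [e4, mul_pow]
          have h5 : ((1 / 2 : ℝ) ^ i) ^ m * (2 ^ i / (M : ℝ) ^ n) ^ (d - 1) ≤ 1 / M := by
            have e5 : ((2 : ℝ) ^ i) ^ (d - 1) = (2 ^ i) ^ m * (2 ^ i) ^ (n - 1) := by
              rw [← pow_add]; congr 1; omega
            rw [one_div, inv_pow, inv_pow, div_pow, e5, inv_mul_eq_div, div_div]
            rw [div_le_div_iff₀ (by positivity) hM0, one_mul]
            have h6 : ((2 : ℝ) ^ i) ^ (n - 1) ≤ ((M : ℝ) ^ d) ^ (n - 1) := by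
              rw [← h2I]; gcongr; norm_num
            have h7 : ((M : ℝ) ^ d) ^ (n - 1) * M ≤ ((M : ℝ) ^ n) ^ (d - 1) := by
              rw [← pow_mul, ← pow_mul, ← pow_succ]
              refine pow_le_pow_right₀ hM1 ?_
              obtain ⟨n', rfl⟩ : ∃ n', n = n' + 1 := ⟨n - 1, by omega⟩
              obtain ⟨m', rfl⟩ : ∃ m', m = m' + 1 := ⟨m - 1, by omega⟩
              rw [hd]
              have : m' + 1 + (n' + 1) - 1 = m' + n' + 1 := by omega
              rw [this]
              simp only [Nat.add_sub_cancel]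
              nlinarith
            calc (2 ^ i) ^ m * ((2 : ℝ) ^ i) ^ (n - 1) * M
                ≤ (2 ^ i) ^ m * ((M : ℝ) ^ d) ^ (n - 1) * M := by gcongr
              _ = (2 ^ i) ^ m * (((M : ℝ) ^ d) ^ (n - 1) * M) := by ring
              _ ≤ (2 ^ i) ^ m * ((M : ℝ) ^ n) ^ (d - 1) := by gcongr
              _ = _ := by ring
          calc _ = (4 * d * (n + 1)) ^ (d - 1) *
                (((1 / 2 : ℝ) ^ i) ^ m * (2 ^ i / (M : ℝ) ^ n) ^ (d - 1)) := by ring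
            _ ≤ (4 * d * (n + 1)) ^ (d - 1) * (1 / M) := by gcongr
            _ = _ := by ring
        calc _ ≤ ((1 / 2 : ℝ) ^ i) ^ m * ((4 * d * r) ^ (d - 1) * P) := by gcongr; linarith
          _ = ((1 / 2 : ℝ) ^ i) ^ m * ((4 * d * r) ^ (d - 1)) * P := by ring
          _ ≤ (4 * d * (n + 1)) ^ (d - 1) / M * P := by gcongr
          _ ≤ C1 / M * P := by
            gcongr
            rw [hC1]
            have : (0 : ℝ) ≤ 6 * (n + 1) := by positivity
            linarith
    have hsum := Finset.sum_le_card_nsmul _ _ _ hterm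
    rw [Finset.card_range, nsmul_eq_mul] at hsum
    push_cast at hsum
    have h6 := mul_le_mul_of_nonneg_left hsum (show (0 : ℝ) ≤ 6 ^ m by positivity)
    have h7 : (6 : ℝ) ^ m * ((μ * d + 1) * (C1 / M * P)) =
        ((6 ^ m * C1 * d * μ + 6 ^ m * C1) * (1 / 2 : ℝ) ^ μ) * P := by
      rw [hMR, one_div, inv_pow]; field_simp
    rw [h7] at h6
    refine h6.trans ?_
    have h8 := mul_le_mul_of_nonneg_right hμ (by linarith : (0:ℝ) ≤ P)
    refine h8.trans ?_
    have : 0 ≤ (6 : ℝ) ^ m * (μ * d + 1) * Bd := by positivity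
    linarith

/-! ### Triangular bases of lattices -/

/-- `t` is a triangular basis of `Γ`: the vector `t i` lies in `Γ`, vanishes above the coordinate
`i`, and its `i`-th coordinate `δ i` generates the group of `i`-th coordinates of the elements of
`Γ` vanishing above `i`. -/
structure TriBasis {ι : Type*} [LinearOrder ι] (Γ : AddSubgroup (ι → ℝ)) (t : ι → ι → ℝ)
    (δ : ι → ℝ) : Prop where
  mem : ∀ i, t i ∈ Γ
  pos : ∀ i, 0 < δ i
  tri : ∀ i i', i < i' → t i i' = 0
  diag : ∀ i, t i i = δ i
  gen : ∀ x ∈ Γ, ∀ i, (∀ i', i < i' → x i' = 0) → ∃ c : ℤ, x i = c * δ i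

lemma TriBasis.repr {ι : Type*} [LinearOrder ι] [Fintype ι] {Γ : AddSubgroup (ι → ℝ)}
    {t : ι → ι → ℝ} {δ : ι → ℝ} (h : TriBasis Γ t δ) {x : ι → ℝ} (hx : x ∈ Γ) :
    ∃ c : ι → ℤ, x = ∑ i, c i • t i := by
  suffices H : ∀ s : Finset ι, IsUpperSet (s : Set ι) →
      ∃ c : ι → ℤ, ∀ i ∈ s, (x - ∑ i, c i • t i) i = 0 by
    obtain ⟨c, hc⟩ := H Finset.univ (by simpa using isUpperSet_univ)
    exact ⟨c, sub_eq_zero.1 (funext fun i => hc i (Finset.mem_univ i))⟩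
  intro s
  induction s using Finset.induction_on_min with
  | empty => intro _; exact ⟨0, by simp⟩
  | insert a s ha ih =>
    intro hup
    have hup' : IsUpperSet (s : Set ι) := by
      intro p q hpq hp
      have := hup hpq (by simp [Finset.mem_coe.1 hp])
      rcases Finset.mem_insert.1 (Finset.mem_coe.1 this) with rfl | h1
      · exact absurd (ha p hp) (not_lt.2 hpq)
      · exact h1
    obtain ⟨c, hc⟩ := ih hup'
    have hmem : x - ∑ i, c i • t i ∈ Γ :=
      Γ.sub_mem hx (Γ.sum_mem fun i _ => Γ.zsmul_mem (h.mem i) _)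
    obtain ⟨z, hz⟩ := h.gen _ hmem a (fun i' hi' => by
      have := hup hi'.le (by simp)
      rcases Finset.mem_insert.1 (Finset.mem_coe.1 this) with rfl | h1
      · exact absurd hi' (lt_irrefl _)
      · exact hc i' h1)
    refine ⟨c + Pi.single a z, fun i hi => ?_⟩
    have e : x - ∑ i, (c + Pi.single a z : ι → ℤ) i • t i = (x - ∑ i, c i • t i) - z • t a := by
      simp only [Pi.add_apply, add_smul, Finset.sum_add_distrib]
      rw [Finset.sum_eq_single a (f := fun i => (Pi.single a z : ι → ℤ) i • t i)
        (fun b _ hb => by simp [hb]) (by simp)]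
      simp [sub_sub]
    rw [e, Pi.sub_apply, Pi.smul_apply]
    rcases Finset.mem_insert.1 hi with rfl | h1
    · rw [hz, h.diag]; simp
    · rw [hc i h1, h.tri a i (ha i h1)]; simp

lemma det_of_tri {ι : Type*} [LinearOrder ι] [Fintype ι] {t : Matrix ι ι ℝ}
    (h : ∀ i i', i < i' → t i i' = 0) : t.det = ∏ i, t i i := by
  refine Matrix.det_of_isLowerTriangular t ?_
  intro i j hij
  exact h i j hij

/-- A combination of triangular vectors that vanishes above `i` involves only the vectors up to
`i`, and its coordinate `i` is read off from the diagonal. -/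
lemma tri_coeff {ι : Type*} [LinearOrder ι] [Fintype ι] {t : ι → ι → ℝ} {δ : ι → ℝ}
    (hpos : ∀ i, 0 < δ i) (htri : ∀ i i', i < i' → t i i' = 0) (hdiag : ∀ i, t i i = δ i)
    (a : ι → ℝ) (i : ι) (h : ∀ i', i < i' → ∑ k, a k * t k i' = 0) :
    (∀ i', i < i' → a i' = 0) ∧ ∑ k, a k * t k i = a i * δ i := by
  have key : ∀ i', (∀ k, i' < k → a k = 0) → ∑ k, a k * t k i' = a i' * δ i' := by
    intro i' hk
    rw [Finset.sum_eq_single i' (fun k _ hki => ?_) (by simp), hdiag]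
    rcases lt_or_gt_of_ne hki with h1 | h1
    · rw [htri k i' h1, mul_zero]
    · rw [hk k h1, zero_mul]
  have h0 : ∀ i', i < i' → a i' = 0 := by
    intro i'
    induction i' using WellFoundedGT.induction with
    | ind i' ih =>
      intro hi'
      have h1 := key i' (fun k hk => ih k hk (hi'.trans hk))
      rw [h i' hi'] at h1
      exact (mul_eq_zero.1 h1.symm).resolve_right (hpos i').ne'
  exact ⟨h0, key i h0⟩

/-- Subtracting integer vectors makes the entries of a triangular basis bounded by `1`. -/
lemma TriBasis.reduce {ι : Type*} [LinearOrder ι] [Fintype ι] {Γ : AddSubgroup (ι → ℝ)}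
    {t : ι → ι → ℝ} {δ : ι → ℝ} (h : TriBasis Γ t δ) (hZ : ∀ i, Pi.single i (1 : ℝ) ∈ Γ) :
    ∃ t', TriBasis Γ t' δ ∧ ∀ i i', |t' i i'| ≤ 1 := by
  let t' : ι → ι → ℝ := fun i =>
    t i - ∑ i' ∈ Finset.univ.filter (· < i), ⌊t i i'⌋ • (Pi.single i' (1 : ℝ) : ι → ℝ)
  have hval : ∀ i i', t' i i' = if i' < i then Int.fract (t i i') else t i i' := by
    intro i i'
    simp only [t', Pi.sub_apply, Finset.sum_apply, Pi.smul_apply, Pi.single_apply]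
    simp only [smul_ite, smul_zero, Finset.sum_ite_eq, Finset.mem_filter, Finset.mem_univ, true_and]
    split_ifs
    · simp [Int.self_sub_floor]
    · simp
  refine ⟨t', ⟨fun i => ?_, h.pos, fun i i' hi => ?_, fun i => ?_, h.gen⟩, fun i i' => ?_⟩
  · exact Γ.sub_mem (h.mem i) (Γ.sum_mem fun i' _ => Γ.zsmul_mem (hZ i') _)
  · rw [hval, if_neg (not_lt.2 hi.le), h.tri i i' hi]
  · rw [hval, if_neg (lt_irrefl _), h.diag]
  · rw [hval]
    split_ifs with h1
    · rw [abs_of_nonneg (Int.fract_nonneg _)]; exact (Int.fract_lt_one _).le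
    · rcases eq_or_ne i i' with rfl | h2
      · obtain ⟨c, hc⟩ := h.gen _ (hZ i) i (fun i' hi' => by simp [hi'.ne'])
        rw [h.diag, abs_of_pos (h.pos i)]
        have hp := h.pos i
        simp only [Pi.single_eq_same] at hc
        have hc0 : (0 : ℝ) < c := by
          by_contra hcon
          nlinarith [mul_nonneg (sub_nonneg.2 (not_lt.1 hcon)) hp.le]
        have hc1 : (1 : ℝ) ≤ c := by
          have : 0 < c := by exact_mod_cast hc0
          exact_mod_cast (show 1 ≤ c by omega)
        nlinarith
      · rw [h.tri i i' (lt_of_le_of_ne (not_lt.1 h1) h2)]; simp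

/-- The order of the fractions `μ i / ∏ k ≥ i, z k` taken together: an integer clearing all of them
for `i` in an upper set is divisible by the product of the `z k` over that set, since each
numerator is prime to `z i`. -/
lemma prod_dvd_of_tri {ι : Type*} [LinearOrder ι] [Fintype ι] [LocallyFiniteOrderTop ι]
    {z μ : ι → ℤ} (hz : ∀ i, z i ≠ 0) (hco : ∀ i, IsCoprime (μ i) (z i)) (β : ℤ) (s : Finset ι)
    (hs : IsUpperSet (s : Set ι)) (h : ∀ i ∈ s, (∏ k ∈ Finset.Ici i, z k) ∣ β * μ i) :
    (∏ k ∈ s, z k) ∣ β := by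
  induction s using Finset.induction_on_min with
  | empty => simp
  | insert a s ha ih =>
    have hup' : IsUpperSet (s : Set ι) := by
      intro p q hpq hp
      have := hs hpq (by simp [Finset.mem_coe.1 hp])
      rcases Finset.mem_insert.1 (Finset.mem_coe.1 this) with rfl | h1
      · exact absurd (ha p hp) (not_lt.2 hpq)
      · exact h1
    have hIci : Finset.Ici a = insert a s := by
      ext x
      rw [Finset.mem_Ici]
      constructor
      · intro hx; exact Finset.mem_coe.1 (hs hx (by simp))
      · intro hx
        rcases Finset.mem_insert.1 hx with rfl | h1
        · exact le_rfl
        · exact (ha x h1).le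
    have has : a ∉ s := fun h1 => lt_irrefl _ (ha a h1)
    obtain ⟨β1, hβ⟩ := ih hup' (fun i hi => h i (Finset.mem_insert_of_mem hi))
    have h1 := h a (Finset.mem_insert_self _ _)
    rw [hIci, Finset.prod_insert has, hβ, mul_comm (z a), mul_assoc,
      mul_dvd_mul_iff_left (Finset.prod_ne_zero_iff.2 fun i _ => hz i)] at h1
    rw [Finset.prod_insert has, hβ, mul_comm (z a)]
    exact mul_dvd_mul_left _ ((hco a).symm.dvd_of_dvd_mul_right h1)

/-- Adjoining one column: a lattice with triangular basis `t` of diagonal `1 / v i` is enlarged by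
a vector `y` near a prescribed point, so that the diagonal becomes `1 / (v i * s i ^ 2)`, while
only multiples of `∏ s i ^ 2` bring `y` back into the lattice. -/
lemma tri_step {ι : Type*} [LinearOrder ι] [Fintype ι] [LocallyFiniteOrderTop ι]
    {Γ : AddSubgroup (ι → ℝ)} {t : ι → ι → ℝ} {v : ι → ℕ}
    (h : TriBasis Γ t (fun i => 1 / (v i : ℝ))) (ht : ∀ i i', |t i i'| ≤ 1)
    (hZ : ∀ i, Pi.single i (1 : ℝ) ∈ Γ) (s : ι → ℕ) {S : ℕ} (hS : 1 ≤ S) (hs : ∀ i, S ≤ s i)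
    (y0 : ι → ℝ) :
    ∃ y : ι → ℝ, (∀ i, |y i - y0 i| ≤ Fintype.card ι / S) ∧
      (∀ β : ℤ, β • y ∈ Γ → ((∏ i, s i ^ 2 : ℕ) : ℤ) ∣ β) ∧
      ∃ t', TriBasis (Γ ⊔ AddSubgroup.zmultiples y) t'
        (fun i => 1 / ((v i * s i ^ 2 : ℕ) : ℝ)) ∧ ∀ i i', |t' i i'| ≤ 1 := by
  classical
  have hs1 : ∀ i, 1 ≤ s i := fun i => hS.trans (hs i)
  have hsR : ∀ i, (0 : ℝ) < s i := fun i => by exact_mod_cast hs1 i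
  let z : ι → ℤ := fun i => (s i : ℤ) ^ 2
  have hz0 : ∀ i, 0 < z i := fun i => by have := hs1 i; positivity
  let Zc : ι → ℤ := fun i => ∏ k ∈ Finset.Ici i, z k
  let Zo : ι → ℤ := fun i => ∏ k ∈ Finset.Ioi i, z k
  have hZc : ∀ i, Zc i = z i * Zo i := fun i => by
    simp only [Zc, Zo]
    rw [← Finset.Ioi_insert, Finset.prod_insert (by simp)]
  have hZo0 : ∀ i, 0 < Zo i := fun i => Finset.prod_pos fun k _ => hz0 k
  have hZc0 : ∀ i, 0 < Zc i := fun i => Finset.prod_pos fun k _ => hz0 k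
  have hZcR : ∀ i, (0 : ℝ) < Zc i := fun i => by exact_mod_cast hZc0 i
  have hZdvd : ∀ i i', i < i' → Zc i' ∣ Zo i := fun i i' hi =>
    Finset.prod_dvd_prod_of_subset _ _ _ fun k hk =>
      Finset.mem_Ioi.2 (hi.trans_le (Finset.mem_Ici.1 hk))
  -- the coordinates of the target in the basis
  obtain ⟨lam, hlam⟩ : ∃ lam : ι → ℝ, ∀ i', ∑ k, lam k * t k i' = y0 i' := by
    have hdet : IsUnit (Matrix.of t).det := by
      rw [isUnit_iff_ne_zero, det_of_tri (t := Matrix.of t) h.tri]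
      exact Finset.prod_ne_zero_iff.2 fun i _ => by
        simp only [Matrix.of_apply]; rw [h.diag i]; exact (h.pos i).ne'
    refine ⟨Matrix.vecMul y0 (Matrix.of t)⁻¹, fun i' => ?_⟩
    have : Matrix.vecMul (Matrix.vecMul y0 (Matrix.of t)⁻¹) (Matrix.of t) = y0 := by
      rw [Matrix.vecMul_vecMul, Matrix.nonsing_inv_mul _ hdet, Matrix.vecMul_one]
    exact congrFun this i'
  -- numerators congruent to `1` modulo `s i`
  let μ : ι → ℤ := fun i => 1 + s i * round ((Zc i * lam i - 1) / (s i : ℝ))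
  have hμ : ∀ i, |(μ i : ℝ) / Zc i - lam i| ≤ 1 / S := by
    intro i
    have h1 := abs_sub_round (((Zc i : ℝ) * lam i - 1) / (s i : ℝ))
    have h2 : (μ i : ℝ) / Zc i - lam i =
        -(s i / Zc i) * ((Zc i * lam i - 1) / (s i : ℝ) -
          round ((Zc i * lam i - 1) / (s i : ℝ))) := by
      have := (hZcR i).ne'
      have := (hsR i).ne'
      simp only [μ]; push_cast; field_simp; ring
    rw [h2, abs_mul, abs_neg, abs_of_pos (div_pos (hsR i) (hZcR i))]
    have h3 : (s i : ℝ) / Zc i ≤ 1 / S := by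
      rw [div_le_div_iff₀ (hZcR i) (by exact_mod_cast hS), one_mul]
      have h4 : (s i : ℤ) * S ≤ Zc i := by
        rw [hZc]
        have h5 : (1 : ℤ) ≤ Zo i := hZo0 i
        have h6 : (S : ℤ) ≤ s i := by exact_mod_cast hs i
        have h7 : (s i : ℤ) * S ≤ z i := by simp only [z]; nlinarith
        nlinarith [hz0 i]
      exact_mod_cast h4
    have h5 : (0 : ℝ) ≤ s i / Zc i := (div_pos (hsR i) (hZcR i)).le
    nlinarith [abs_nonneg ((Zc i * lam i - 1) / (s i : ℝ) -
          round ((Zc i * lam i - 1) / (s i : ℝ)))]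
  have hco : ∀ i, IsCoprime (μ i) (z i) := by
    intro i
    refine IsCoprime.pow_right ?_
    exact ⟨1, -round ((Zc i * lam i - 1) / (s i : ℝ)), by simp only [μ]; ring⟩
  let y : ι → ℝ := fun i' => ∑ k, ((μ k : ℝ) / Zc k) * t k i'
  -- divisibility from the vanishing of the coordinates
  have hdvd : ∀ (c : ι → ℤ) (β : ℤ) (T : Finset ι), IsUpperSet (T : Set ι) →
      (∀ i ∈ T, (c i : ℝ) + β * (μ i / Zc i) = 0) → (∏ k ∈ T, z k) ∣ β := by
    intro c β T hT hc
    refine prod_dvd_of_tri (fun i => (hz0 i).ne') hco β T hT fun i hi => ⟨-c i, ?_⟩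
    have h1 := hc i hi
    have h2 : (β : ℝ) * μ i = Zc i * -c i := by
      have := (hZcR i).ne'
      field_simp at h1
      linarith
    exact_mod_cast h2
  have hcomb : ∀ (c : ι → ℤ) (β : ℤ) (i' : ι), (∑ i, c i • t i) i' + β * y i' =
      ∑ k, ((c k : ℝ) + β * (μ k / Zc k)) * t k i' := by
    intro c β i'
    simp only [y, Finset.sum_apply, Pi.smul_apply, Finset.mul_sum, ← Finset.sum_add_distrib]
    simp only [zsmul_eq_mul]
    refine Finset.sum_congr rfl fun k _ => by ring
  refine ⟨y, fun i => ?_, fun β hβ => ?_, ?_⟩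
  · rw [← hlam i]
    simp only [y]
    rw [← Finset.sum_sub_distrib]
    refine (Finset.abs_sum_le_sum_abs _ _).trans ?_
    refine (Finset.sum_le_sum (g := fun _ => 1 / (S : ℝ)) fun k _ => ?_).trans ?_
    · rw [← sub_mul, abs_mul]
      have := hμ k
      have := ht k i
      nlinarith [abs_nonneg ((μ k : ℝ) / Zc k - lam k), abs_nonneg (t k i)]
    · rw [Finset.sum_const, Finset.card_univ, nsmul_eq_mul]
      apply le_of_eq; ring
  · obtain ⟨c, hc⟩ := h.repr hβ
    have h0 : ∀ i', ∑ k, ((-c k : ℝ) + β * (μ k / Zc k)) * t k i' = 0 := by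
      intro i'
      have h1 := hcomb (fun k => -c k) β i'
      push_cast at h1
      rw [← h1]
      simp only [neg_smul, Finset.sum_neg_distrib]
      rw [← hc]
      simp
    have h1 := hdvd (fun k => -c k) β Finset.univ (by simpa using isUpperSet_univ) (fun i _ => by
      have h2 := (tri_coeff h.pos h.tri h.diag _ i (fun i' _ => h0 i')).2
      rw [h0 i] at h2
      push_cast
      exact (mul_eq_zero.1 h2.symm).resolve_right (h.pos i).ne')
    push_cast
    exact h1
  · set Γ' := Γ ⊔ AddSubgroup.zmultiples y with hΓ'
    have hΓΓ' : Γ ≤ Γ' := le_sup_left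
    have hyΓ' : y ∈ Γ' := (le_sup_right : _ ≤ Γ') (AddSubgroup.mem_zmultiples y)
    -- the combination of `y` and the old basis whose coordinate `i` is `μ i / (z i * v i)`
    let u : ι → ι → ℝ := fun i =>
      Zo i • y - ∑ k ∈ Finset.Ioi i, (μ k * (Zo i / Zc k)) • t k
    have huΓ : ∀ i, u i ∈ Γ' := fun i => Γ'.sub_mem (Γ'.zsmul_mem hyΓ' _)
      (Γ'.sum_mem fun k _ => Γ'.zsmul_mem (hΓΓ' (h.mem k)) _)
    have hu : ∀ i i', u i i' = ∑ k, (if i < k then 0 else Zo i * ((μ k : ℝ) / Zc k)) * t k i' := by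
      intro i i'
      have e : ∑ k ∈ Finset.Ioi i, (μ k * (Zo i / Zc k)) • t k i' =
          ∑ k, (if i < k then Zo i * ((μ k : ℝ) / Zc k) * t k i' else 0) := by
        rw [← Finset.sum_filter]
        refine Finset.sum_congr (by ext; simp) fun k hk => ?_
        have hk' : i < k := by simpa using hk
        have := (hZcR k).ne'
        rw [zsmul_eq_mul, Int.cast_mul, Int.cast_div (hZdvd i k hk') this]
        field_simp
      simp only [u, Pi.sub_apply, Pi.smul_apply, Finset.sum_apply, y]
      rw [e, zsmul_eq_mul, Finset.mul_sum, ← Finset.sum_sub_distrib]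
      refine Finset.sum_congr rfl fun k _ => ?_
      split_ifs <;> ring
    have hutri : ∀ i i', i < i' → u i i' = 0 := by
      intro i i' hi
      rw [hu]
      refine Finset.sum_eq_zero fun k _ => ?_
      split_ifs with hk
      · ring
      · rw [h.tri k i' ((not_lt.1 hk).trans_lt hi), mul_zero]
    have hudiag : ∀ i, u i i = μ i / (z i * v i) := by
      intro i
      rw [hu, Finset.sum_eq_single i (fun k _ hki => ?_) (by simp), if_neg (lt_irrefl _), h.diag]
      · have h1 : (0 : ℝ) < z i := by exact_mod_cast hz0 i
        have h2 : (0 : ℝ) < Zo i := by exact_mod_cast hZo0 i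
        have h3 : (0 : ℝ) < v i := one_div_pos.1 (h.pos i)
        rw [hZc]; push_cast; field_simp
      · rcases lt_or_gt_of_ne hki with h1 | h1
        · rw [h.tri k i h1, mul_zero]
        · rw [if_pos h1, zero_mul]
    choose p q hpq using hco
    have hv : ∀ i, (0 : ℝ) < v i := fun i => one_div_pos.1 (h.pos i)
    have htri' : TriBasis Γ' (fun i => p i • u i + q i • t i)
        (fun i => 1 / ((v i * s i ^ 2 : ℕ) : ℝ)) := by
      refine ⟨fun i => ?_, fun i => ?_, fun i i' hi => ?_, fun i => ?_, fun x hx i hi => ?_⟩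
      · exact Γ'.add_mem (Γ'.zsmul_mem (huΓ i) _) (Γ'.zsmul_mem (hΓΓ' (h.mem i)) _)
      · have := hv i
        have := hsR i
        push_cast; positivity
      · rw [Pi.add_apply, Pi.smul_apply, Pi.smul_apply, hutri i i' hi, h.tri i i' hi]; simp
      · rw [Pi.add_apply, Pi.smul_apply, Pi.smul_apply, hudiag i, h.diag i]
        have h1 := hv i
        have h2 := hsR i
        have h3 : (p i : ℝ) * μ i + q i * (s i : ℝ) ^ 2 = 1 := by
          have := hpq i
          simp only [z] at this
          exact_mod_cast this
        simp only [zsmul_eq_mul, z]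
        push_cast
        field_simp
        linarith
      · obtain ⟨γ, hγ, w, hw, rfl⟩ := AddSubgroup.mem_sup.1 hx
        obtain ⟨β, rfl⟩ := AddSubgroup.mem_zmultiples_iff.1 hw
        obtain ⟨c, hc⟩ := h.repr hγ
        have hco' : ∀ i', (γ + β • y) i' = ∑ k, ((c k : ℝ) + β * (μ k / Zc k)) * t k i' := by
          intro i'
          rw [← hcomb, ← hc]; simp
        obtain ⟨h1, h2⟩ := tri_coeff h.pos h.tri h.diag
          (fun k => (c k : ℝ) + β * (μ k / Zc k)) i (fun i' hi' => by rw [← hco']; exact hi i' hi')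
        obtain ⟨β1, hβ1⟩ := hdvd c β (Finset.Ioi i)
          (by rw [Finset.coe_Ioi]; exact isUpperSet_Ioi i)
          (fun k hk => h1 k (Finset.mem_Ioi.1 hk))
        refine ⟨c i * z i + β1 * μ i, ?_⟩
        rw [hco', h2]
        have hβR : (β : ℝ) = Zo i * β1 := by exact_mod_cast hβ1
        have h4 : (0 : ℝ) < Zo i := by exact_mod_cast hZo0 i
        have h5 := hv i
        have h6 := hsR i
        rw [hβR, hZc]
        simp only [z]
        push_cast
        field_simp
    obtain ⟨t', ht', hb⟩ := htri'.reduce (fun i => hΓΓ' (hZ i))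
    exact ⟨t', ht', hb⟩

/-! ### Badly approximable matrices with prescribed weights -/

/-- The group generated by `ℤ ^ m` and the columns of `E`. -/
def colLat {m n : ℕ} (E : Fin m → Fin n → ℝ) : AddSubgroup (Fin m → ℝ) where
  carrier := {x | ∃ (a : Fin m → ℤ) (b : Fin n → ℤ), ∀ i, x i = a i + ∑ j, E i j * b j}
  zero_mem' := ⟨0, 0, by simp⟩
  add_mem' := by
    rintro x y ⟨a, b, h⟩ ⟨a', b', h'⟩
    refine ⟨a + a', b + b', fun i => ?_⟩
    rw [Pi.add_apply, h, h']
    simp only [Pi.add_apply, Int.cast_add, mul_add, Finset.sum_add_distrib]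
    exact add_add_add_comm _ _ _ _
  neg_mem' := by
    rintro x ⟨a, b, h⟩
    refine ⟨-a, -b, fun i => ?_⟩
    rw [Pi.neg_apply, h]
    simp only [Pi.neg_apply, Int.cast_neg, mul_neg, Finset.sum_neg_distrib]
    exact neg_add _ _

lemma mem_colLat {m n : ℕ} {E : Fin m → Fin n → ℝ} {x : Fin m → ℝ} :
    x ∈ colLat E ↔
      ∃ (a : Fin m → ℤ) (b : Fin n → ℤ), ∀ i, x i = a i + ∑ j, E i j * b j := Iff.rfl

lemma single_mem_colLat {m n : ℕ} (E : Fin m → Fin n → ℝ) (i : Fin m) :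
    Pi.single i (1 : ℝ) ∈ colLat E := by
  refine ⟨Pi.single i 1, 0, fun i' => ?_⟩
  rcases eq_or_ne i' i with rfl | h
  · simp
  · simp [h]

lemma colLat_snoc {m n : ℕ} (E : Fin m → Fin n → ℝ) (y : Fin m → ℝ) :
    colLat (fun i => Fin.snoc (α := fun _ => ℝ) (E i) (y i) : Fin m → Fin (n + 1) → ℝ) =
      colLat E ⊔ AddSubgroup.zmultiples y := by
  ext x
  rw [mem_colLat, AddSubgroup.mem_sup]
  constructor
  · rintro ⟨a, b, h⟩
    refine ⟨fun i => a i + ∑ j, E i j * b (Fin.castSucc j), ⟨a, fun j => b (Fin.castSucc j),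
      fun i => rfl⟩, b (Fin.last n) • y, AddSubgroup.zsmul_mem_zmultiples _ _, ?_⟩
    funext i
    rw [h, Fin.sum_univ_castSucc]
    simp only [Fin.snoc_castSucc, Fin.snoc_last, Pi.add_apply, Pi.smul_apply]
    simp only [zsmul_eq_mul]
    ring
  · rintro ⟨γ, ⟨a, b, h⟩, w, hw, rfl⟩
    obtain ⟨β, rfl⟩ := AddSubgroup.mem_zmultiples_iff.1 hw
    refine ⟨a, Fin.snoc (α := fun _ => ℤ) b β, fun i => ?_⟩
    rw [Fin.sum_univ_castSucc]
    simp only [Fin.snoc_castSucc, Fin.snoc_last, Pi.add_apply, Pi.smul_apply, h]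
    simp only [zsmul_eq_mul]
    ring

/-- Near any real matrix `E0` there is a matrix `E` whose lattice `colLat E` has a triangular basis
with diagonal `1 / ∏ j, s i j ^ 2`, while in an integer relation `a + E b = 0` the last nonzero
coordinate `b j` is divisible by `∏ i, s i j ^ 2`. It is built one column at a time. -/
lemma exists_weighted (m : ℕ) {S : ℕ} (hS : 1 ≤ S) : ∀ (n : ℕ) (s : Fin m → Fin n → ℕ),
    (∀ i j, S ≤ s i j) → ∀ E0 : Fin m → Fin n → ℝ, ∃ E : Fin m → Fin n → ℝ,
      (∀ i j, |E i j - E0 i j| ≤ m / S) ∧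
      (∃ t, TriBasis (colLat E) t (fun i => 1 / ((∏ j, s i j ^ 2 : ℕ) : ℝ)) ∧
        ∀ i i', |t i i'| ≤ 1) ∧
      ∀ (a : Fin m → ℤ) (b : Fin n → ℤ), (∀ i, (a i : ℝ) + ∑ j, E i j * b j = 0) →
        ∀ j, (∀ j', j < j' → b j' = 0) → ((∏ i, s i j ^ 2 : ℕ) : ℤ) ∣ b j := by
  intro n
  induction n with
  | zero =>
    intro s _ E0
    refine ⟨E0, fun i j => j.elim0, ⟨fun i => Pi.single i 1, ⟨?_, ?_, ?_, ?_, ?_⟩, ?_⟩,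
      fun a b _ j => j.elim0⟩
    · exact fun i => single_mem_colLat E0 i
    · intro i; simp
    · intro i i' h; simp [h.ne']
    · intro i; simp
    · rintro x ⟨a, b, h⟩ i -
      exact ⟨a i, by simp [h]⟩
    · intro i i'
      rcases eq_or_ne i' i with rfl | h
      · simp
      · simp [h]
  | succ n ih =>
    intro s hs E0
    obtain ⟨E, hE, ⟨t, ht, htb⟩, hdiv⟩ := ih (fun i j => s i (Fin.castSucc j))
      (fun i j => hs i _) (fun i j => E0 i (Fin.castSucc j))
    obtain ⟨y, hy, hydiv, t', ht', htb'⟩ := tri_step ht htb (single_mem_colLat E)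
      (fun i => s i (Fin.last n)) hS (fun i => hs i _) (fun i => E0 i (Fin.last n))
    refine ⟨fun i => Fin.snoc (α := fun _ => ℝ) (E i) (y i), fun i j => ?_, ⟨t', ?_, htb'⟩, ?_⟩
    · refine Fin.lastCases ?_ (fun j => ?_) j
      · simpa using hy i
      · simpa using hE i j
    · rw [colLat_snoc]
      simpa only [Fin.prod_univ_castSucc] using ht'
    · intro a b h0 j
      simp only [Fin.sum_univ_castSucc, Fin.snoc_castSucc, Fin.snoc_last] at h0
      refine Fin.lastCases (fun _ => ?_) (fun j hj => ?_) j
      · refine hydiv _ ⟨-a, fun j => -b (Fin.castSucc j), fun i => ?_⟩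
        have := h0 i
        simp only [Pi.smul_apply, zsmul_eq_mul, Pi.neg_apply, Int.cast_neg, mul_neg,
          Finset.sum_neg_distrib]
        linarith
      · have hl : b (Fin.last n) = 0 := hj _ (Fin.castSucc_lt_last j)
        refine hdiv a (fun j => b (Fin.castSucc j)) (fun i => ?_) j (fun j' hj' => hj _ ?_)
        · have := h0 i
          rw [hl] at this
          simpa using this
        · exact Fin.castSucc_lt_castSucc_iff.2 hj'

/-! ### Existence of triangular bases -/

/-- A subgroup of `R⁻¹ ℤ ^ ι` in which every coordinate `i` is the leading one of some vector has a
triangular basis: take a vector with the least positive coordinate `i` among those vanishing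
above `i`. -/
lemma exists_triBasis {ι : Type*} [LinearOrder ι] (G : AddSubgroup (ι → ℝ)) {R : ℝ}
    (hR : 0 < R) (hint : ∀ x ∈ G, ∀ i, ∃ z : ℤ, R * x i = z)
    (hne : ∀ i, ∃ x ∈ G, (∀ i', i < i' → x i' = 0) ∧ x i ≠ 0) :
    ∃ t δ, TriBasis G t δ := by
  have key : ∀ i, ∃ x ∈ G, (∀ i', i < i' → x i' = 0) ∧ 0 < x i ∧
      ∀ y ∈ G, (∀ i', i < i' → y i' = 0) → ∃ c : ℤ, y i = c * x i := by
    intro i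
    let H : AddSubgroup ℤ :=
      { carrier := {z | ∃ x ∈ G, (∀ i', i < i' → x i' = 0) ∧ R * x i = z}
        zero_mem' := ⟨0, G.zero_mem, fun _ _ => rfl, by simp⟩
        add_mem' := by
          rintro z w ⟨x, hx, hx0, hxz⟩ ⟨y, hy, hy0, hyw⟩
          refine ⟨x + y, G.add_mem hx hy, fun i' h => ?_, ?_⟩
          · rw [Pi.add_apply, hx0 _ h, hy0 _ h, add_zero]
          · rw [Pi.add_apply, mul_add, hxz, hyw]; push_cast; rfl
        neg_mem' := by
          rintro z ⟨x, hx, hx0, hxz⟩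
          refine ⟨-x, G.neg_mem hx, fun i' h => ?_, ?_⟩
          · rw [Pi.neg_apply, hx0 _ h, neg_zero]
          · rw [Pi.neg_apply, mul_neg, hxz]; push_cast; rfl }
    obtain ⟨a, ha⟩ := Int.subgroup_cyclic H
    have hmem : ∀ z, z ∈ H ↔ ∃ c : ℤ, c * a = z := by
      intro z
      rw [ha, AddSubgroup.mem_closure_singleton]
      simp
    have hgen : ∀ y ∈ G, (∀ i', i < i' → y i' = 0) → ∃ c : ℤ, R * y i = c * a := by
      intro y hy hy0
      obtain ⟨z, hz⟩ := hint y hy i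
      obtain ⟨c, hc⟩ := (hmem z).1 ⟨y, hy, hy0, hz⟩
      exact ⟨c, by rw [hz, ← hc]; push_cast; rfl⟩
    have haH : a ∈ H := (hmem a).2 ⟨1, one_mul a⟩
    obtain ⟨x, hx, hx0, hxa⟩ := haH
    have hane : (a : ℝ) ≠ 0 := by
      intro h0
      obtain ⟨y, hy, hy0, hyi⟩ := hne i
      obtain ⟨c, hc⟩ := hgen y hy hy0
      rw [h0, mul_zero] at hc
      exact (mul_ne_zero hR.ne' hyi) hc
    rcases lt_or_gt_of_ne hane with h1 | h1
    · refine ⟨-x, G.neg_mem hx, fun i' h => by rw [Pi.neg_apply, hx0 _ h, neg_zero], ?_, ?_⟩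
      · rw [Pi.neg_apply]; nlinarith
      · intro y hy hy0
        obtain ⟨c, hc⟩ := hgen y hy hy0
        refine ⟨-c, mul_left_cancel₀ hR.ne' ?_⟩
        rw [hc, ← hxa]; push_cast; rw [Pi.neg_apply]; ring
    · refine ⟨x, hx, hx0, ?_, ?_⟩
      · by_contra h
        nlinarith
      · intro y hy hy0
        obtain ⟨c, hc⟩ := hgen y hy hy0
        refine ⟨c, mul_left_cancel₀ hR.ne' ?_⟩
        rw [hc, ← hxa]; ring
  choose t ht h0 hp hg using key
  exact ⟨t, fun i => t i i, ht, hp, h0, fun _ => rfl, fun x hx i hi => hg i x hx hi⟩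

/-! ### Choice of the weights -/

lemma exists_pos_root {x : ℝ} (hx : 0 < x) {n : ℕ} (hn : 0 < n) : ∃ y, 0 < y ∧ y ^ n = x :=
  ⟨x ^ ((n : ℝ)⁻¹), Real.rpow_pos_of_pos hx _, Real.rpow_inv_natCast_pow hx.le hn.ne'⟩

/-- A positive matrix with prescribed row products can have arbitrary column products, as long as
these have a smaller total product. -/
lemma exists_products {m n : ℕ} (hm : 0 < m) (hn : 0 < n) {α : Fin m → ℝ} {β : Fin n → ℝ}
    (hα : ∀ i, 0 < α i) (hβ : ∀ j, 0 < β j) (h : ∏ j, β j < ∏ i, α i) :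
    ∃ θ : Fin m → Fin n → ℝ, (∀ i j, 0 < θ i j) ∧ (∀ i, ∏ j, θ i j = α i) ∧
      ∀ j, β j < ∏ i, θ i j := by
  choose a ha0 ha using fun i => exists_pos_root (hα i) hn
  choose b hb0 hb using fun j => exists_pos_root (hβ j) hm
  have hW : 0 < ∏ j, b j := Finset.prod_pos fun j _ => hb0 j
  obtain ⟨ω, hω0, hω⟩ := exists_pos_root (inv_pos.2 hW) hn
  refine ⟨fun i j => a i * b j * ω, fun i j => mul_pos (mul_pos (ha0 i) (hb0 j)) hω0, fun i => ?_,
    fun j => ?_⟩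
  · rw [Finset.prod_mul_distrib, Finset.prod_mul_distrib, Finset.prod_const, Finset.prod_const,
      Finset.card_univ, Fintype.card_fin, ha, hω, mul_assoc, mul_inv_cancel₀ hW.ne', mul_one]
  · rw [Finset.prod_mul_distrib, Finset.prod_mul_distrib, Finset.prod_const, Finset.prod_const,
      Finset.card_univ, Fintype.card_fin, hb]
    have h1 : 1 < (∏ i, a i) * ω ^ m := by
      refine lt_of_pow_lt_pow_left₀ n
        (mul_pos (Finset.prod_pos fun i _ => ha0 i) (pow_pos hω0 m)).le ?_
      rw [one_pow, mul_pow, ← Finset.prod_pow, ← pow_mul, mul_comm m n, pow_mul, hω, inv_pow,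
        ← Finset.prod_pow]
      simp only [ha, hb]
      rw [← div_eq_mul_inv, one_lt_div (Finset.prod_pos fun j _ => hβ j)]
      exact h
    nlinarith [hβ j]

lemma floor_sqrt_sq {l z : ℝ} (hl : l < 1) (hz : 0 < z) (h : 2 / (1 - l) ≤ √z) :
    l * z ≤ ((⌊√z⌋₊ : ℕ) : ℝ) ^ 2 ∧ ((⌊√z⌋₊ : ℕ) : ℝ) ^ 2 ≤ z := by
  have h1 := Nat.floor_le (Real.sqrt_nonneg z)
  have h2 := (Nat.lt_floor_add_one (√z)).le
  have h3 := Real.sq_sqrt hz.le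
  have h4 : (0 : ℝ) ≤ (⌊√z⌋₊ : ℕ) := Nat.cast_nonneg _
  rw [div_le_iff₀ (by linarith)] at h
  have h5 := Real.sqrt_pos.2 hz
  constructor
  · nlinarith
  · nlinarith

/-- For large `X` there are integer weights whose squares have row products at most `α i * X ^ n`
and column products at least `β j * X ^ m`. They are obtained by rounding down the square roots of
`θ i j * X`, where `θ` comes from `exists_products`. -/
lemma exists_weights {m n : ℕ} (hm : 0 < m) (hn : 0 < n) {α : Fin m → ℝ} {β : Fin n → ℝ}
    (hα : ∀ i, 0 < α i) (hβ : ∀ j, 0 < β j) (h : ∏ j, β j < ∏ i, α i) (S : ℕ) :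
    ∃ X0 : ℝ, ∀ X : ℝ, X0 ≤ X → ∃ s : Fin m → Fin n → ℕ, (∀ i j, S ≤ s i j) ∧
      (∀ i, ((∏ j, s i j ^ 2 : ℕ) : ℝ) ≤ α i * X ^ n) ∧
      ∀ j, β j * X ^ m ≤ ((∏ i, s i j ^ 2 : ℕ) : ℝ) := by
  obtain ⟨θ, hθ0, hθα, hθβ⟩ := exists_products hm hn hα hβ h
  obtain ⟨l, hl0, hl1, hl⟩ : ∃ l : ℝ, 0 < l ∧ l < 1 ∧ ∀ j, β j ≤ l ^ m * ∏ i, θ i j := by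
    have ht : ∀ j, ∀ᶠ l : ℝ in nhdsWithin 1 (Set.Iio 1), β j ≤ l ^ m * ∏ i, θ i j := by
      intro j
      have : Filter.Tendsto (fun l : ℝ => l ^ m * ∏ i, θ i j) (nhdsWithin 1 (Set.Iio 1))
          (nhds (1 ^ m * ∏ i, θ i j)) :=
        (Continuous.tendsto (by fun_prop) 1).mono_left nhdsWithin_le_nhds
      rw [one_pow, one_mul] at this
      exact (this.eventually_const_lt (hθβ j)).mono fun _ => le_of_lt
    have h0 : ∀ᶠ l : ℝ in nhdsWithin 1 (Set.Iio 1), 0 < l :=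
      nhdsWithin_le_nhds (lt_mem_nhds one_pos)
    obtain ⟨l, h1, h2, h3⟩ :=
      (((Filter.eventually_all.2 ht).and h0).and self_mem_nhdsWithin).exists.imp
        fun l h => (⟨h.1.1, h.1.2, h.2⟩ : _ ∧ _ ∧ _)
    exact ⟨l, h2, h3, h1⟩
  set B : ℝ := max (2 / (1 - l)) S with hB
  have hB0 : 0 ≤ B := le_max_of_le_right (Nat.cast_nonneg _)
  refine ⟨1 + ∑ i, ∑ j, B ^ 2 / θ i j, fun X hX => ?_⟩
  have hnn : ∀ i j, 0 ≤ B ^ 2 / θ i j := fun i j => div_nonneg (sq_nonneg _) (hθ0 i j).le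
  have hX0 : 0 < X := by
    have : 0 ≤ ∑ i, ∑ j, B ^ 2 / θ i j :=
      Finset.sum_nonneg fun i _ => Finset.sum_nonneg fun j _ => hnn i j
    linarith
  have hz : ∀ i j, B ≤ √(X * θ i j) := by
    intro i j
    refine Real.le_sqrt_of_sq_le ?_
    have h1 : B ^ 2 / θ i j ≤ X := by
      have h2 := Finset.single_le_sum (f := fun j => B ^ 2 / θ i j) (fun j _ => hnn i j)
        (Finset.mem_univ j)
      have h3 := Finset.single_le_sum (f := fun i => ∑ j, B ^ 2 / θ i j)
        (fun i _ => Finset.sum_nonneg fun j _ => hnn i j) (Finset.mem_univ i)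
      linarith
    rwa [div_le_iff₀ (hθ0 i j)] at h1
  have hf := fun i j => floor_sqrt_sq hl1 (mul_pos hX0 (hθ0 i j)) ((le_max_left _ _).trans (hz i j))
  refine ⟨fun i j => ⌊√(X * θ i j)⌋₊, fun i j => Nat.le_floor ((le_max_right _ _).trans (hz i j)),
    fun i => ?_, fun j => ?_⟩
  · push_cast
    refine (Finset.prod_le_prod (fun j _ => sq_nonneg _) fun j _ => (hf i j).2).trans ?_
    rw [Finset.prod_mul_distrib, hθα, Finset.prod_const, Finset.card_univ, Fintype.card_fin,
      mul_comm]
  · push_cast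
    refine le_trans ?_ (Finset.prod_le_prod (fun i _ => ?_) fun i _ => (hf i j).1)
    · rw [Finset.prod_mul_distrib, Finset.prod_mul_distrib, Finset.prod_const, Finset.prod_const,
        Finset.card_univ, Fintype.card_fin]
      have := mul_le_mul_of_nonneg_right (hl j) (pow_pos hX0 m).le
      linarith
    · exact mul_nonneg hl0.le (mul_pos hX0 (hθ0 i j)).le

/-! ### Block triangular form of rational lattices -/

/-- The lattice spanned by the rows of a nonsingular rational matrix `h` is contained in one
spanned by the rows of a triangular matrix `t`, of no smaller covolume. -/
lemma exists_tri_of_rational {ι : Type*} [LinearOrder ι] [Fintype ι] {h : Matrix ι ι ℝ} {R : ℝ}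
    (hR : 0 < R) {W : Matrix ι ι ℤ} (hW : ∀ i j, R * h i j = W i j) (hdet : W.det ≠ 0) :
    ∃ (t : ι → ι → ℝ) (δ : ι → ℝ), (∀ i, 0 < δ i) ∧ (∀ i i', i < i' → t i i' = 0) ∧
      (∀ i, t i i = δ i) ∧ |h.det| ≤ ∏ i, δ i ∧
      ∀ c : ι → ℤ, ∃ c' : ι → ℤ, ∀ i, ∑ k, (c k : ℝ) * h k i = ∑ k, (c' k : ℝ) * t k i := by
  let G : AddSubgroup (ι → ℝ) :=
    { carrier := {x | ∃ c : ι → ℤ, ∀ i, x i = ∑ k, (c k : ℝ) * h k i}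
      zero_mem' := ⟨0, by simp⟩
      add_mem' := by
        rintro x y ⟨c, hc⟩ ⟨d, hd⟩
        refine ⟨c + d, fun i => ?_⟩
        simp [hc, hd, add_mul, Finset.sum_add_distrib]
      neg_mem' := by
        rintro x ⟨c, hc⟩
        exact ⟨-c, fun i => by simp [hc]⟩ }
  have hG : ∀ x, x ∈ G ↔ ∃ c : ι → ℤ, ∀ i, x i = ∑ k, (c k : ℝ) * h k i := fun _ => Iff.rfl
  obtain ⟨t, δ, ht⟩ := exists_triBasis G hR (by
      rintro x ⟨c, hc⟩ i
      refine ⟨∑ k, c k * W k i, ?_⟩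
      rw [hc, Finset.mul_sum]
      push_cast
      refine Finset.sum_congr rfl fun k _ => ?_
      rw [← hW]; ring) (by
      intro i
      have hx : ∀ i', ∑ k, (W.adjugate i k : ℝ) * h k i' = if i = i' then (W.det : ℝ) / R else 0 := by
        intro i'
        have h1 := congrFun (congrFun W.adjugate_mul i) i'
        rw [Matrix.mul_apply] at h1
        have h2 : ∑ k, (W.adjugate i k : ℝ) * (W k i' : ℝ) = if i = i' then (W.det : ℝ) else 0 := by
          have := congrArg (fun z : ℤ => (z : ℝ)) h1
          simp only [Int.cast_sum, Int.cast_mul] at this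
          rw [this, Matrix.smul_apply, Matrix.one_apply]
          split_ifs <;> simp
        have h3 : R * ∑ k, (W.adjugate i k : ℝ) * h k i' = if i = i' then (W.det : ℝ) else 0 := by
          rw [← h2, Finset.mul_sum]
          refine Finset.sum_congr rfl fun k _ => ?_
          rw [← hW]; ring
        split_ifs at h3 ⊢
        · rw [eq_div_iff hR.ne']; linarith
        · exact (mul_eq_zero.1 h3).resolve_left hR.ne'
      refine ⟨fun i' => ∑ k, (W.adjugate i k : ℝ) * h k i', ⟨fun k => W.adjugate i k, fun _ => rfl⟩,
        fun i' hi' => ?_, ?_⟩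
      · simp only [hx]; rw [if_neg hi'.ne]
      · simp only [hx, if_true]
        exact div_ne_zero (by exact_mod_cast hdet) hR.ne')
  refine ⟨t, δ, ht.pos, ht.tri, ht.diag, ?_, fun c => ?_⟩
  · choose C hC using fun i => (hG _).1 (ht.mem i)
    have hmul : (Matrix.of t) = (Matrix.of C).map (Int.cast : ℤ → ℝ) * h := by
      ext i j
      rw [Matrix.mul_apply, Matrix.of_apply, hC]
      rfl
    have hd : (Matrix.of t).det = ∏ i, δ i := by
      rw [det_of_tri (t := Matrix.of t) ht.tri]
      exact Finset.prod_congr rfl fun i _ => ht.diag i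
    have hp : 0 < ∏ i, δ i := Finset.prod_pos fun i _ => ht.pos i
    have hcast : ((Matrix.of C).map (Int.cast : ℤ → ℝ)).det = ((Matrix.of C).det : ℝ) :=
      (Int.cast_det _).symm
    rw [hmul, Matrix.det_mul, hcast] at hd
    have h1 : (1 : ℝ) ≤ |((Matrix.of C).det : ℝ)| := by
      have : (Matrix.of C).det ≠ 0 := by
        intro h0
        rw [h0] at hd; simp at hd; exact hp.ne hd
      exact_mod_cast Int.one_le_abs this
    rw [← abs_of_pos hp, ← hd, abs_mul]
    exact le_mul_of_one_le_left (abs_nonneg _) h1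
  · obtain ⟨c', hc'⟩ := ht.repr (x := fun i => ∑ k, (c k : ℝ) * h k i) ⟨c, fun _ => rfl⟩
    refine ⟨c', fun i => ?_⟩
    have := congrFun hc' i
    rw [this, Finset.sum_apply]
    simp only [Pi.smul_apply]
    simp only [zsmul_eq_mul]

/-- A rational lattice in `ℝ ^ m × ℝ ^ n` is contained in one with a block triangular basis, of no
smaller covolume: its vectors are `(a A + b B, b D)` with `a`, `b` integer vectors and `A`, `D`
triangular with diagonals `ξ`, `η`. -/
lemma exists_block_tri {m n : ℕ} {h : Matrix (Fin m ⊕ Fin n) (Fin m ⊕ Fin n) ℝ} {R : ℝ}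
    (hR : 0 < R) {W : Matrix (Fin m ⊕ Fin n) (Fin m ⊕ Fin n) ℤ}
    (hW : ∀ i j, R * h i j = W i j) (hdet : W.det ≠ 0) :
    ∃ (A : Fin m → Fin m → ℝ) (B : Fin n → Fin m → ℝ) (D : Fin n → Fin n → ℝ)
      (ξ : Fin m → ℝ) (η : Fin n → ℝ), (∀ i, 0 < ξ i) ∧ (∀ j, 0 < η j) ∧
      (∀ i i', i < i' → A i i' = 0) ∧ (∀ i, A i i = ξ i) ∧
      (∀ j j', j < j' → D j j' = 0) ∧ (∀ j, D j j = η j) ∧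
      |h.det| ≤ (∏ i, ξ i) * ∏ j, η j ∧
      ∀ c : Fin m ⊕ Fin n → ℤ, ∃ (a : Fin m → ℤ) (b : Fin n → ℤ),
        (∀ i, ∑ k, (c k : ℝ) * h k (Sum.inl i) =
          ∑ k, (a k : ℝ) * A k i + ∑ k, (b k : ℝ) * B k i) ∧
        (∀ j, ∑ k, (c k : ℝ) * h k (Sum.inr j) = ∑ k, (b k : ℝ) * D k j) := by
  let e : (Fin m ⊕ Fin n) ≃ (Fin m ⊕ₗ Fin n) := toLex
  obtain ⟨t, δ, hpos, htri, hdiag, hle, hrep⟩ :=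
    exists_tri_of_rational (h := Matrix.reindex e e h) (W := Matrix.reindex e e W) hR
      (fun i j => hW _ _) (by rwa [Matrix.det_reindex_self])
  rw [Matrix.det_reindex_self] at hle
  refine ⟨fun i i' => t (e (Sum.inl i)) (e (Sum.inl i')),
    fun j i => t (e (Sum.inr j)) (e (Sum.inl i)), fun j j' => t (e (Sum.inr j)) (e (Sum.inr j')),
    fun i => δ (e (Sum.inl i)), fun j => δ (e (Sum.inr j)), fun i => hpos _, fun j => hpos _,
    fun i i' hi => htri _ _ (Sum.Lex.inl_lt_inl_iff.2 hi), fun i => hdiag _,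
    fun j j' hj => htri _ _ (Sum.Lex.inr_lt_inr_iff.2 hj), fun j => hdiag _, ?_, fun c => ?_⟩
  · rwa [← Equiv.prod_comp e δ, Fintype.prod_sum_type] at hle
  · obtain ⟨c', hc'⟩ := hrep (fun k => c (e.symm k))
    have hx : ∀ i, ∑ k, (c k : ℝ) * h k i = ∑ k, (c' (e k) : ℝ) * t (e k) (e i) := by
      intro i
      have := hc' (e i)
      rw [← Equiv.sum_comp e, ← Equiv.sum_comp e] at this
      simpa using this
    refine ⟨fun i => c' (e (Sum.inl i)), fun j => c' (e (Sum.inr j)), fun i => ?_, fun j => ?_⟩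
    · rw [hx, Fintype.sum_sum_type]
    · rw [hx, Fintype.sum_sum_type, Finset.sum_eq_zero, zero_add]
      intro i _
      rw [htri _ _ (Sum.Lex.inl_lt_inr _ _), mul_zero]

/-! ### Steering a rational lattice away from short vectors -/

/-- If `κ ^ (m + n)` is less than the covolume of a rational lattice, then for every large `X` some
shear `y`, with entries within `1 / 4` of `1 / 2`, leaves no nonzero lattice vector in the open box
of sizes `κ / X ^ n` and `κ * X ^ m`. With the lattice in the form `(a A + b B, b D)`, the sheared
first component is `(a + b E) A`, where `E = (B + D y) A⁻¹`, so that one may choose `E` instead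
of `y`. -/
lemma steer_rational {m n : ℕ} (hm : 0 < m) (hn : 0 < n)
    {h : Matrix (Fin m ⊕ Fin n) (Fin m ⊕ Fin n) ℝ} {R : ℝ}
    (hR : 0 < R) {W : Matrix (Fin m ⊕ Fin n) (Fin m ⊕ Fin n) ℤ}
    (hW : ∀ i j, R * h i j = W i j) (hdet : W.det ≠ 0) {κ : ℝ} (hκ : 0 < κ)
    (hκh : κ ^ (m + n) < |h.det|) :
    ∃ X0 : ℝ, ∀ X : ℝ, X0 ≤ X → ∃ y : Fin m → Fin n → ℝ, (∀ i j, |y i j - 1 / 2| ≤ 1 / 4) ∧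
      ∀ c : Fin m ⊕ Fin n → ℤ,
        (∀ i, |∑ k, (c k : ℝ) * h k (Sum.inl i) +
          ∑ j, y i j * ∑ k, (c k : ℝ) * h k (Sum.inr j)| < κ * (X ^ n)⁻¹) →
        (∀ j, |∑ k, (c k : ℝ) * h k (Sum.inr j)| < κ * X ^ m) →
        ∀ l, ∑ k, (c k : ℝ) * h k l = 0 := by
  obtain ⟨A, B, D, ξ, η, hξ, hη, hA, hAd, hD, hDd, hle, hrep⟩ := exists_block_tri hR hW hdet
  have hηp : 0 < ∏ j, η j := Finset.prod_pos fun j _ => hη j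
  have hξp : 0 < ∏ i, ξ i := Finset.prod_pos fun i _ => hξ i
  have hAu : IsUnit (Matrix.of A).det := by
    rw [det_of_tri (t := Matrix.of A) hA, isUnit_iff_ne_zero]
    simp only [Matrix.of_apply, hAd]; exact hξp.ne'
  have hDu : IsUnit (Matrix.of D).det := by
    rw [det_of_tri (t := Matrix.of D) hD, isUnit_iff_ne_zero]
    simp only [Matrix.of_apply, hDd]; exact hηp.ne'
  -- `E0` is the matrix corresponding to the central shear `Y0`; choosing `S` large enough makes
  -- an error of `m / S` on `E0` amount to at most `1 / 4` on `Y0`.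
  let Y0 : Matrix (Fin n) (Fin m) ℝ := Matrix.of fun _ _ => 1 / 2
  let E0 : Matrix (Fin n) (Fin m) ℝ := (Matrix.of B + Matrix.of D * Y0) * (Matrix.of A)⁻¹
  have hE0 : E0 * Matrix.of A = Matrix.of B + Matrix.of D * Y0 := by
    rw [Matrix.mul_assoc, Matrix.nonsing_inv_mul _ hAu, Matrix.mul_one]
  let T : ℝ := ∑ j, ∑ j', ∑ i', ∑ i, |(Matrix.of D)⁻¹ j j'| * |A i' i|
  have hT : 0 ≤ T := Finset.sum_nonneg fun _ _ => Finset.sum_nonneg fun _ _ =>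
    Finset.sum_nonneg fun _ _ => Finset.sum_nonneg fun _ _ =>
      mul_nonneg (abs_nonneg _) (abs_nonneg _)
  set S : ℕ := ⌈4 * m * T⌉₊ + 1 with hS
  have hST : m / (S : ℝ) * T ≤ 1 / 4 := by
    have h1 := Nat.le_ceil (4 * m * T)
    have hS0 : (0 : ℝ) < S := by rw [hS]; positivity
    rw [div_mul_eq_mul_div, div_le_iff₀ hS0, hS]
    push_cast
    linarith
  obtain ⟨X0, hX0⟩ := exists_weights hm hn (α := fun i => ξ i / κ) (β := fun j => κ / η j)
    (fun i => div_pos (hξ i) hκ) (fun j => div_pos hκ (hη j)) (by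
      rw [Finset.prod_div_distrib, Finset.prod_div_distrib, Finset.prod_const, Finset.prod_const,
        Finset.card_univ, Finset.card_univ, Fintype.card_fin, Fintype.card_fin,
        div_lt_div_iff₀ hηp (pow_pos hκ m), ← pow_add, add_comm n m]
      exact hκh.trans_le hle) S
  refine ⟨max X0 1, fun X hX => ?_⟩
  have hXp : 0 < X := one_pos.trans_le ((le_max_right _ _).trans hX)
  obtain ⟨s, hsS, hs1, hs2⟩ := hX0 X ((le_max_left _ _).trans hX)
  obtain ⟨E, hEE0, ⟨t, ht, -⟩, hdiv⟩ := exists_weighted m (S := S) (by omega) n s hsS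
    (fun i j => E0 j i)
  let Et : Matrix (Fin n) (Fin m) ℝ := Matrix.of fun j i => E i j
  let Y : Matrix (Fin n) (Fin m) ℝ := (Matrix.of D)⁻¹ * (Et * Matrix.of A - Matrix.of B)
  have hY : Et * Matrix.of A = Matrix.of B + Matrix.of D * Y := by
    rw [← Matrix.mul_assoc, Matrix.mul_nonsing_inv _ hDu, Matrix.one_mul, add_sub_cancel]
  have hYY0 : Y - Y0 = (Matrix.of D)⁻¹ * ((Et - E0) * Matrix.of A) := by
    rw [Matrix.sub_mul, hY, hE0, add_sub_add_left_eq_sub, ← Matrix.mul_sub, ← Matrix.mul_assoc,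
      Matrix.nonsing_inv_mul _ hDu, Matrix.one_mul]
  refine ⟨fun i j => Y j i, fun i j => ?_, fun c hx hq => ?_⟩
  · have h1 : Y j i - 1 / 2 = (Y - Y0) j i := rfl
    rw [h1, hYY0, Matrix.mul_apply]
    have h2 : ∀ j' ∈ Finset.univ, |(Matrix.of D)⁻¹ j j' * ((Et - E0) * Matrix.of A) j' i| ≤
        ∑ i', m / (S : ℝ) * (|(Matrix.of D)⁻¹ j j'| * |A i' i|) := by
      intro j' _
      rw [Matrix.mul_apply, abs_mul]
      refine (mul_le_mul_of_nonneg_left (Finset.abs_sum_le_sum_abs _ _) (abs_nonneg _)).trans ?_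
      rw [Finset.mul_sum]
      refine Finset.sum_le_sum fun i' _ => ?_
      rw [abs_mul]
      have h3 : |(Et - E0) j' i'| ≤ m / (S : ℝ) := hEE0 i' j'
      have h4 : Matrix.of A i' i = A i' i := rfl
      rw [h4]
      calc _ = |(Et - E0) j' i'| * (|(Matrix.of D)⁻¹ j j'| * |A i' i|) := by ring
        _ ≤ _ := mul_le_mul_of_nonneg_right h3 (mul_nonneg (abs_nonneg _) (abs_nonneg _))
    refine (Finset.abs_sum_le_sum_abs _ _).trans ((Finset.sum_le_sum h2).trans ?_)
    simp only [← Finset.mul_sum]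
    refine le_trans (mul_le_mul_of_nonneg_left ?_ (by positivity)) hST
    refine le_trans ?_ (Finset.single_le_sum (f := fun j => ∑ j', ∑ i', ∑ i,
      |(Matrix.of D)⁻¹ j j'| * |A i' i|) (fun _ _ => Finset.sum_nonneg fun _ _ =>
      Finset.sum_nonneg fun _ _ => Finset.sum_nonneg fun _ _ =>
      mul_nonneg (abs_nonneg _) (abs_nonneg _)) (Finset.mem_univ j))
    refine Finset.sum_le_sum fun j' _ => ?_
    rw [Finset.mul_sum]
    exact Finset.sum_le_sum fun i' _ => Finset.single_le_sum
      (f := fun i => |(Matrix.of D)⁻¹ j j'| * |A i' i|)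
      (fun _ _ => mul_nonneg (abs_nonneg _) (abs_nonneg _)) (Finset.mem_univ i)
  · obtain ⟨a, b, ha, hb⟩ := hrep c
    set γ : Fin m → ℝ := fun i => (a i : ℝ) + ∑ j, E i j * b j with hγ
    have hγm : γ ∈ colLat E := ⟨a, b, fun i => rfl⟩
    have hxγ : ∀ i, ∑ k, (c k : ℝ) * h k (Sum.inl i) +
        ∑ j, Y j i * ∑ k, (c k : ℝ) * h k (Sum.inr j) = ∑ k, γ k * A k i := by
      intro i
      have h1 : ∀ j, ∑ i', E i' j * A i' i = B j i + ∑ j', D j j' * Y j' i := by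
        intro j
        have := congrFun (congrFun hY j) i
        rw [Matrix.add_apply, Matrix.mul_apply, Matrix.mul_apply] at this
        exact this
      have h2 : ∑ k, γ k * A k i = ∑ k, (a k : ℝ) * A k i +
          ∑ j, (b j : ℝ) * ∑ i', E i' j * A i' i := by
        simp only [hγ, add_mul, Finset.sum_add_distrib, Finset.sum_mul, Finset.mul_sum]
        rw [Finset.sum_comm (s := (Finset.univ : Finset (Fin n)))]
        congr 1
        refine Finset.sum_congr rfl fun _ _ => Finset.sum_congr rfl fun _ _ => ?_
        ring
      rw [h2, ha]
      simp only [h1, hb, mul_add, Finset.sum_add_distrib, Finset.mul_sum]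
      rw [Finset.sum_comm (s := (Finset.univ : Finset (Fin n))), add_assoc]
      congr 2
      refine Finset.sum_congr rfl fun _ _ => Finset.sum_congr rfl fun _ _ => ?_
      ring
    -- The coordinates of `γ` vanish one after the other, from the last: if those above `i` are
    -- zero, then `γ i` is a multiple of `1 / ∏ j, s i j ^ 2 ≥ κ / (ξ i * X ^ n)`.
    have hγ0 : ∀ i, γ i = 0 := by
      intro i
      induction i using WellFoundedGT.induction with
      | ind i ih =>
        obtain ⟨z, hz⟩ := ht.gen γ hγm i ih
        have h1 := hx i
        rw [hxγ, Finset.sum_eq_single i (fun k _ hk => ?_) (by simp), hAd] at h1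
        swap
        · rcases lt_or_gt_of_ne hk with h2 | h2
          · rw [hA k i h2, mul_zero]
          · rw [ih k h2, zero_mul]
        have h3 := hs1 i
        have hv : (0 : ℝ) < ((∏ j, s i j ^ 2 : ℕ) : ℝ) := by
          have := ht.pos i
          exact one_div_pos.1 this
        by_contra hne
        have hz1 : (1 : ℝ) ≤ |(z : ℝ)| := by
          have : z ≠ 0 := by rintro rfl; simp at hz; exact hne hz
          exact_mod_cast Int.one_le_abs this
        rw [hz, abs_mul, abs_mul, abs_of_pos (hξ i), abs_of_pos (one_div_pos.2 hv)] at h1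
        have hXn : 0 < X ^ n := pow_pos hXp n
        rw [div_mul_eq_mul_div, le_div_iff₀ hκ] at h3
        rw [← div_eq_mul_inv, lt_div_iff₀ hXn] at h1
        have h4 : κ * ((∏ j, s i j ^ 2 : ℕ) : ℝ) ≤ |(z : ℝ)| * (ξ i * X ^ n) := by
          have := mul_le_mul_of_nonneg_right hz1 (mul_pos (hξ i) hXn).le
          linarith
        have h5 := mul_lt_mul_of_pos_right h1 hv
        have h6 : |(z : ℝ)| * (1 / ((∏ j, s i j ^ 2 : ℕ) : ℝ)) * ξ i * X ^ n *
            ((∏ j, s i j ^ 2 : ℕ) : ℝ) = |(z : ℝ)| * (ξ i * X ^ n) := by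
          field_simp
        rw [h6] at h5
        linarith
    -- Now `a + b E = 0`, and if the coordinates of `b` above `j` are zero, then `b j` is a multiple
    -- of `∏ i, s i j ^ 2 ≥ κ * X ^ m / η j`.
    have hb0 : ∀ j, b j = 0 := by
      intro j
      induction j using WellFoundedGT.induction with
      | ind j ih =>
        obtain ⟨z, hz⟩ := hdiv a b hγ0 j ih
        have h1 := hq j
        rw [hb, Finset.sum_eq_single j (fun k _ hk => ?_) (by simp), hDd] at h1
        swap
        · rcases lt_or_gt_of_ne hk with h2 | h2
          · rw [hD k j h2, mul_zero]
          · rw [ih k h2, Int.cast_zero, zero_mul]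
        by_contra hne
        have hz1 : (1 : ℝ) ≤ |(z : ℝ)| := by
          have : z ≠ 0 := by rintro rfl; simp at hz; exact hne hz
          exact_mod_cast Int.one_le_abs this
        have h3 := hs2 j
        rw [div_mul_eq_mul_div, div_le_iff₀ (hη j)] at h3
        rw [hz, Int.cast_mul, abs_mul, abs_mul, abs_of_pos (hη j), Int.cast_natCast, Nat.abs_cast]
          at h1
        have h4 : (0 : ℝ) ≤ ((∏ i, s i j ^ 2 : ℕ) : ℝ) * η j :=
          mul_nonneg (Nat.cast_nonneg _) (hη j).le
        have := mul_le_mul_of_nonneg_right hz1 h4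
        linarith
    have ha0 : ∀ i, (a i : ℝ) = 0 := by
      intro i
      have := hγ0 i
      simpa [hγ, hb0] using this
    rintro (i | j)
    · rw [ha]; simp [ha0, hb0]
    · rw [hb]; simp [hb0]

/-! ### Perturbing the lattice -/

/-- The operator `1 + φ` is invertible when `φ` is small, with inverse of norm at most `2`. -/
lemma small_solve {m : ℕ} {φ : Fin m → Fin m → ℝ} {e : ℝ} (hφ : ∀ i k, |φ i k| ≤ e)
    (he : m * e ≤ 1 / 2) {b : Fin m → ℝ} {β : ℝ} (hβ : 0 ≤ β) (hb : ∀ i, |b i| ≤ β) :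
    ∃ z : Fin m → ℝ, (∀ i, z i + ∑ k, φ i k * z k = b i) ∧ ∀ i, |z i| ≤ 2 * β := by
  have key : ∀ (z b : Fin m → ℝ) (β : ℝ), 0 ≤ β → (∀ i, |b i| ≤ β) →
      (∀ i, z i + ∑ k, φ i k * z k = b i) → ∀ i, |z i| ≤ 2 * β := by
    intro z b β hβ hb hz i
    obtain ⟨i0, -, hi0⟩ := Finset.exists_max_image Finset.univ (fun i => |z i|)
      ⟨i, Finset.mem_univ i⟩
    have h1 : |∑ k, φ i0 k * z k| ≤ m * (e * |z i0|) := by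
      refine (Finset.abs_sum_le_sum_abs _ _).trans ((Finset.sum_le_card_nsmul _ _ (e * |z i0|)
        fun k _ => ?_).trans ?_)
      · rw [abs_mul]
        exact mul_le_mul (hφ _ _) (hi0 k (Finset.mem_univ k)) (abs_nonneg _)
          ((abs_nonneg _).trans (hφ i0 k))
      · simp
    have h2 : |z i0| ≤ β + 1 / 2 * |z i0| := by
      have h3 : z i0 = b i0 - ∑ k, φ i0 k * z k := by linarith [hz i0]
      have h4 := abs_sub (b i0) (∑ k, φ i0 k * z k)
      rw [← h3] at h4
      have h5 := mul_le_mul_of_nonneg_right he (abs_nonneg (z i0))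
      linarith [hb i0]
    exact (hi0 i (Finset.mem_univ i)).trans (by linarith)
  let F : Matrix (Fin m) (Fin m) ℝ := 1 + Matrix.of φ
  have hF : ∀ z i, (F.mulVec z) i = z i + ∑ k, φ i k * z k := by
    intro z i
    simp only [F, Matrix.add_mulVec, Matrix.one_mulVec]
    rfl
  have hdet : IsUnit F.det := by
    rw [isUnit_iff_ne_zero]
    intro h0
    obtain ⟨v, hv, hv0⟩ := Matrix.exists_mulVec_eq_zero_iff.2 h0
    refine hv (funext fun i => ?_)
    have := key v 0 0 le_rfl (by simp) (fun i => by rw [← hF, hv0]) i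
    simpa using this
  refine ⟨F⁻¹.mulVec b, ?_⟩
  have h1 : ∀ i, (F⁻¹.mulVec b) i + ∑ k, φ i k * (F⁻¹.mulVec b) k = b i := by
    intro i
    rw [← hF, Matrix.mulVec_mulVec, Matrix.mul_nonsing_inv _ hdet, Matrix.one_mulVec]
  exact ⟨h1, key _ b β hβ hb h1⟩

lemma abs_sum_mul_le {ι : Type*} [Fintype ι] {f g : ι → ℝ} {a b : ℝ} (hf : ∀ i, |f i| ≤ a)
    (hg : ∀ i, |g i| ≤ b) : |∑ i, f i * g i| ≤ Fintype.card ι * (a * b) := by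
  refine (Finset.abs_sum_le_sum_abs _ _).trans ((Finset.sum_le_card_nsmul _ _ (a * b)
        fun k _ => ?_).trans ?_)
  · rw [abs_mul]
    exact mul_le_mul (hf _) (hg _) (abs_nonneg _) ((abs_nonneg _).trans (hf k))
  · simp

/-- A small linear perturbation `1 + ε` of `ℝ ^ m × ℝ ^ n` can be absorbed in a small change of
the shear `y`, up to a factor close to `1` in the sizes of `x + y q` and `q`. -/
lemma absorb_perturbation {m n : ℕ} {ε : Fin m ⊕ Fin n → Fin m ⊕ Fin n → ℝ} {e T : ℝ}
    (he : ∀ k l, |ε k l| ≤ e) (he0 : 0 ≤ e) (hT : T = 2 * (m + 1) * (n + 1) * e) (hT1 : T ≤ 1 / 8)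
    {y : Fin m → Fin n → ℝ} (hy : ∀ i j, |y i j - 1 / 2| ≤ 1 / 4) :
    ∃ z : Fin m → Fin n → ℝ, (∀ i j, |z i j - 1 / 2| ≤ 3 / 8) ∧
      ∀ (w : Fin m ⊕ Fin n → ℝ) (u v : ℝ), u ≤ v →
        (∀ i, |w (Sum.inl i) + ∑ j, z i j * w (Sum.inr j)| ≤ u) → (∀ j, |w (Sum.inr j)| ≤ v) →
        (∀ i, |(w (Sum.inl i) + ∑ k, w k * ε k (Sum.inl i)) +
          ∑ j, y i j * (w (Sum.inr j) + ∑ k, w k * ε k (Sum.inr j))| ≤ (1 + T) * u) ∧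
        ∀ j, |w (Sum.inr j) + ∑ k, w k * ε k (Sum.inr j)| ≤ (1 + T) * v := by
  have hy1 : ∀ i j, |y i j| ≤ 1 := fun i j => by
    have := abs_le.1 (hy i j)
    rw [abs_le]; constructor <;> linarith
  let φ : Fin m → (Fin m ⊕ Fin n) → ℝ := fun i l =>
    ε l (Sum.inl i) + ∑ j, y i j * ε l (Sum.inr j)
  have hφ : ∀ i l, |φ i l| ≤ (n + 1) * e := by
    intro i l
    have h1 := abs_sum_mul_le (fun j => hy1 i j) (fun j => he l (Sum.inr j))
    rw [Fintype.card_fin, one_mul] at h1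
    refine (abs_add_le _ _).trans ?_
    linarith [he l (Sum.inl i)]
  have hm0 : (0 : ℝ) ≤ m := Nat.cast_nonneg m
  have hn0 : (0 : ℝ) ≤ n := Nat.cast_nonneg n
  have hmne : 0 ≤ m * ((n + 1) * e) := by positivity
  have hne : 0 ≤ (n + 1) * e := by positivity
  choose d hd hd1 using fun j => small_solve (φ := fun i k => φ i (Sum.inl k))
    (e := (n + 1) * e) (fun i k => hφ i _) (by linarith)
    (b := fun i => φ i (Sum.inr j) - ∑ k, φ i (Sum.inl k) * y k j) (β := (m + 1) * ((n + 1) * e))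
    (by positivity) (fun i => by
      have h1 := abs_sum_mul_le (fun k : Fin m => hφ i (Sum.inl k)) (fun k => hy1 k j)
      rw [Fintype.card_fin, mul_one] at h1
      refine (abs_sub _ _).trans ?_
      linarith [hφ i (Sum.inr j)])
  let z : Fin m → Fin n → ℝ := fun i j => y i j + d j i
  have hz : ∀ i j, |z i j - 1 / 2| ≤ 3 / 8 := by
    intro i j
    have h1 := abs_le.1 (hd1 j i)
    have h2 := abs_le.1 (hy i j)
    simp only [z]
    rw [abs_le]; constructor <;> linarith
  have hz1 : ∀ i j, |z i j| ≤ 1 := fun i j => by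
    have := abs_le.1 (hz i j)
    rw [abs_le]; constructor <;> linarith
  have hrel : ∀ i j, z i j + ∑ k, φ i (Sum.inl k) * z k j = y i j + φ i (Sum.inr j) := by
    intro i j
    have := hd j i
    simp only [z, mul_add, Finset.sum_add_distrib]
    linarith
  refine ⟨z, hz, fun w u v huv hu hv => ⟨fun i => ?_, fun j => ?_⟩⟩
  · set p : Fin m → ℝ := fun i => w (Sum.inl i) + ∑ j, z i j * w (Sum.inr j) with hp
    have e1 : (w (Sum.inl i) + ∑ k, w k * ε k (Sum.inl i)) +
        ∑ j, y i j * (w (Sum.inr j) + ∑ k, w k * ε k (Sum.inr j)) =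
        w (Sum.inl i) + ∑ j, y i j * w (Sum.inr j) + ∑ l, φ i l * w l := by
      simp only [φ, add_mul, mul_add, Finset.sum_add_distrib, Finset.mul_sum, Finset.sum_mul]
      rw [Finset.sum_comm (s := (Finset.univ : Finset (Fin n)))]
      simp only [mul_comm (w _) (ε _ _), mul_assoc]
      ring
    have e2 : ∑ j, y i j * w (Sum.inr j) + ∑ j, φ i (Sum.inr j) * w (Sum.inr j) =
        ∑ j, z i j * w (Sum.inr j) + ∑ k, φ i (Sum.inl k) * ∑ j, z k j * w (Sum.inr j) := by
      rw [← Finset.sum_add_distrib]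
      simp only [← add_mul, ← hrel]
      simp only [add_mul, Finset.sum_add_distrib, Finset.mul_sum, Finset.sum_mul]
      rw [Finset.sum_comm (s := (Finset.univ : Finset (Fin n)))]
      simp only [mul_assoc]
    have e3 : (w (Sum.inl i) + ∑ k, w k * ε k (Sum.inl i)) +
        ∑ j, y i j * (w (Sum.inr j) + ∑ k, w k * ε k (Sum.inr j)) =
        p i + ∑ k, φ i (Sum.inl k) * p k := by
      rw [e1, Fintype.sum_sum_type]
      simp only [hp, mul_add, Finset.sum_add_distrib]
      linarith
    have h1 := abs_sum_mul_le (fun k : Fin m => hφ i (Sum.inl k)) hu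
    rw [Fintype.card_fin] at h1
    have hu0 : 0 ≤ u := (abs_nonneg _).trans (hu i)
    rw [e3]
    refine (abs_add_le _ _).trans ?_
    have h2 := hu i
    have h3 : m * ((n + 1) * e * u) ≤ T * u := by
      rw [← mul_assoc]
      refine mul_le_mul_of_nonneg_right ?_ hu0
      rw [hT]; linarith
    linarith
  · have hv0 : 0 ≤ v := (abs_nonneg _).trans (hv j)
    have hx : ∀ i, |w (Sum.inl i)| ≤ (n + 1) * v := by
      intro i
      have h1 := abs_sum_mul_le (hz1 i) hv
      rw [Fintype.card_fin, one_mul] at h1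
      have h2 := abs_sub (w (Sum.inl i) + ∑ j, z i j * w (Sum.inr j)) (∑ j, z i j * w (Sum.inr j))
      rw [add_sub_cancel_right] at h2
      linarith [hu i]
    have h1 := abs_sum_mul_le hx (fun i : Fin m => he (Sum.inl i) (Sum.inr j))
    have h2 := abs_sum_mul_le hv (fun i : Fin n => he (Sum.inr i) (Sum.inr j))
    rw [Fintype.card_fin] at h1 h2
    rw [Fintype.sum_sum_type]
    refine (abs_add_le _ _).trans ((add_le_add_right (abs_add_le _ _) _).trans ?_)
    have h3 : m * ((n + 1) * v * e) + n * (v * e) ≤ T * v := by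
      have : T * v - (m * ((n + 1) * v * e) + n * (v * e)) = v * e * ((m + 1) * (n + 1) + 1) := by
        rw [hT]; ring
      have h4 : 0 ≤ v * e * ((m + 1) * (n + 1) + 1) := by positivity
      linarith
    linarith [hv j]

/-! ### Uniform steering -/

/-- Matrices with a common denominator are dense. -/
lemma exists_rational_near {ι : Type*} [Fintype ι] [DecidableEq ι] (g : Matrix ι ι ℝ)
    {U : Set (Matrix ι ι ℝ)} (hU : U ∈ nhds g) :
    ∃ h ∈ U, ∃ (R : ℝ) (W : Matrix ι ι ℤ), 0 < R ∧ ∀ i j, R * h i j = W i j := by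
  have ht : Filter.Tendsto (fun R : ℕ => (fun i j => (⌊g i j * R⌋ : ℝ) / R : Matrix ι ι ℝ))
      Filter.atTop (nhds g) := by
    refine tendsto_pi_nhds.2 fun i => tendsto_pi_nhds.2 fun j => ?_
    have h1 : Filter.Tendsto (fun R : ℕ => g i j - 1 / (R : ℝ)) Filter.atTop (nhds (g i j)) := by
      simpa using (tendsto_const_nhds (x := g i j)).sub (tendsto_one_div_atTop_nhds_zero_nat (𝕜 := ℝ))
    refine tendsto_of_tendsto_of_tendsto_of_le_of_le' h1 tendsto_const_nhds ?_ ?_ <;>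
      filter_upwards [Filter.eventually_gt_atTop 0] with R hR <;>
      have hR' : (0 : ℝ) < R := by exact_mod_cast hR
    · rw [le_div_iff₀ hR', sub_mul, one_div_mul_cancel hR'.ne']
      linarith [Int.lt_floor_add_one (g i j * R)]
    · rw [div_le_iff₀ hR']
      exact Int.floor_le _
  obtain ⟨R, hR, hR0⟩ := ((ht.eventually_mem hU).and (Filter.eventually_gt_atTop 0)).exists
  have hR' : (0 : ℝ) < R := by exact_mod_cast hR0
  refine ⟨_, hR, R, fun i j => ⌊g i j * R⌋, hR', fun i j => ?_⟩
  exact mul_div_cancel₀ _ hR'.ne'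

lemma isCompact_matrices {ι : Type*} [Fintype ι] [DecidableEq ι] (C : ℝ) :
    IsCompact {g : Matrix ι ι ℝ | (∀ k l, |g k l| ≤ C) ∧ 1 ≤ |g.det|} := by
  have h1 : IsCompact {g : Matrix ι ι ℝ | ∀ k l, |g k l| ≤ C} := by
    have h2 : IsCompact (Set.pi Set.univ fun _ : ι => Set.pi Set.univ fun _ : ι => Set.Icc (-C) C) :=
      isCompact_univ_pi fun _ => isCompact_univ_pi fun _ => isCompact_Icc
    have h3 : {g : Matrix ι ι ℝ | ∀ k l, |g k l| ≤ C} =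
        (Set.pi Set.univ fun _ : ι => Set.pi Set.univ fun _ : ι => Set.Icc (-C) C :
          Set (ι → ι → ℝ)) := Set.ext fun g =>
      ⟨fun hg k _ l _ => abs_le.1 (hg k l), fun hg k l => abs_le.2 (hg k trivial l trivial)⟩
    rw [h3]
    exact h2
  have h3 : IsClosed {g : Matrix ι ι ℝ | 1 ≤ |g.det|} :=
    isClosed_le continuous_const (Continuous.matrix_det continuous_id).abs
  exact h1.inter_right h3

/-- For a lattice in a compact family, a suitable shear of bounded size followed by a sufficiently
long flow makes the lattice avoid the cube of radius `κ < 1`. -/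
lemma steer_uniform {m n : ℕ} (hm : 0 < m) (hn : 0 < n) {κ : ℝ} (hκ : 0 < κ) (hκ1 : κ < 1)
    (C : ℝ) : ∃ X0 : ℝ, ∀ X : ℝ, X0 ≤ X → ∀ g : Matrix (Fin m ⊕ Fin n) (Fin m ⊕ Fin n) ℝ,
      (∀ k l, |g k l| ≤ C) → 1 ≤ |g.det| →
      ∃ y : Fin m → Fin n → ℝ, (∀ i j, |y i j - 1 / 2| ≤ 3 / 8) ∧
        ∀ c : Fin m ⊕ Fin n → ℤ,
          (∀ i, |∑ k, (c k : ℝ) * g k (Sum.inl i) +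
            ∑ j, y i j * ∑ k, (c k : ℝ) * g k (Sum.inr j)| ≤ κ * (X ^ n)⁻¹) →
          (∀ j, |∑ k, (c k : ℝ) * g k (Sum.inr j)| ≤ κ * X ^ m) → c = 0 := by
  classical
  let P : Set (Matrix (Fin m ⊕ Fin n) (Fin m ⊕ Fin n) ℝ) → Prop := fun s =>
    ∃ X0 : ℝ, ∀ X : ℝ, X0 ≤ X → ∀ g ∈ s,
      ∃ y : Fin m → Fin n → ℝ, (∀ i j, |y i j - 1 / 2| ≤ 3 / 8) ∧
        ∀ c : Fin m ⊕ Fin n → ℤ,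
          (∀ i, |∑ k, (c k : ℝ) * g k (Sum.inl i) +
            ∑ j, y i j * ∑ k, (c k : ℝ) * g k (Sum.inr j)| ≤ κ * (X ^ n)⁻¹) →
          (∀ j, |∑ k, (c k : ℝ) * g k (Sum.inr j)| ≤ κ * X ^ m) → c = 0
  suffices H : P {g | (∀ k l, |g k l| ≤ C) ∧ 1 ≤ |g.det|} by
    obtain ⟨X0, hX0⟩ := H
    exact ⟨X0, fun X hX g hg hg1 => hX0 X hX g ⟨hg, hg1⟩⟩
  refine (isCompact_matrices C).induction_on (p := P) ⟨0, fun _ _ g hg => hg.elim⟩ ?_ ?_ ?_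
  · rintro s t hst ⟨X0, h⟩
    exact ⟨X0, fun X hX g hg => h X hX g (hst hg)⟩
  · rintro s t ⟨X0, h⟩ ⟨X1, h'⟩
    refine ⟨max X0 X1, fun X hX g hg => ?_⟩
    rcases hg with hg | hg
    · exact h X ((le_max_left _ _).trans hX) g hg
    · exact h' X ((le_max_right _ _).trans hX) g hg
  · rintro g0 ⟨-, hg0⟩
    -- Near `g0` there is a rational `h = g0 (1 + ε)` with `ε` so small that passing from `h` to any
    -- lattice close to `g0` costs less than half the gap between `κ` and `1`.
    set T : ℝ := min (1 / 8) ((1 - κ) / 4) with hT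
    have hT0 : 0 < T := lt_min (by norm_num) (by linarith)
    have hTκ : T ≤ (1 - κ) / 4 := min_le_right _ _
    set e : ℝ := T / (2 * (m + 1) * (n + 1)) with he
    have hmn : (0 : ℝ) < 2 * (m + 1) * (n + 1) := by positivity
    have he0 : 0 < e := div_pos hT0 hmn
    have hTe : T = 2 * (m + 1) * (n + 1) * e := by rw [he]; field_simp
    set κ' : ℝ := (1 + κ) / 2 with hκ'
    have hκ'1 : κ' ^ (m + n) < 1 := pow_lt_one₀ (by linarith) (by linarith) (by omega)
    have hκκ' : (1 + T) * κ < κ' := by nlinarith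
    let ε : Matrix (Fin m ⊕ Fin n) (Fin m ⊕ Fin n) ℝ → Matrix (Fin m ⊕ Fin n) (Fin m ⊕ Fin n) ℝ →
      Matrix (Fin m ⊕ Fin n) (Fin m ⊕ Fin n) ℝ := fun g h => (g.det)⁻¹ • (g.adjugate * h) - 1
    have hεmul : ∀ g h : Matrix (Fin m ⊕ Fin n) (Fin m ⊕ Fin n) ℝ, g.det ≠ 0 → h = g + g * ε g h := by
      intro g h hg
      simp only [ε, Matrix.mul_sub, Matrix.mul_one, Matrix.mul_smul, ← Matrix.mul_assoc,
        Matrix.mul_adjugate, Matrix.smul_mul, Matrix.one_mul, smul_smul, inv_mul_cancel₀ hg, one_smul]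
      abel
    have hg0' : g0.det ≠ 0 := by
      intro h0; rw [h0] at hg0; norm_num at hg0
    have hε0 : ε g0 g0 = 0 := by
      simp only [ε, Matrix.adjugate_mul, smul_smul, inv_mul_cancel₀ hg0', one_smul, sub_self]
    have hc1 : Continuous (fun h => ε g0 h) := by
      simp only [ε]
      fun_prop
    have hU : {h : Matrix (Fin m ⊕ Fin n) (Fin m ⊕ Fin n) ℝ |
        (∀ k l, |ε g0 h k l| < e) ∧ κ' ^ (m + n) < |h.det|} ∈ nhds g0 := by
      refine Filter.Eventually.and ?_ ?_
      · refine Filter.eventually_all.2 fun k => Filter.eventually_all.2 fun l => ?_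
        have : Continuous (fun h => |ε g0 h k l|) := (hc1.matrix_elem k l).abs
        refine (isOpen_lt this continuous_const).mem_nhds ?_
        simp [hε0, he0]
      · exact (isOpen_lt continuous_const (Continuous.matrix_det continuous_id).abs).mem_nhds
          (hκ'1.trans_le hg0)
    obtain ⟨h, ⟨hh1, hh2⟩, R, W, hR, hW⟩ := exists_rational_near g0 hU
    have hhdet : h.det ≠ 0 := by
      intro h0
      rw [h0, abs_zero] at hh2
      exact absurd hh2 (not_lt.2 (pow_nonneg (by linarith) _))
    have hWdet : W.det ≠ 0 := by
      intro h0
      have h1 : R • h = W.map (Int.cast : ℤ → ℝ) := by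
        ext i j; exact hW i j
      have h2 : (W.map (Int.cast : ℤ → ℝ)).det = ((W.det : ℤ) : ℝ) := (Int.cast_det _).symm
      rw [← h1, Matrix.det_smul, h0, Int.cast_zero] at h2
      exact (mul_ne_zero (pow_ne_zero _ hR.ne') hhdet) h2
    obtain ⟨X0, hX0⟩ := steer_rational hm hn hR hW hWdet (κ := κ') (by linarith) hh2
    refine ⟨{g | (∀ k l, |ε g h k l| < e) ∧ g.det ≠ 0}, mem_nhdsWithin_of_mem_nhds ?_,
      max X0 1, ?_⟩
    · have hdc : ContinuousAt (fun g : Matrix (Fin m ⊕ Fin n) (Fin m ⊕ Fin n) ℝ => g.det) g0 :=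
        (Continuous.matrix_det continuous_id).continuousAt
      refine Filter.Eventually.and ?_ (hdc.eventually_ne hg0')
      refine Filter.eventually_all.2 fun k => Filter.eventually_all.2 fun l => ?_
      have h1 : ContinuousAt (fun g => ε g h) g0 := by
        refine ((hdc.inv₀ hg0').smul ?_).sub continuousAt_const
        exact (Continuous.matrix_mul (Continuous.matrix_adjugate continuous_id)
          continuous_const).continuousAt
      have h2 : ContinuousAt (fun g => |ε g h k l|) g0 :=
        ((continuous_id.matrix_elem k l).continuousAt.comp h1).abs
      exact h2.eventually_lt continuousAt_const (hh1 k l)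
    · rintro X hX g ⟨hg1, hg2⟩
      have hX1 : 1 ≤ X := (le_max_right _ _).trans hX
      obtain ⟨y, hy, hyc⟩ := hX0 X ((le_max_left _ _).trans hX)
      obtain ⟨z, hz, hzw⟩ := absorb_perturbation (ε := ε g h) (e := e) (T := T)
        (fun k l => (hg1 k l).le) he0.le hTe (min_le_left _ _) hy
      refine ⟨z, hz, fun c hc1 hc2 => ?_⟩
      have hXn : (X ^ n)⁻¹ ≤ 1 := inv_le_one_of_one_le₀ (one_le_pow₀ hX1)
      have hXm : 1 ≤ X ^ m := one_le_pow₀ hX1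
      have hXn0 : 0 < (X ^ n)⁻¹ := by positivity
      have hw : ∀ l, ∑ k, (c k : ℝ) * h k l =
          (∑ k, (c k : ℝ) * g k l) + ∑ k', (∑ k, (c k : ℝ) * g k k') * ε g h k' l := by
        intro l
        have h1 : ∀ k, h k l = g k l + ∑ k', g k k' * ε g h k' l := by
          intro k
          have := congrFun (congrFun (hεmul g h hg2) k) l
          rwa [Matrix.add_apply, Matrix.mul_apply] at this
        simp only [h1, mul_add, Finset.sum_add_distrib, Finset.mul_sum, Finset.sum_mul]
        rw [Finset.sum_comm]
        simp only [mul_assoc]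
      obtain ⟨h1, h2⟩ := hzw (fun l => ∑ k, (c k : ℝ) * g k l) (κ * (X ^ n)⁻¹) (κ * X ^ m)
        (mul_le_mul_of_nonneg_left (hXn.trans hXm) hκ.le) hc1 hc2
      have h0 := hyc c (fun i => by
        have := h1 i
        simp only [← hw] at this
        refine this.trans_lt ?_
        rw [← mul_assoc]
        exact mul_lt_mul_of_pos_right hκκ' hXn0) (fun j => by
        have := h2 j
        simp only [← hw] at this
        refine this.trans_lt ?_
        rw [← mul_assoc]
        exact mul_lt_mul_of_pos_right hκκ' (one_pos.trans_le hXm))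
      have h3 : Matrix.vecMul (fun k => (c k : ℝ)) h = 0 := by
        funext l
        exact h0 l
      have h4 := Matrix.eq_zero_of_vecMul_eq_zero hhdet h3
      funext k
      have := congrFun h4 k
      simpa using this

/-! ### Bounded bases of lattices with few short vectors -/

/-- A group between `ℤ ^ ι` and `R⁻¹ ℤ ^ ι` is generated by vectors with entries bounded by `1`. -/
lemma exists_bounded_coords {ι : Type*} [Fintype ι] [DecidableEq ι] (G : AddSubgroup (ι → ℝ))
    {R : ℝ} (hR : 0 < R) (hint : ∀ x ∈ G, ∀ i, ∃ z : ℤ, R * x i = z)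
    (hZ : ∀ i, Pi.single i (1 : ℝ) ∈ G) :
    ∃ t : ι → ι → ℝ, (∀ i l, |t i l| ≤ 1) ∧ (∀ i, t i ∈ G) ∧
      ∀ x ∈ G, ∃ c : ι → ℤ, ∀ l, x l = ∑ k, (c k : ℝ) * t k l := by
  let _ : LinearOrder ι := LinearOrder.lift' (Fintype.equivFin ι) (Fintype.equivFin ι).injective
  obtain ⟨t, δ, ht⟩ := exists_triBasis G hR hint (fun i =>
    ⟨_, hZ i, fun i' hi' => by simp [hi'.ne'], by simp⟩)
  obtain ⟨t', ht', hb⟩ := ht.reduce (fun i => by convert hZ i)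
  refine ⟨t', hb, ht'.mem, fun x hx => ?_⟩
  obtain ⟨c, hc⟩ := ht'.repr hx
  refine ⟨c, fun l => ?_⟩
  rw [hc, Finset.sum_apply]
  simp only [Pi.smul_apply]
  simp only [zsmul_eq_mul]

/-- A lattice in dimension `d` all of whose determinants are multiples of `K ^ d`, and containing
`d` independent vectors of norm at most `T * K`, is contained in the dilation by `K` of a lattice
with a basis bounded by `d * T` and covolume at least `1`. -/
lemma exists_bounded_basis {ι : Type*} [Fintype ι] [DecidableEq ι] {Λ : AddSubgroup (ι → ℤ)}
    {K T : ℝ} (hK : 0 < K)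
    (hdet : ∀ w : Matrix ι ι ℤ, (∀ i, w i ∈ Λ) → ∃ t : ℤ, (w.det : ℝ) = t * K ^ Fintype.card ι)
    (w : Matrix ι ι ℤ) (hw : ∀ i, w i ∈ boxPts Λ (T * K)) (hw0 : w.det ≠ 0) :
    ∃ g : Matrix ι ι ℝ, (∀ k l, |g k l| ≤ Fintype.card ι * T) ∧ 1 ≤ |g.det| ∧
      ∀ v ∈ Λ, ∃ c : ι → ℤ, ∀ l, (v l : ℝ) = K * ∑ k, (c k : ℝ) * g k l := by
  have hwΛ : ∀ i, w i ∈ Λ := fun i => (mem_boxPts.1 (hw i)).1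
  have hV : 0 < K ^ Fintype.card ι := pow_pos hK _
  obtain ⟨t0, ht0⟩ := hdet w hwΛ
  have ht0' : t0 ≠ 0 := by
    rintro rfl
    rw [Int.cast_zero, zero_mul] at ht0
    exact hw0 (by exact_mod_cast ht0)
  set wR : Matrix ι ι ℝ := w.map (Int.cast : ℤ → ℝ) with hwR
  have hcast : ∀ u : Matrix ι ι ℤ, (u.map (Int.cast : ℤ → ℝ)).det = ((u.det : ℤ) : ℝ) :=
    fun u => (Int.cast_det _).symm
  have hwRdet : wR.det ≠ 0 := by
    rw [hcast]; exact_mod_cast hw0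
  let G : AddSubgroup (ι → ℝ) :=
    { carrier := {x | ∃ v ∈ Λ, ∀ l, ∑ i, x i * w i l = (v l : ℝ)}
      zero_mem' := ⟨0, Λ.zero_mem, by simp⟩
      add_mem' := by
        rintro x y ⟨v, hv, hxv⟩ ⟨u, hu, hyu⟩
        refine ⟨v + u, Λ.add_mem hv hu, fun l => ?_⟩
        simp [add_mul, Finset.sum_add_distrib, hxv, hyu]
      neg_mem' := by
        rintro x ⟨v, hv, hxv⟩
        refine ⟨-v, Λ.neg_mem hv, fun l => ?_⟩
        simp [hxv] }
  have hint : ∀ x ∈ G, ∀ i, ∃ z : ℤ, |(t0 : ℝ)| * x i = z := by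
    rintro x ⟨v, hv, hxv⟩ i
    obtain ⟨t, ht⟩ := hdet (w.updateRow i v) (fun j => by
      rcases eq_or_ne j i with rfl | h
      · rwa [Matrix.updateRow_self]
      · rw [Matrix.updateRow_ne h]; exact hwΛ j)
    have h1 : wR.det * x i = ((w.updateRow i v).det : ℝ) := by
      rw [← hcast, Matrix.map_updateRow, ← Matrix.cramer_transpose_apply,
        Matrix.cramer_eq_adjugate_mulVec]
      have h2 : (fun l => (v l : ℝ)) = wR.transpose.mulVec x := by
        funext l
        rw [← hxv l, Matrix.mulVec, dotProduct]
        refine Finset.sum_congr rfl fun k _ => ?_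
        rw [Matrix.transpose_apply, mul_comm]; rfl
      have h3 : (Int.cast ∘ v : ι → ℝ) = wR.transpose.mulVec x := h2
      rw [h3, Matrix.mulVec_mulVec, Matrix.adjugate_mul, Matrix.det_transpose, Matrix.smul_mulVec,
        Matrix.one_mulVec]
      rfl
    rw [hcast, ht0, ht] at h1
    have h4 : (t0 : ℝ) * x i = t := by
      refine mul_right_cancel₀ hV.ne' ?_
      rw [← h1]; ring
    rcases abs_choice (t0 : ℝ) with h5 | h5
    · exact ⟨t, by rw [h5, h4]⟩
    · exact ⟨-t, by rw [h5, neg_mul, h4, Int.cast_neg]⟩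
  have hZ : ∀ i, Pi.single i (1 : ℝ) ∈ G := fun i => ⟨w i, hwΛ i, fun l => by
    rw [Finset.sum_eq_single i (fun k _ hk => by simp [hk]) (by simp)]; simp⟩
  obtain ⟨t, htb, htG, hrep⟩ := exists_bounded_coords G
    (abs_pos.2 (by exact_mod_cast ht0' : (t0 : ℝ) ≠ 0)) hint hZ
  choose u hu htu using htG
  choose C hC using fun i => hrep _ (hZ i)
  have htdet : (Matrix.of t).det ≠ 0 := by
    have h1 : (Matrix.of fun i k => (C i k : ℝ)) * Matrix.of t = 1 := by
      ext i l
      rw [Matrix.mul_apply, Matrix.one_eq_pi_single]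
      exact (hC i l).symm
    intro h0
    have h2 := congrArg Matrix.det h1
    rw [Matrix.det_mul, h0, mul_zero, Matrix.det_one] at h2
    exact zero_ne_one h2
  have hmul : Matrix.of t * wR = (Matrix.of u).map (Int.cast : ℤ → ℝ) := by
    ext k l
    rw [Matrix.mul_apply]
    exact htu k l
  obtain ⟨t1, ht1⟩ := hdet (Matrix.of u) hu
  refine ⟨K⁻¹ • (Matrix.of t * wR), fun k l => ?_, ?_, fun v hv => ?_⟩
  · rw [Matrix.smul_apply, smul_eq_mul, abs_mul, abs_of_pos (inv_pos.2 hK), inv_mul_le_iff₀ hK]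
    have := abs_sum_mul_le (htb k) (fun i => (mem_boxPts.1 (hw i)).2 l)
    rw [Matrix.mul_apply]
    refine (le_of_eq ?_).trans (this.trans (le_of_eq (by ring)))
    rfl
  · have h1 : (K⁻¹ • (Matrix.of t * wR)).det = t1 := by
      rw [Matrix.det_smul, hmul, hcast, ht1, inv_pow]
      field_simp
    rw [h1]
    have h2 : t1 ≠ 0 := by
      rintro rfl
      rw [Int.cast_zero, Matrix.det_smul, Matrix.det_mul] at h1
      exact (mul_ne_zero (pow_ne_zero _ (inv_ne_zero hK.ne')) (mul_ne_zero htdet hwRdet)) h1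
    exact_mod_cast Int.one_le_abs h2
  · have hx : Matrix.vecMul (fun l => (v l : ℝ)) wR⁻¹ ∈ G := by
      refine ⟨v, hv, fun l => ?_⟩
      have : Matrix.vecMul (Matrix.vecMul (fun l => (v l : ℝ)) wR⁻¹) wR = fun l => (v l : ℝ) := by
        rw [Matrix.vecMul_vecMul, Matrix.nonsing_inv_mul _ (isUnit_iff_ne_zero.2 hwRdet),
          Matrix.vecMul_one]
      exact congrFun this l
    have hx1 : Matrix.vecMul (Matrix.vecMul (fun l => (v l : ℝ)) wR⁻¹) wR = fun l => (v l : ℝ) := by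
      rw [Matrix.vecMul_vecMul, Matrix.nonsing_inv_mul _ (isUnit_iff_ne_zero.2 hwRdet),
        Matrix.vecMul_one]
    obtain ⟨c, hc⟩ := hrep _ hx
    refine ⟨c, fun l => ?_⟩
    have h1 : (v l : ℝ) = _ := (congrFun hx1 l).symm
    rw [h1, Matrix.vecMul, dotProduct]
    simp only [hc, Matrix.smul_apply, smul_eq_mul, Matrix.mul_apply, Matrix.of_apply,
      Finset.sum_mul, Finset.mul_sum]
    rw [Finset.sum_comm]
    refine Finset.sum_congr rfl fun k _ => Finset.sum_congr rfl fun i _ => ?_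
    field_simp

/-- A lower bound of Minkowski type, by the pigeonhole principle: integer points of a cube in the
same class modulo the lattice differ by lattice points. -/
lemma card_boxPts_lower {m n : ℕ} {D K T : ℕ} (hD : 0 < D) (hDK : D ^ m = K ^ (m + n))
    (Z : Fin m → Fin n → ℤ) : T ^ (m + n) ≤ (boxPts (lat (D : ℤ) Z) ((T : ℝ) * K)).card := by
  classical
  let s : Finset (Fin m ⊕ Fin n → ℤ) := Fintype.piFinset fun _ => Finset.Icc 0 ((T * K : ℕ) : ℤ)
  let B : Finset (Fin m → ℤ) := Fintype.piFinset fun _ => Finset.Ico 0 (D : ℤ)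
  have hD' : (0 : ℤ) < D := by exact_mod_cast hD
  have h1 : s.card ≤ (boxPts (lat (D : ℤ) Z) ((T : ℝ) * K)).card * B.card := by
    refine card_le_of_label s
      (fun v a => (v (Sum.inl a) - ∑ b, Z a b * v (Sum.inr b)) % (D : ℤ)) B (fun v _ => ?_) ?_
    · rw [Fintype.mem_piFinset]
      intro a
      rw [Finset.mem_Ico]
      exact ⟨Int.emod_nonneg _ hD'.ne', Int.emod_lt_of_pos _ hD'⟩
    · intro v hv v' hv' heq
      rw [mem_boxPts]
      refine ⟨fun a => ?_, fun i => ?_⟩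
      · have := congrFun heq a
        have h2 := Int.ModEq.dvd (n := (D : ℤ)) (this : _ % _ = _ % _).symm
        convert h2 using 1
        simp only [Pi.sub_apply, mul_sub, Finset.sum_sub_distrib]
        ring
      · have h3 := Finset.mem_Icc.1 (Fintype.mem_piFinset.1 hv i)
        have h4 := Finset.mem_Icc.1 (Fintype.mem_piFinset.1 hv' i)
        have h5 : |v i - v' i| ≤ ((T * K : ℕ) : ℤ) := by rw [abs_le]; constructor <;> omega
        have h6 : ((|v i - v' i| : ℤ) : ℝ) ≤ (((T * K : ℕ) : ℤ) : ℝ) := by exact_mod_cast h5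
        simpa using h6
  have h2 : s.card = (T * K + 1) ^ (m + n) := by
    rw [Fintype.card_piFinset, Finset.prod_const]
    simp
    norm_cast
  have h3 : B.card = D ^ m := by
    rw [Fintype.card_piFinset, Finset.prod_const]
    simp
  rw [h2, h3, hDK] at h1
  have hK : 0 < K ^ (m + n) := by rw [← hDK]; exact pow_pos hD _
  have h4 : (T * K) ^ (m + n) ≤ (T * K + 1) ^ (m + n) := Nat.pow_le_pow_left (by omega) _
  rw [mul_pow] at h4
  exact Nat.le_of_mul_le_mul_right (h4.trans h1) hK

/-- If the cube of radius `K` contains at most `H` points of a lattice whose covolume is that of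
`K ℤ ^ (m + n)`, then the lattice is contained in the dilation by `K` of a lattice with a basis
bounded in terms of `H` and covolume at least `1`. Otherwise the points in a larger cube would lie
on a hyperplane, and there would be too few of them for the lower bound `card_boxPts_lower`. -/
lemma exists_reduced_basis {m n : ℕ} (hmn : 0 < m + n) (H : ℝ) :
    ∃ C : ℝ, ∀ (D K : ℕ) (Z : Fin m → Fin n → ℤ),
    0 < D → D ^ m = K ^ (m + n) → ((boxPts (lat (D : ℤ) Z) (K : ℝ)).card : ℝ) ≤ H →
    ∃ g : Matrix (Fin m ⊕ Fin n) (Fin m ⊕ Fin n) ℝ, (∀ k l, |g k l| ≤ C) ∧ 1 ≤ |g.det| ∧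
      ∀ v ∈ lat (D : ℤ) Z, ∃ c : Fin m ⊕ Fin n → ℤ,
        ∀ l, (v l : ℝ) = K * ∑ k, (c k : ℝ) * g k l := by
  set T : ℕ := ⌈(4 * (m + n) : ℝ) ^ (m + n - 1) * H⌉₊ + 1 with hT
  have hT1 : (1 : ℝ) ≤ T := by
    rw [hT]
    push_cast
    linarith [Nat.cast_nonneg (α := ℝ) ⌈(4 * (m + n) : ℝ) ^ (m + n - 1) * H⌉₊]
  refine ⟨((m + n : ℕ) : ℝ) * T, fun D K Z hD hDK hH => ?_⟩
  have hK : 0 < K := by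
    rcases Nat.eq_zero_or_pos K with rfl | h
    · rw [zero_pow hmn.ne'] at hDK
      exact absurd hDK (pow_pos hD m).ne'
    · exact h
  have hK' : (0 : ℝ) < K := by exact_mod_cast hK
  have hcard : Fintype.card (Fin m ⊕ Fin n) = m + n := by simp
  have hdet : ∀ w : Matrix (Fin m ⊕ Fin n) (Fin m ⊕ Fin n) ℤ, (∀ i, w i ∈ lat (D : ℤ) Z) →
      ∃ t : ℤ, (w.det : ℝ) = t * (K : ℝ) ^ Fintype.card (Fin m ⊕ Fin n) := by
    intro w hw
    obtain ⟨t, ht⟩ := lat_det_real _ _ w hw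
    refine ⟨t, ht.trans ?_⟩
    rw [hcard, Int.cast_natCast]
    congr 1
    exact_mod_cast hDK
  rcases exists_independent_or_hyperplane
    (boxPts (lat (D : ℤ) Z) ((T : ℝ) * K) : Set (Fin m ⊕ Fin n → ℤ)) with ⟨w, hw, hw0⟩ | ⟨a, ha, h⟩
  · obtain ⟨g, hg1, hg2, hg3⟩ := exists_bounded_basis (T := T) hK' hdet w hw hw0
    refine ⟨g, fun k l => ?_, hg2, hg3⟩
    have := hg1 k l
    rwa [hcard] at this
  · exfalso
    have h1 := card_boxPts_of_hyperplane hK' (le_mul_of_one_le_left hK'.le hT1) a ha h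
    have h2 : ((T ^ (m + n) : ℕ) : ℝ) ≤ ((boxPts (lat (D : ℤ) Z) ((T : ℝ) * K)).card : ℝ) := by
      exact_mod_cast card_boxPts_lower hD hDK Z
    rw [hcard, mul_div_assoc, div_self hK'.ne', mul_one, mul_pow] at h1
    have h3 : (4 * ((m + n : ℕ) : ℝ)) ^ (m + n - 1) * H < T := by
      rw [hT]; push_cast
      exact (Nat.le_ceil _).trans_lt (lt_add_one _)
    have hTp : (0 : ℝ) < (T : ℝ) ^ (m + n - 1) := by positivity
    have h4 : (T : ℝ) ^ (m + n) = (T : ℝ) ^ (m + n - 1) * T := by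
      rw [← pow_succ]; congr 1; omega
    push_cast at h2
    rw [h4] at h2
    have h5 := mul_lt_mul_of_pos_left h3 hTp
    have h6 : (4 * ((m + n : ℕ) : ℝ)) ^ (m + n - 1) * (T : ℝ) ^ (m + n - 1) *
        ((boxPts (lat (D : ℤ) Z) (K : ℝ)).card : ℝ) ≤
        (4 * ((m + n : ℕ) : ℝ)) ^ (m + n - 1) * (T : ℝ) ^ (m + n - 1) * H :=
      mul_le_mul_of_nonneg_left hH (by positivity)
    linarith

/-! ### Cubes free of Dirichlet improvable matrices -/

/-- The room left by `c < 1` is shared between the two sides of the Dirichlet inequality: for the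
scale `N = ρ A ^ m` one has both `N < A ^ m` and `c N ^ (-n / m) < A ^ (-n)`. -/
lemma exists_scale {m n : ℕ} (hm : 0 < m) (hn : 0 < n) {c : ℝ} (hc0 : 0 < c) (hc1 : c < 1) :
    ∃ ρ : ℝ, 0 < ρ ∧ ρ < 1 ∧ c * ρ ^ (-(n : ℝ) / (m : ℝ)) < 1 := by
  have hm' : (0 : ℝ) < m := by exact_mod_cast hm
  have hn' : (0 : ℝ) < n := by exact_mod_cast hn
  refine ⟨c ^ ((m : ℝ) / n / 2), Real.rpow_pos_of_pos hc0 _,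
    Real.rpow_lt_one hc0.le hc1 (by positivity), ?_⟩
  rw [← Real.rpow_mul hc0.le]
  have h1 : (m : ℝ) / n / 2 * (-(n : ℝ) / m) = -(1 / 2) := by field_simp
  rw [h1]
  nth_rewrite 1 [← Real.rpow_one c]
  rw [← Real.rpow_add hc0]
  exact Real.rpow_lt_one hc0.le hc1 (by norm_num)

lemma rpow_scale {m n : ℕ} (hm : 0 < m) {A : ℝ} (hA : 0 < A) :
    (A ^ m) ^ (-(n : ℝ) / (m : ℝ)) = (A ^ n)⁻¹ := by
  have hm' : (m : ℝ) ≠ 0 := by exact_mod_cast hm.ne'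
  rw [← Real.rpow_natCast, ← Real.rpow_mul hA.le, mul_div_cancel₀ _ hm', Real.rpow_neg hA.le,
    Real.rpow_natCast]

/-- Inside any cube whose lattice has at most `H` points there is a subcube, smaller by a factor
depending on `H` only, in which the Dirichlet inequality fails at a prescribed scale. -/
lemma exists_good_child {m n : ℕ} (hm : 0 < m) (hn : 0 < n) {c : ℝ} (hc0 : 0 < c) (hc1 : c < 1)
    {M : ℕ} (hM : 2 ≤ M) (H : ℝ) : ∃ (r s : ℕ) (ρ : ℝ), 0 < r ∧ 0 < ρ ∧
      ∀ (j : ℕ) (Z : Fin m → Fin n → ℤ),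
        ((boxPts (lat (((M ^ (m + n)) ^ j : ℕ) : ℤ) Z) (((M ^ (m * j) : ℕ)) : ℝ)).card : ℝ) ≤ H →
        ∃ e : Fin m → Fin n → Fin ((M ^ (m + n)) ^ r), ∀ Y : Fin m → Fin n → ℝ,
          (∀ a b, ⌊(((M ^ (m + n)) ^ (j + r) : ℕ) : ℝ) * Y a b⌋ =
            (((M ^ (m + n)) ^ r : ℕ) : ℤ) * Z a b + (e a b : ℕ)) →
          ∀ (p : Fin m → ℤ) (q : Fin n → ℤ), q ≠ 0 →
            (∀ b, |(q b : ℝ)| < ρ * (M : ℝ) ^ (m * (j + s))) →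
            (∀ a, |∑ b, Y a b * q b - p a| <
              c * (ρ * (M : ℝ) ^ (m * (j + s))) ^ (-(n : ℝ) / (m : ℝ))) → False := by
  obtain ⟨ρ, hρ0, hρ1, hρc⟩ := exists_scale hm hn hc0 hc1
  set κ : ℝ := max ρ (c * ρ ^ (-(n : ℝ) / (m : ℝ))) with hκ
  have hκ1 : κ < 1 := max_lt hρ1 hρc
  have hκ0 : 0 < κ := hρ0.trans_le (le_max_left _ _)
  obtain ⟨C, hC⟩ := exists_reduced_basis (m := m) (n := n) (by omega) H
  obtain ⟨X0, hX0⟩ := steer_uniform hm hn (κ := (1 + κ) / 2) (by linarith) (by linarith) C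
  have hM1 : (1 : ℝ) < M := by exact_mod_cast (by omega : 1 < M)
  have hM0 : (0 : ℝ) < M := by linarith
  obtain ⟨s, hs⟩ := pow_unbounded_of_one_lt X0 hM1
  obtain ⟨s1, hs1⟩ := pow_unbounded_of_one_lt (2 * n / (1 - κ)) hM1
  have hs1' : 2 * n / (1 - κ) ≤ (M : ℝ) ^ ((m + n) * (s1 + 1)) :=
    hs1.le.trans (pow_le_pow_right₀ hM1.le (by nlinarith [Nat.zero_le (m * (s1 + 1))]))
  refine ⟨s + (s1 + 1), s, ρ, by omega, hρ0, fun j Z hH => ?_⟩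
  set r := s + (s1 + 1) with hr
  obtain ⟨g, hg1, hg2, hg3⟩ := hC ((M ^ (m + n)) ^ j) (M ^ (m * j)) Z (by positivity) (by
    rw [← pow_mul, ← pow_mul, ← pow_mul]; congr 1; ring) hH
  obtain ⟨y, hy, hyc⟩ := hX0 ((M : ℝ) ^ s) hs.le g hg1 hg2
  have hLr : (0 : ℝ) < (((M ^ (m + n)) ^ r : ℕ) : ℝ) := by positivity
  have hy0 : ∀ a b, 0 < y a b ∧ y a b < 1 := fun a b => by
    have := abs_le.1 (hy a b)
    constructor <;> linarith
  refine ⟨fun a b => ⟨⌊(((M ^ (m + n)) ^ r : ℕ) : ℝ) * y a b⌋₊, ?_⟩, ?_⟩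
  · rw [Nat.floor_lt (mul_pos hLr (hy0 a b).1).le]
    exact mul_lt_of_lt_one_right hLr (hy0 a b).2
  intro Y hY p q hq hqb hqa
  set X : ℝ := (M : ℝ) ^ s with hX
  have hXp : 0 < X := pow_pos hM0 s
  set K : ℝ := ((M ^ (m * j) : ℕ) : ℝ) with hK
  have hKp : 0 < K := by rw [hK]; positivity
  set Lj : ℝ := (((M ^ (m + n)) ^ j : ℕ) : ℝ) with hLj
  have hLjp : 0 < Lj := by rw [hLj]; positivity
  have hLjK : Lj = K * ((M : ℝ) ^ j) ^ n := by
    rw [hLj, hK]; push_cast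
    rw [← pow_mul, ← pow_mul, ← pow_add]; congr 1; ring
  set y' : Fin m → Fin n → ℝ := fun a b => Lj * Y a b - Z a b with hy'
  have hyy : ∀ a b, |y a b - y' a b| ≤ 1 / (((M ^ (m + n)) ^ r : ℕ) : ℝ) := by
    intro a b
    have h1 := hY a b
    rw [Int.floor_eq_iff] at h1
    have h2 := Nat.floor_le (mul_pos hLr (hy0 a b).1).le
    have h3 := Nat.lt_floor_add_one ((((M ^ (m + n)) ^ r : ℕ) : ℝ) * y a b)
    have h4 : (((M ^ (m + n)) ^ (j + r) : ℕ) : ℝ) = Lj * (((M ^ (m + n)) ^ r : ℕ) : ℝ) := by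
      rw [hLj]; push_cast; rw [pow_add]
    rw [h4, Int.cast_add, Int.cast_mul, Int.cast_natCast, Int.cast_natCast] at h1
    have h5 : ∀ t : ℝ, |t| * (((M ^ (m + n)) ^ r : ℕ) : ℝ) =
        |t * (((M ^ (m + n)) ^ r : ℕ) : ℝ)| := fun t => by rw [abs_mul, abs_of_pos hLr]
    rw [le_div_iff₀ hLr, h5]
    simp only [hy']
    rw [abs_le]
    constructor <;> linarith [h1.1, h1.2]
  let v : Fin m ⊕ Fin n → ℤ :=
    Sum.elim (fun a => ∑ b, Z a b * q b - (((M ^ (m + n)) ^ j : ℕ) : ℤ) * p a) q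
  have hv : v ∈ lat (((M ^ (m + n)) ^ j : ℕ) : ℤ) Z := by
    intro a
    refine ⟨-p a, ?_⟩
    simp only [v, Sum.elim_inl, Sum.elim_inr]
    ring
  obtain ⟨x, hx⟩ := hg3 v hv
  have hxr : ∀ b, (q b : ℝ) = K * ∑ k, (x k : ℝ) * g k (Sum.inr b) := fun b => hx (Sum.inr b)
  have hxl : ∀ a, ∑ b, (Z a b : ℝ) * q b - Lj * p a = K * ∑ k, (x k : ℝ) * g k (Sum.inl a) := by
    intro a
    rw [← hx (Sum.inl a)]
    simp only [v, Sum.elim_inl]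
    push_cast
    rw [hLj]; push_cast; rfl
  have hscale : (ρ * (M : ℝ) ^ (m * (j + s))) ^ (-(n : ℝ) / (m : ℝ)) =
      ρ ^ (-(n : ℝ) / (m : ℝ)) * ((((M : ℝ) ^ j) ^ n)⁻¹ * (X ^ n)⁻¹) := by
    rw [Real.mul_rpow hρ0.le (by positivity), mul_comm m, pow_mul, rpow_scale hm (by positivity),
      pow_add, mul_pow, mul_inv]
  have hqs : ∀ b, |∑ k, (x k : ℝ) * g k (Sum.inr b)| ≤ κ * X ^ m := by
    intro b
    have h1 := hqb b
    have h2 : (M : ℝ) ^ (m * (j + s)) = K * X ^ m := by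
      rw [hK, hX]; push_cast; rw [← pow_mul, ← pow_add]; congr 1; ring
    rw [hxr, abs_mul, abs_of_pos hKp, h2, mul_left_comm, mul_lt_mul_iff_right₀ hKp] at h1
    exact h1.le.trans (mul_le_mul_of_nonneg_right (le_max_left _ _) (pow_pos hXp m).le)
  have hXn : 0 < X ^ n := pow_pos hXp n
  have hx0 : x = 0 := by
    refine hyc x (fun a => ?_) (fun b => (hqs b).trans
      (mul_le_mul_of_nonneg_right (by linarith) (pow_pos hXp m).le))
    have h1 : K * (∑ k, (x k : ℝ) * g k (Sum.inl a) +
        ∑ b, y' a b * ∑ k, (x k : ℝ) * g k (Sum.inr b)) = Lj * (∑ b, Y a b * q b - p a) := by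
      have e1 : K * ∑ b, y' a b * ∑ k, (x k : ℝ) * g k (Sum.inr b) = ∑ b, y' a b * (q b : ℝ) := by
        rw [Finset.mul_sum]
        exact Finset.sum_congr rfl fun b _ => by rw [hxr b]; ring
      have e2 : ∑ b, y' a b * (q b : ℝ) =
          Lj * ∑ b, Y a b * (q b : ℝ) - ∑ b, (Z a b : ℝ) * q b := by
        rw [Finset.mul_sum, ← Finset.sum_sub_distrib]
        exact Finset.sum_congr rfl fun b _ => by simp only [hy']; ring
      rw [mul_add, e1, e2, ← hxl]
      ring
    have h2 : |∑ k, (x k : ℝ) * g k (Sum.inl a) +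
        ∑ b, y' a b * ∑ k, (x k : ℝ) * g k (Sum.inr b)| ≤ κ * (X ^ n)⁻¹ := by
      refine le_of_mul_le_mul_left ?_ hKp
      have h0 : ∀ t : ℝ, K * |t| = |K * t| := fun t => by rw [abs_mul, abs_of_pos hKp]
      rw [h0, h1, abs_mul, abs_of_pos hLjp]
      refine (mul_le_mul_of_nonneg_left (hqa a).le hLjp.le).trans ?_
      rw [hscale, hLjK]
      have h3 : K * ((M : ℝ) ^ j) ^ n * (c * (ρ ^ (-(n : ℝ) / (m : ℝ)) *
          ((((M : ℝ) ^ j) ^ n)⁻¹ * (X ^ n)⁻¹))) =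
          K * (c * ρ ^ (-(n : ℝ) / (m : ℝ)) * (X ^ n)⁻¹) := by
        have : (0 : ℝ) < ((M : ℝ) ^ j) ^ n := by positivity
        field_simp
      rw [h3]
      exact mul_le_mul_of_nonneg_left (mul_le_mul_of_nonneg_right (le_max_right _ _)
        (inv_pos.2 hXn).le) hKp.le
    have h3 : |∑ b, (y a b - y' a b) * ∑ k, (x k : ℝ) * g k (Sum.inr b)| ≤
        (1 - κ) / 2 * (X ^ n)⁻¹ := by
      refine (abs_sum_mul_le (hyy a) hqs).trans ?_
      rw [Fintype.card_fin, ← div_eq_mul_inv, le_div_iff₀ hXn]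
      have h4 : (((M ^ (m + n)) ^ r : ℕ) : ℝ) = X ^ m * X ^ n * (M : ℝ) ^ ((m + n) * (s1 + 1)) := by
        rw [hX, hr]; push_cast
        rw [← pow_mul, ← pow_mul, ← pow_mul, ← pow_add, ← pow_add]; congr 1; ring
      rw [h4]
      set Q := (M : ℝ) ^ ((m + n) * (s1 + 1)) with hQ
      have hQ0 : 0 < Q := by rw [hQ]; positivity
      have hXm : 0 < X ^ m := pow_pos hXp m
      have h5 : n * (1 / (X ^ m * X ^ n * Q) * (κ * X ^ m)) * X ^ n = n * κ / Q := by
        field_simp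
      rw [h5, div_le_iff₀ hQ0]
      rw [div_le_iff₀ (by linarith)] at hs1'
      have hn0 : (0 : ℝ) ≤ n := Nat.cast_nonneg n
      nlinarith [mul_le_mul_of_nonneg_left hκ1.le hn0]
    have h4 : ∑ k, (x k : ℝ) * g k (Sum.inl a) + ∑ b, y a b * ∑ k, (x k : ℝ) * g k (Sum.inr b) =
        (∑ k, (x k : ℝ) * g k (Sum.inl a) + ∑ b, y' a b * ∑ k, (x k : ℝ) * g k (Sum.inr b)) +
        ∑ b, (y a b - y' a b) * ∑ k, (x k : ℝ) * g k (Sum.inr b) := by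
      simp only [sub_mul, Finset.sum_sub_distrib]
      ring
    rw [h4]
    refine (abs_add_le _ _).trans ((add_le_add h2 h3).trans (le_of_eq ?_))
    ring
  refine hq (funext fun b => ?_)
  have := hxr b
  rw [hx0] at this
  simpa using this

/-! ### Coverings by cubes and Hausdorff dimension -/

/-- The level-`j` `L`-adic cube containing `Y`, encoded by the integer part of `L ^ j * Y`. -/
noncomputable def cell {k m n : ℕ} (L j : ℕ) (Y : Fin k → Fin m → Fin n → ℝ) :
    Fin k → Fin m → Fin n → ℤ :=
  fun i a b => ⌊((L ^ j : ℕ) : ℝ) * Y i a b⌋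

/-- The subcube with position `e` of the cube `Z`, each side being cut into `R` parts. -/
def child {k m n : ℕ} (R : ℕ) (Z : Fin k → Fin m → Fin n → ℤ)
    (e : Fin k → Fin m → Fin n → Fin R) : Fin k → Fin m → Fin n → ℤ :=
  fun i a b => (R : ℤ) * Z i a b + (e i a b : ℕ)

lemma cell_add {k m n : ℕ} {L : ℕ} (hL : 0 < L) (j r : ℕ) (Y : Fin k → Fin m → Fin n → ℝ) :
    ∃ e, cell L (j + r) Y = child (L ^ r) (cell L j Y) e := by
  have hR : 0 < L ^ r := pow_pos hL r
  have hR' : (0 : ℝ) < ((L ^ r : ℕ) : ℝ) := by exact_mod_cast hR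
  have key : ∀ i a b, 0 ≤ cell L (j + r) Y i a b - ((L ^ r : ℕ) : ℤ) * cell L j Y i a b ∧
      cell L (j + r) Y i a b - ((L ^ r : ℕ) : ℤ) * cell L j Y i a b < ((L ^ r : ℕ) : ℤ) := by
    intro i a b
    have h0 : ((L ^ (j + r) : ℕ) : ℝ) * Y i a b =
        ((L ^ r : ℕ) : ℝ) * (((L ^ j : ℕ) : ℝ) * Y i a b) := by
      push_cast; ring
    simp only [cell, h0]
    set x := ((L ^ j : ℕ) : ℝ) * Y i a b
    constructor
    · rw [sub_nonneg, Int.le_floor, Int.cast_mul, Int.cast_natCast]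
      exact mul_le_mul_of_nonneg_left (Int.floor_le x) hR'.le
    · rw [sub_lt_iff_lt_add, Int.floor_lt, Int.cast_add, Int.cast_mul, Int.cast_natCast]
      have := mul_lt_mul_of_pos_left (Int.lt_floor_add_one x) hR'
      linarith
  refine ⟨fun i a b => ⟨(cell L (j + r) Y i a b -
    ((L ^ r : ℕ) : ℤ) * cell L j Y i a b).toNat, ?_⟩, ?_⟩
  · have := key i a b
    omega
  · funext i a b
    have := key i a b
    simp only [child]
    omega

lemma dist_le_of_cell_eq {k m n : ℕ} {L j : ℕ} (hL : 0 < L) {Y Y' : Fin k → Fin m → Fin n → ℝ}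
    (h : cell L j Y = cell L j Y') : dist Y Y' ≤ ((L ^ j : ℕ) : ℝ)⁻¹ := by
  have hR' : (0 : ℝ) < ((L ^ j : ℕ) : ℝ) := by exact_mod_cast pow_pos hL j
  have h0 := (inv_pos.2 hR').le
  refine (dist_pi_le_iff h0).2 fun i => (dist_pi_le_iff h0).2 fun a => (dist_pi_le_iff h0).2
    fun b => ?_
  have h1 : ⌊((L ^ j : ℕ) : ℝ) * Y i a b⌋ = ⌊((L ^ j : ℕ) : ℝ) * Y' i a b⌋ :=
    congrFun (congrFun (congrFun h i) a) b
  have h2 := Int.abs_sub_lt_one_of_floor_eq_floor h1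
  rw [← mul_sub, abs_mul, abs_of_pos hR'] at h2
  rw [Real.dist_eq, ← one_div, le_div_iff₀ hR', mul_comm]
  exact h2.le

/-- A set covered at levels `j0 + r * t` by `O((L ^ r) ^ (α * t))` cubes has dimension at
most `α`. -/
lemma dimH_le_of_cells {k m n : ℕ} {L r : ℕ} (hL : 2 ≤ L) (hr : 0 < r) (j0 : ℕ) {α : ℝ}
    (hα : 0 ≤ α) {S : Set (Fin k → Fin m → Fin n → ℝ)}
    (A : ℕ → Finset (Fin k → Fin m → Fin n → ℤ))
    (hcov : ∀ t, ∀ Y ∈ S, cell L (j0 + r * t) Y ∈ A t) {K : ℝ}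
    (hA : ∀ t, ((A t).card : ℝ) ≤ K * (((L : ℝ) ^ r) ^ α) ^ t) :
    dimH S ≤ ENNReal.ofReal α := by
  have hL0 : 0 < L := by omega
  have hLr : (0 : ℝ) < L := by exact_mod_cast hL0
  set d : ℕ → ℝ := fun t => ((L ^ (j0 + r * t) : ℕ) : ℝ)⁻¹ with hd
  have hd0 : ∀ t, 0 < d t := fun t => inv_pos.2 (by exact_mod_cast pow_pos hL0 _)
  have hdlim : Filter.Tendsto (fun t => ENNReal.ofReal (d t)) Filter.atTop (nhds 0) := by
    rw [← ENNReal.ofReal_zero]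
    refine ENNReal.tendsto_ofReal (tendsto_inv_atTop_zero.comp ?_)
    refine tendsto_natCast_atTop_atTop.comp ?_
    refine (tendsto_pow_atTop_atTop_of_one_lt (by omega : 1 < L)).comp ?_
    refine Filter.tendsto_atTop_mono (fun t => ?_) Filter.tendsto_id
    show t ≤ j0 + r * t
    nlinarith
  have hdiam : ∀ t (Z : Fin k → Fin m → Fin n → ℤ),
      Metric.ediam {Y : Fin k → Fin m → Fin n → ℝ | cell L (j0 + r * t) Y = Z} ≤
        ENNReal.ofReal (d t) := by
    intro t Z
    refine Metric.ediam_le fun Y hY Y' hY' => ?_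
    rw [edist_dist]
    exact ENNReal.ofReal_le_ofReal (dist_le_of_cell_eq hL0 (Eq.trans hY (Eq.symm hY')))
  have hμ := MeasureTheory.Measure.hausdorffMeasure_le_liminf_sum α S
    (l := Filter.atTop) (ι := fun t => {x // x ∈ A t}) (fun t => ENNReal.ofReal (d t)) hdlim
    (fun t Z => {Y | cell L (j0 + r * t) Y = Z.1})
    (Filter.Eventually.of_forall fun t Z => hdiam t Z.1)
    (Filter.Eventually.of_forall fun t Y hY => Set.mem_iUnion.2 ⟨⟨_, hcov t Y hY⟩, rfl⟩)
  have hbound : ∀ t, ∑ Z : A t, Metric.ediam {Y : Fin k → Fin m → Fin n → ℝ |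
      cell L (j0 + r * t) Y = Z.1} ^ α ≤ ENNReal.ofReal (K * (d 0) ^ α) := by
    intro t
    have h1 : ∑ Z : A t, Metric.ediam {Y : Fin k → Fin m → Fin n → ℝ |
        cell L (j0 + r * t) Y = Z.1} ^ α ≤ ∑ Z : A t, ENNReal.ofReal (d t ^ α) := by
      refine Finset.sum_le_sum fun Z _ => ?_
      rw [← ENNReal.ofReal_rpow_of_nonneg (hd0 t).le hα]
      exact ENNReal.rpow_le_rpow (hdiam t Z.1) hα
    refine h1.trans ?_
    rw [Finset.sum_const, Finset.card_univ, Fintype.card_coe, nsmul_eq_mul,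
      ← ENNReal.ofReal_natCast, ← ENNReal.ofReal_mul (Nat.cast_nonneg _)]
    refine ENNReal.ofReal_le_ofReal ?_
    refine (mul_le_mul_of_nonneg_right (hA t) (Real.rpow_nonneg (hd0 t).le α)).trans (le_of_eq ?_)
    have h2 : d t = d 0 * (((L : ℝ) ^ r) ^ t)⁻¹ := by
      simp only [hd]; push_cast
      rw [mul_zero, add_zero, pow_add, mul_inv, ← pow_mul]
    have h3 : (0 : ℝ) < (((L : ℝ) ^ r) ^ α) ^ t := by positivity
    have h4 : ((((L : ℝ) ^ r) ^ t)⁻¹) ^ α = ((((L : ℝ) ^ r) ^ α) ^ t)⁻¹ := by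
      rw [Real.inv_rpow (by positivity), Real.rpow_pow_comm (by positivity)]
    rw [h2, Real.mul_rpow (hd0 0).le (by positivity), h4]
    field_simp
  have hle : MeasureTheory.Measure.hausdorffMeasure α S ≤ ENNReal.ofReal (K * (d 0) ^ α) := by
    refine hμ.trans ?_
    refine (Filter.liminf_le_liminf (Filter.Eventually.of_forall hbound)).trans ?_
    rw [Filter.liminf_const]
  have hfin := ne_top_of_le_ne_top ENNReal.ofReal_ne_top hle
  have := dimH_le_of_hausdorffMeasure_ne_top (d := α.toNNReal) (s := S) (by
    rwa [Real.coe_toNNReal α hα])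
  exact this

/-- The linear recursion satisfied by the normalized number `g` of surviving cubes and the
normalized excess `φ` of lattice points forces `g` to decay geometrically: the combination
`φ + (4 b / θ) g` contracts. -/
lemma geometric_decay {φ g : ℕ → ℝ} {b θ : ℝ} {r j0 : ℕ} (hb : 0 < b) (hθ0 : 0 < θ) (hθ1 : θ ≤ 1)
    (hr : 0 < r) (hφ0 : ∀ j, 0 ≤ φ j) (hg0 : ∀ j, 0 ≤ g j)
    (hφ : ∀ j, φ (j + 1) ≤ 1 / 2 * φ j + b * g j) (hg : ∀ j, g (j + 1) ≤ g j)
    (hgr : ∀ j, j0 ≤ j → g (j + r) ≤ (1 - θ) * g j + θ * (φ j / (16 * b))) :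
    ∃ K : ℝ, ∀ t, g (j0 + r * t) ≤ K * (1 - θ / 4) ^ t := by
  have hanti : Antitone g := antitone_nat_of_succ_le hg
  have h1 : ∀ j t, φ (j + t + 1) ≤ 1 / 2 * φ j + 2 * b * g j := by
    intro j t
    induction t with
    | zero =>
      have := hφ j
      have := mul_nonneg hb.le (hg0 j)
      simp only [add_zero]; linarith
    | succ t ih =>
      have h2 := hφ (j + t + 1)
      have h3 := mul_le_mul_of_nonneg_left (hanti (show j ≤ j + t + 1 by omega)) hb.le
      have h4 := hφ0 j
      rw [← add_assoc]; linarith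
  set C := 4 * b / θ with hC
  have hC0 : 0 < C := by positivity
  have hu : ∀ t, φ (j0 + r * t) + C * g (j0 + r * t) ≤
      (φ j0 + C * g j0) * (1 - θ / 4) ^ t := by
    intro t
    induction t with
    | zero => simp
    | succ t ih =>
      have e1 : j0 + r * (t + 1) = j0 + r * t + r := by ring
      have h2 := hgr (j0 + r * t) (by omega)
      have h3 := h1 (j0 + r * t) (r - 1)
      rw [show j0 + r * t + (r - 1) + 1 = j0 + r * t + r by omega] at h3
      rw [e1, pow_succ, ← mul_assoc]
      refine le_trans ?_ (mul_le_mul_of_nonneg_right ih (by linarith))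
      set p := φ (j0 + r * t)
      set q := g (j0 + r * t)
      have hp : 0 ≤ p := hφ0 _
      have hq : 0 ≤ q := hg0 _
      have h4 := mul_le_mul_of_nonneg_left h2 hC0.le
      have h5 : C * ((1 - θ) * q + θ * (p / (16 * b))) = C * q - 4 * b * q + p / 4 := by
        rw [hC]; field_simp; ring
      have h6 : (p + C * q) * (1 - θ / 4) = p - p * θ / 4 + C * q - b * q := by
        rw [hC]; field_simp; ring
      rw [h5] at h4
      rw [h6]
      have h7 : p * θ ≤ p * 1 := mul_le_mul_of_nonneg_left hθ1 hp
      have h8 := mul_nonneg hb.le hq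
      linarith
  refine ⟨(φ j0 + C * g j0) / C, fun t => ?_⟩
  have h2 := hu t
  have h3 := hφ0 (j0 + r * t)
  rw [div_mul_eq_mul_div, le_div_iff₀ hC0, mul_comm]
  linarith

/-! ### Counting surviving cubes -/

/-- A sum over a family of children of cubes of `A` is at most the sum over all their children. -/
lemma sum_le_sum_child {k m n R : ℕ} {A A' : Finset (Fin k → Fin m → Fin n → ℤ)}
    (hA : ∀ Z ∈ A', ∃ Z₀ ∈ A, ∃ e, Z = child R Z₀ e)
    (f : (Fin k → Fin m → Fin n → ℤ) → ℝ) (hf : ∀ Z, 0 ≤ f Z) :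
    ∑ Z ∈ A', f Z ≤ ∑ Z ∈ A, ∑ e, f (child R Z e) := by
  classical
  rcases isEmpty_or_nonempty (Fin k → Fin m → Fin n → Fin R) with hE | hE
  · have : A' = ∅ := Finset.eq_empty_of_forall_notMem fun Z hZ => by
      obtain ⟨_, _, e, _⟩ := hA Z hZ
      exact hE.false e
    simp [this]
  choose! z hz e he using hA
  have hinj : Set.InjOn (fun Z => (z Z, e Z)) A' := by
    intro Z hZ Z' hZ' h
    simp only [Prod.mk.injEq] at h
    rw [he Z hZ, he Z' hZ', h.1, h.2]
  rw [← Finset.sum_product']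
  have h1 : ∑ Z ∈ A', f Z = ∑ x ∈ A'.image (fun Z => (z Z, e Z)), f (child R x.1 x.2) := by
    rw [Finset.sum_image hinj]
    exact Finset.sum_congr rfl fun Z hZ => by rw [← he Z hZ]
  rw [h1]
  refine Finset.sum_le_sum_of_subset_of_nonneg (fun x hx => ?_) fun x _ _ => hf _
  obtain ⟨Z, hZ, rfl⟩ := Finset.mem_image.1 hx
  exact Finset.mem_product.2 ⟨hz Z hZ, Finset.mem_univ _⟩

lemma card_digits (k m n R : ℕ) :
    Fintype.card (Fin k → Fin m → Fin n → Fin R) = R ^ (k * m * n) := by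
  simp only [Fintype.card_pi, Fintype.card_fin, Finset.prod_const, Finset.card_univ]
  rw [← pow_mul, ← pow_mul]
  congr 1; ring

lemma sum_digits {k m n R : ℕ} (f : (Fin m → Fin n → Fin R) → ℝ) (i : Fin k) :
    ∑ e : Fin k → Fin m → Fin n → Fin R, f (e i) = ((R : ℝ) ^ (m * n)) ^ (k - 1) * ∑ e, f e := by
  have h := Fintype.sum_piFinset_apply f Finset.univ i
  rw [Fintype.piFinset_univ, Finset.card_univ, nsmul_eq_mul, Fintype.card_fin] at h
  rw [h]
  congr 1
  simp only [Fintype.card_pi, Fintype.card_fin, Finset.prod_const, Finset.card_univ]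
  push_cast
  rw [← pow_mul, ← pow_mul, ← pow_mul]
  congr 1; ring

/-- The number of nonzero lattice points attached to one matrix of a tuple at level `j`. -/
noncomputable def excess {m n : ℕ} (M L j : ℕ) (Z : Fin m → Fin n → ℤ) : ℝ :=
  ((boxPts (lat ((L : ℤ) ^ j) Z) ((M : ℝ) ^ (m * j))).card : ℝ) - 1

lemma excess_nonneg {m n : ℕ} (M L j : ℕ) (Z : Fin m → Fin n → ℤ) : 0 ≤ excess M L j Z := by
  have h := one_le_card_boxPts (lat ((L : ℤ) ^ j) Z) (ρ := (M : ℝ) ^ (m * j)) (by positivity)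
  have h' : (1 : ℝ) ≤ ((boxPts (lat ((L : ℤ) ^ j) Z) ((M : ℝ) ^ (m * j))).card : ℝ) := by
    exact_mod_cast h
  exact sub_nonneg.2 h'

/-- Contraction of the excess, summed over the surviving cubes of two consecutive levels. -/
lemma sum_excess_le {k m n M L : ℕ} (hk : 0 < k) {b : ℝ} {j : ℕ}
    (hcon : ∀ Z : Fin m → Fin n → ℤ, ∑ e : Fin m → Fin n → Fin L,
      excess M L (j + 1) (fun a b => (L : ℤ) * Z a b + (e a b : ℕ)) ≤
        (L : ℝ) ^ (m * n) * (1 / 2 * excess M L j Z + b))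
    {A A' : Finset (Fin k → Fin m → Fin n → ℤ)}
    (hA : ∀ Z ∈ A', ∃ Z₀ ∈ A, ∃ e, Z = child L Z₀ e) :
    ∑ Z ∈ A', ∑ i, excess M L (j + 1) (Z i) ≤
      (L : ℝ) ^ (k * m * n) * (1 / 2 * ∑ Z ∈ A, ∑ i, excess M L j (Z i) + k * b * A.card) := by
  refine (sum_le_sum_child hA (fun Z => ∑ i, excess M L (j + 1) (Z i))
    fun Z => Finset.sum_nonneg fun i _ => excess_nonneg _ _ _ _).trans ?_
  have hLk : (L : ℝ) ^ (k * m * n) = ((L : ℝ) ^ (m * n)) ^ (k - 1) * (L : ℝ) ^ (m * n) := by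
    rw [← pow_succ, ← pow_mul, Nat.sub_add_cancel hk]
    congr 1; ring
  have h1 : ∀ Z : Fin k → Fin m → Fin n → ℤ,
      ∑ e, ∑ i, excess M L (j + 1) (child L Z e i) ≤
        (L : ℝ) ^ (k * m * n) * (1 / 2 * ∑ i, excess M L j (Z i) + k * b) := by
    intro Z
    rw [Finset.sum_comm]
    have h2 : ∀ i : Fin k, ∑ e, excess M L (j + 1) (child L Z e i) ≤
        (L : ℝ) ^ (k * m * n) * (1 / 2 * excess M L j (Z i) + b) := by
      intro i
      have h3 := sum_digits (k := k) (fun e : Fin m → Fin n → Fin L =>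
        excess M L (j + 1) (fun a b => (L : ℤ) * Z i a b + (e a b : ℕ))) i
      refine (le_of_eq h3).trans ?_
      rw [hLk, mul_assoc]
      exact mul_le_mul_of_nonneg_left (hcon (Z i)) (by positivity)
    refine (Finset.sum_le_sum fun i _ => h2 i).trans (le_of_eq ?_)
    rw [← Finset.mul_sum, Finset.sum_add_distrib, ← Finset.mul_sum]
    simp
  refine (Finset.sum_le_sum fun Z _ => h1 Z).trans (le_of_eq ?_)
  rw [← Finset.mul_sum, Finset.sum_add_distrib, ← Finset.mul_sum]
  simp [mul_comm]

/-- If every cube of `A` of total weight at most `H` loses a child, then the number of children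
drops by the number of such cubes, which Markov's inequality bounds from below. -/
lemma card_children_le {k m n R : ℕ} {A A' : Finset (Fin k → Fin m → Fin n → ℤ)}
    (hA : ∀ Z ∈ A', ∃ Z₀ ∈ A, ∃ e, Z = child R Z₀ e)
    (w : (Fin k → Fin m → Fin n → ℤ) → ℝ) (hw : ∀ Z, 0 ≤ w Z) {H : ℝ} (hH : 0 < H)
    (hbad : ∀ Z ∈ A, w Z ≤ H → ∃ e, child R Z e ∉ A') :
    (A'.card : ℝ) ≤ ((R : ℝ) ^ (k * m * n) - 1) * A.card + (∑ Z ∈ A, w Z) / H := by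
  classical
  have h0 : (A'.card : ℝ) = ∑ Z ∈ A', (if Z ∈ A' then (1 : ℝ) else 0) := by
    rw [Finset.sum_congr rfl fun Z hZ => if_pos hZ]; simp
  rw [h0]
  refine (sum_le_sum_child hA _ fun Z => by split_ifs <;> norm_num).trans ?_
  have h1 : ∀ Z ∈ A, ∑ e, (if child R Z e ∈ A' then (1 : ℝ) else 0) ≤
      ((R : ℝ) ^ (k * m * n) - 1) + w Z / H := by
    intro Z hZ
    have hcard : ((Finset.univ : Finset (Fin k → Fin m → Fin n → Fin R)).card : ℝ) =
        (R : ℝ) ^ (k * m * n) := by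
      rw [Finset.card_univ, card_digits]; push_cast; rfl
    by_cases hwZ : w Z ≤ H
    · obtain ⟨e₀, he₀⟩ := hbad Z hZ hwZ
      have h2 : ∑ e, (if child R Z e ∈ A' then (1 : ℝ) else 0) ≤
          ∑ e, ((1 : ℝ) - if e = e₀ then 1 else 0) := by
        refine Finset.sum_le_sum fun e _ => ?_
        by_cases he : e = e₀
        · rw [he, if_neg he₀]; simp
        · rw [if_neg he]; split_ifs <;> norm_num
      rw [Finset.sum_sub_distrib, Finset.sum_const, nsmul_eq_mul] at h2
      have h3 := div_nonneg (hw Z) hH.le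
      simp only [mul_one, hcard, Finset.sum_ite_eq', Finset.mem_univ, if_true] at h2
      linarith
    · have h2 : ∑ e, (if child R Z e ∈ A' then (1 : ℝ) else 0) ≤
          ∑ _e : Fin k → Fin m → Fin n → Fin R, (1 : ℝ) :=
        Finset.sum_le_sum fun e _ => by split_ifs <;> norm_num
      have h3 : 1 ≤ w Z / H := (one_le_div hH).2 (not_le.1 hwZ).le
      rw [Finset.sum_const, nsmul_eq_mul, hcard] at h2
      linarith
  refine (Finset.sum_le_sum h1).trans (le_of_eq ?_)
  rw [Finset.sum_add_distrib, Finset.sum_const, nsmul_eq_mul, Finset.sum_div]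
  ring

/-! ### The dimension bound -/

/-- The exponent `α < D` whose `R`-adic growth rate dominates `(1 - ε) R ^ D`. -/
lemma exists_exponent {R : ℝ} (hR : 1 < R) {D : ℕ} (hD : 0 < D) {ε : ℝ} (hε0 : 0 < ε)
    (hε1 : ε < 1) : ∃ α : ℝ, 0 ≤ α ∧ α < D ∧ (1 - ε) * R ^ D ≤ R ^ α := by
  have hR0 : 0 < R := by linarith
  have hpos : 0 < (1 - ε) * R ^ D := mul_pos (by linarith) (by positivity)
  refine ⟨max 0 (Real.logb R ((1 - ε) * R ^ D)), le_max_left _ _, max_lt (by exact_mod_cast hD) ?_,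
    ?_⟩
  · rw [Real.logb_lt_iff_lt_rpow hR hpos, Real.rpow_natCast]
    exact mul_lt_of_lt_one_left (by positivity) (by linarith)
  · conv_lhs => rw [← Real.rpow_logb hR0 hR.ne' hpos]
    exact Real.rpow_le_rpow_of_exponent_le hR.le (le_max_right _ _)

/-- The tuples in a given unit cube that satisfy the Dirichlet inequality at all scales beyond a
given one have dimension bounded by an exponent that is uniform in the cube and the scale. -/
lemma exists_uniform_bound {m n k : ℕ} (hm : 0 < m) (hn : 0 < n) (hk : 0 < k)
    {c : ℝ} (hc0 : 0 < c) (hc1 : c < 1) :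
    ∃ (L : ℕ) (α : ℝ), α < (k * m * n : ℕ) ∧ ∀ (N₀ : ℝ) (Z₀ : Fin k → Fin m → Fin n → ℤ)
      (S : Set (Fin k → Fin m → Fin n → ℝ)), (∀ Y ∈ S, cell L 0 Y = Z₀) →
      (∀ Y ∈ S, ∀ N : ℝ, N₀ ≤ N → ∃ (p : Fin m → ℤ) (q : Fin n → ℤ) (i : Fin k),
        (∀ a, |∑ b, Y i a b * (q b : ℝ) - p a| < c * N ^ (-(n : ℝ) / (m : ℝ))) ∧ q ≠ 0 ∧
          ∀ b, |(q b : ℝ)| < N) →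
      dimH S ≤ ENNReal.ofReal α := by
  obtain ⟨μ, hμ, b₀, hb₀, hcon⟩ := contraction hm hn
  obtain ⟨M, hMμ⟩ : ∃ M : ℕ, M = 2 ^ μ := ⟨_, rfl⟩
  have hM : 2 ≤ M := by rw [hMμ]; exact Nat.le_self_pow (by omega) 2
  obtain ⟨L, hLM⟩ : ∃ L : ℕ, L = M ^ (m + n) := ⟨_, rfl⟩
  have hL : 2 ≤ L := by rw [hLM]; exact hM.trans (Nat.le_self_pow (by omega) M)
  have hL0 : 0 < L := by omega
  replace hcon := hcon M L hMμ hLM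
  -- Each of the `k` components contributes `b₀`; adding `1` makes `b` positive.
  set b : ℝ := k * b₀ + 1 with hb
  have hb0 : 0 < b := by positivity
  obtain ⟨r, s, ρ, hr, hρ, hgood⟩ := exists_good_child hm hn hc0 hc1 hM (16 * b + 1)
  rw [← hLM] at hgood
  set D := k * m * n with hD
  have hD0 : 0 < D := by positivity
  have hLr : (1 : ℝ) < L := by exact_mod_cast (by omega : 1 < L)
  have hLpos : (0 : ℝ) < L := by linarith
  have hR1 : 1 < (L : ℝ) ^ r := one_lt_pow₀ hLr hr.ne'
  set θ : ℝ := (((L : ℝ) ^ r) ^ D)⁻¹ with hθ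
  have hθ0 : 0 < θ := by positivity
  have hθ1 : θ ≤ 1 := inv_le_one_of_one_le₀ (one_le_pow₀ hR1.le)
  obtain ⟨α, hα0, hαD, hα⟩ := exists_exponent hR1 hD0 (ε := θ / 4) (by linarith) (by linarith)
  refine ⟨L, α, hαD, fun N₀ Z₀ S hS0 hS => ?_⟩
  -- The cubes of each level that meet `S` are finite in number.
  have hfin : ∀ j, (cell L j '' S).Finite := by
    intro j
    induction j with
    | zero =>
      refine (Set.finite_singleton Z₀).subset ?_
      rintro _ ⟨Y, hY, rfl⟩
      exact hS0 Y hY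
    | succ j ih =>
      refine (Set.Finite.image2 (child (L ^ 1)) ih (Set.finite_univ)).subset ?_
      rintro _ ⟨Y, hY, rfl⟩
      obtain ⟨e, he⟩ := cell_add hL0 j 1 Y
      exact ⟨_, ⟨Y, hY, rfl⟩, e, Set.mem_univ _, he.symm⟩
  set A : ℕ → Finset (Fin k → Fin m → Fin n → ℤ) := fun j => (hfin j).toFinset with hA
  have hmem : ∀ j Z, Z ∈ A j ↔ ∃ Y ∈ S, cell L j Y = Z := fun j Z => by simp [hA]
  have hchild : ∀ j t, ∀ Z ∈ A (j + t), ∃ Z' ∈ A j, ∃ e, Z = child (L ^ t) Z' e := by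
    intro j t Z hZ
    obtain ⟨Y, hY, rfl⟩ := (hmem _ _).1 hZ
    obtain ⟨e, he⟩ := cell_add hL0 j t Y
    exact ⟨_, (hmem _ _).2 ⟨Y, hY, rfl⟩, e, he⟩
  set Q : ℝ := (L : ℝ) ^ D with hQ
  have hQ0 : 0 < Q := by positivity
  set φ : ℕ → ℝ := fun j => (∑ Z ∈ A j, ∑ i, excess M L j (Z i)) / Q ^ j with hφ
  set g : ℕ → ℝ := fun j => ((A j).card : ℝ) / Q ^ j with hg
  have hw : ∀ j (Z : Fin k → Fin m → Fin n → ℤ), 0 ≤ ∑ i, excess M L j (Z i) :=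
    fun j Z => Finset.sum_nonneg fun i _ => excess_nonneg _ _ _ _
  -- From level `j0` on, the Dirichlet inequality is assumed to hold.
  obtain ⟨j0, hj0⟩ : ∃ j0 : ℕ, ∀ j, j0 ≤ j → N₀ ≤ ρ * (M : ℝ) ^ (m * (j + s)) := by
    have hM1 : (1 : ℝ) < M := by exact_mod_cast (by omega : 1 < M)
    obtain ⟨j0, hj0⟩ := pow_unbounded_of_one_lt (N₀ / ρ) hM1
    refine ⟨j0, fun j hj => ?_⟩
    have h1 : (M : ℝ) ^ j0 ≤ (M : ℝ) ^ (m * (j + s)) :=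
      pow_le_pow_right₀ hM1.le (by nlinarith)
    have h2 := (div_lt_iff₀ hρ).1 hj0
    nlinarith
  have hlost : ∀ j, j0 ≤ j → ∀ Z ∈ A j, ∑ i, excess M L j (Z i) ≤ 16 * b →
      ∃ e, child (L ^ r) Z e ∉ A (j + r) := by
    intro j hj Z _ hZ
    have h1 : ∀ i, ∃ e : Fin m → Fin n → Fin (L ^ r), ∀ Y : Fin m → Fin n → ℝ,
        (∀ a b, ⌊((L ^ (j + r) : ℕ) : ℝ) * Y a b⌋ = ((L ^ r : ℕ) : ℤ) * Z i a b + (e a b : ℕ)) →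
        ∀ (p : Fin m → ℤ) (q : Fin n → ℤ), q ≠ 0 →
          (∀ b, |(q b : ℝ)| < ρ * (M : ℝ) ^ (m * (j + s))) →
          (∀ a, |∑ b, Y a b * q b - p a| <
            c * (ρ * (M : ℝ) ^ (m * (j + s))) ^ (-(n : ℝ) / (m : ℝ))) → False := by
      intro i
      refine hgood j (Z i) ?_
      have h2 : excess M L j (Z i) ≤ 16 * b :=
        (Finset.single_le_sum (fun i _ => excess_nonneg M L j (Z i)) (Finset.mem_univ i)).trans hZ
      unfold excess at h2
      push_cast
      linarith
    choose e he using h1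
    refine ⟨e, fun hmemZ => ?_⟩
    obtain ⟨Y, hY, hYZ⟩ := (hmem _ _).1 hmemZ
    obtain ⟨p, q, i, h2, h3, h4⟩ := hS Y hY _ (hj0 j hj)
    exact he i (Y i) (fun a b => congrFun (congrFun (congrFun hYZ i) a) b) p q h3 h4 h2
  have hφstep : ∀ j, φ (j + 1) ≤ 1 / 2 * φ j + b * g j := by
    intro j
    have h1 := sum_excess_le (M := M) (L := L) hk (b := b₀) (j := j) (fun Z => hcon j Z)
      (A := A j) (A' := A (j + 1)) (by have h := hchild j 1; rwa [pow_one] at h)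
    simp only [hφ, hg]
    rw [div_le_iff₀ (by positivity)]
    refine h1.trans ?_
    have h2 : (1 / 2 * ((∑ Z ∈ A j, ∑ i, excess M L j (Z i)) / Q ^ j) +
        b * (((A j).card : ℝ) / Q ^ j)) * Q ^ (j + 1) =
        Q * (1 / 2 * (∑ Z ∈ A j, ∑ i, excess M L j (Z i)) + b * (A j).card) := by
      rw [pow_succ]; field_simp
    rw [h2]
    refine mul_le_mul_of_nonneg_left ?_ hQ0.le
    have h3 : (k : ℝ) * b₀ * (A j).card ≤ b * (A j).card :=
      mul_le_mul_of_nonneg_right (by rw [hb]; linarith) (Nat.cast_nonneg _)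
    linarith
  have hgstep : ∀ j, g (j + 1) ≤ g j := by
    intro j
    have h1 := sum_le_sum_child (A := A j) (A' := A (j + 1)) (hchild j 1) (fun _ => 1)
      (fun _ => zero_le_one)
    simp only [Finset.sum_const, nsmul_eq_mul, mul_one, Finset.card_univ, card_digits,
      pow_one] at h1
    simp only [hg]
    rw [div_le_div_iff₀ (by positivity) (by positivity), pow_succ]
    have h2 : ((L ^ (k * m * n) : ℕ) : ℝ) = Q := by rw [hQ]; push_cast; rfl
    rw [h2] at h1
    have h3 : 0 < Q ^ j := by positivity
    nlinarith
  have hgr : ∀ j, j0 ≤ j → g (j + r) ≤ (1 - θ) * g j + θ * (φ j / (16 * b)) := by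
    intro j hj
    have h1 := card_children_le (R := L ^ r) (hchild j r) _ (hw j) (H := 16 * b) (by positivity)
      (hlost j hj)
    have h2 : (((L ^ r : ℕ) : ℝ)) ^ (k * m * n) = θ⁻¹ := by rw [hθ, inv_inv]; push_cast; rfl
    have h3 : Q ^ (j + r) = Q ^ j * θ⁻¹ := by
      rw [pow_add, hθ, inv_inv, hQ, ← pow_mul _ D r, ← pow_mul _ r D, mul_comm r D]
    rw [h2] at h1
    simp only [hg, hφ]
    rw [div_le_iff₀ (by positivity), h3]
    refine h1.trans (le_of_eq ?_)
    field_simp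
  obtain ⟨K, hK⟩ := geometric_decay hb0 hθ0 hθ1 hr
    (fun j => div_nonneg (Finset.sum_nonneg fun Z _ => hw j Z) (by positivity))
    (fun j => by positivity) hφstep hgstep hgr
  have hK0 : 0 ≤ K := by
    have h1 := hK 0
    have h2 : 0 ≤ g (j0 + r * 0) := by positivity
    simp only [pow_zero, mul_one] at h1
    exact h2.trans h1
  refine dimH_le_of_cells hL hr j0 hα0 (fun t => A (j0 + r * t))
    (fun t Y hY => (hmem _ _).2 ⟨Y, hY, rfl⟩) (K := K * Q ^ j0) fun t => ?_
  have h1 := hK t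
  simp only [hg] at h1
  rw [div_le_iff₀ (by positivity)] at h1
  have h2 : K * (1 - θ / 4) ^ t * Q ^ (j0 + r * t) =
      K * Q ^ j0 * ((1 - θ / 4) * ((L : ℝ) ^ r) ^ D) ^ t := by
    rw [mul_pow, hQ, pow_add, ← pow_mul _ D (r * t), ← pow_mul _ r D, ← pow_mul _ (r * D) t,
      show D * (r * t) = r * D * t by ring]
    ring
  rw [h2] at h1
  exact h1.trans (mul_le_mul_of_nonneg_left
    (pow_le_pow_left₀ (mul_nonneg (by linarith) (by positivity)) hα t) (by positivity))

/-- The Hausdorff dimension of the set of `c`-Dirichlet improvable `k`-tuples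
of `m × n` matrices is strictly smaller than `k * m * n`, for every `0 < c < 1`. -/
theorem dimH_DIset_lt (m n k : ℕ) (hm : 0 < m) (hn : 0 < n) (hk : 0 < k)
    (c : ℝ) (hc0 : 0 < c) (hc1 : c < 1) :
    dimH (DIset m n k c) < ((k * m * n : ℕ) : ℝ≥0∞) := by
  obtain ⟨L, α, hα, hdim⟩ := exists_uniform_bound hm hn hk hc0 hc1
  let S : ℕ → (Fin k → Fin m → Fin n → ℤ) → Set (Fin k → Fin m → Fin n → ℝ) := fun N₀ Z₀ =>
    {Y | cell L 0 Y = Z₀ ∧ ∀ N : ℝ, (N₀ : ℝ) ≤ N → ∃ (p : Fin m → ℤ) (q : Fin n → ℤ) (i : Fin k),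
      (∀ a, |∑ b, Y i a b * (q b : ℝ) - p a| < c * N ^ (-(n : ℝ) / (m : ℝ))) ∧ q ≠ 0 ∧
        ∀ b, |(q b : ℝ)| < N}
  have hsub : DIset m n k c ⊆ ⋃ (N₀ : ℕ) (Z₀ : Fin k → Fin m → Fin n → ℤ), S N₀ Z₀ := by
    rintro Y ⟨N₀, _, hY⟩
    obtain ⟨N₁, hN₁⟩ := exists_nat_ge N₀
    refine Set.mem_iUnion.2 ⟨N₁, Set.mem_iUnion.2 ⟨cell L 0 Y, rfl, fun N hN => ?_⟩⟩
    obtain ⟨p, q, i, h1, h2, h3⟩ := hY N (hN₁.trans hN)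
    refine ⟨p, q, i, fun a => ?_, ?_, fun b => ?_⟩
    · exact (norm_le_pi_norm (fun a : Fin m => (∑ b, Y i a b * (q b : ℝ)) - (p a : ℝ)) a).trans_lt h1
    · rintro rfl
      have h0 : (fun b : Fin n => (((0 : Fin n → ℤ) b : ℤ) : ℝ)) = 0 := by
        funext b; simp
      rw [h0, norm_zero] at h2
      exact lt_irrefl _ h2
    · exact (norm_le_pi_norm (fun b : Fin n => (q b : ℝ)) b).trans_lt h3
  have hle : dimH (DIset m n k c) ≤ ENNReal.ofReal α := by
    refine (dimH_mono hsub).trans ?_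
    simp only [dimH_iUnion]
    exact iSup_le fun N₀ => iSup_le fun Z₀ =>
      hdim N₀ Z₀ (S N₀ Z₀) (fun Y hY => hY.1) fun Y hY => hY.2
  refine hle.trans_lt ?_
  rw [← ENNReal.ofReal_natCast]
  exact (ENNReal.ofReal_lt_ofReal_iff (by positivity)).2 hα
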